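/- Let a ∈ X, let f, g : 𝔹 → ℂ be holomorphic, F(x) = a + f(x)·x and G(x) = a + g(x)·x for x ∈ 𝔹. Assume F is biholomorphic on 𝔹 and G is subordinate to F. Let N ∈ ℕ (N ≥ 1) and P_s(x) = (1/s!)·DˢG(0)(x,…,x) for s ≥ 1. If r ∈ (0,1) satisfies 4r + 4r^N·(N(1−r)+r) ≤ (1−r)², then for every x with ‖x‖ = r, ‖G(x)‖ + Σ_{s≥N} ‖P_s(x)‖ ≤ ‖F(0)‖ + dist(F(0), ∂F(𝔹)), where dist(F(0), ∂F(𝔹)) is the distance from F(0) to the boundary of the image F(𝔹). -/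

import Mathlib

open Metric Set

noncomputable section

/-- A holomorphic map is biholomorphic on an open set `s` if it is holomorphic and injective
on `s` and admits a holomorphic inverse on the image `f '' s`. -/
def IsBiholoOn {E₁ E₂ : Type*} [NormedAddCommGroup E₁] [NormedSpace ℂ E₁]
    [NormedAddCommGroup E₂] [NormedSpace ℂ E₂] (f : E₁ → E₂) (s : Set E₁) : Prop :=
  DifferentiableOn ℂ f s ∧ Set.InjOn f s ∧
    ∃ g : E₂ → E₁, DifferentiableOn ℂ g (f '' s) ∧ ∀ x ∈ s, g (f x) = x

/-- `G` is subordinate to `F` on the unit ball if `G = F ∘ W` for some Schwarz mapping `W`,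
i.e. a holomorphic self-map of the ball fixing the origin. -/
def Subordinate {X : Type*} [NormedAddCommGroup X] [NormedSpace ℂ X]
    (G F : X → X) : Prop :=
  ∃ W : X → X, DifferentiableOn ℂ W (ball (0 : X) 1) ∧
    Set.MapsTo W (ball (0 : X) 1) (ball (0 : X) 1) ∧ W 0 = 0 ∧
    ∀ x ∈ ball (0 : X) 1, G x = F (W x)

/-!
In a fixed direction `u = x / ‖x‖` the maps `F` and `G` reduce to the slices `φ z = z f(zu)` and
`ψ z = z g(zu)`, where `φ` is univalent on the unit disc and `ψ = φ ∘ ω` for a Schwarz function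
`ω`. Rogosinski's bound `|ψₙ| ≤ n |f(0)|` for the coefficients of `ψ` makes the left-hand side at
most `‖F(0)‖` plus `|f(0)|` times a series in `r`, which the condition on `r` bounds by `1 / 4`.
Koebe's quarter theorem, a consequence of the bound on the second coefficients of `φ` and
`φ / (1 - φ / w)` for an omitted value `w`, puts the ball of radius `|f(0)| / 4` about `F(0)`
inside `F(𝔹)`, and by Liouville's theorem `F(𝔹)` is not the whole space, so that its frontier is
nonempty.

For Rogosinski's bound take the holomorphic square root `h` of `φ z / z`, so that
`φ z = z (h z)²`. As composition with a Schwarz function contracts the partial `ℓ²` sums of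
coefficients, it suffices to prove Robertson's inequality `∑_{i ≤ n} |hᵢ|² ≤ (n + 1) |φ'(0)|`,
which by the Lebedev–Milin inequality follows from the nonpositivity of de Branges' functional.
Loewner's differential equation is replaced by a discrete version: Koebe's osculation procedure
writes a dilation of `φ`, scaled to a self-map of the disc, as a long composition of elementary
maps `z (m - κ z) / (1 - m κ z)`, `|κ| = 1`, with a Schwarz function. Along each elementary step
the functional grows by at most `O((1 - m)²)`, and there are so few steps that the total error
vanishes as `m → 1`.

The drift of the functional has the right sign because the Laurent polynomial
`U_n(1 - y + y (q + 1/q) / 2)`, with `U_n` the Chebyshev polynomial of the second kind and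
`0 ≤ y ≤ 1`, has nonnegative coefficients: it is the trace of the `n`-th symmetric power of
`R D Rᵀ D⁻¹` for a rotation `R` and `D = diag(1, q)`, and each power of `q` in this trace carries
a sum of squares with positive weights.
-/

namespace BohrRogosinski

open Filter Topology

section TaylorSeries

lemma analyticAt_fun_id {z : ℂ} : AnalyticAt ℂ (fun w : ℂ => w) z := analyticAt_id

/-- The `k`-th Taylor coefficient at `0`, so that `f z = ∑ₖ taylorCoeff f k * z ^ k`. -/
def taylorCoeff (f : ℂ → ℂ) (k : ℕ) : ℂ := iteratedDeriv k f 0 / (k.factorial : ℂ)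

/-- The Taylor series at `0` as a formal power series, which turns coefficient identities for
products of analytic functions into algebra. -/
def taylorSeries (f : ℂ → ℂ) : PowerSeries ℂ := PowerSeries.mk (taylorCoeff f)

variable {f g : ℂ → ℂ}

lemma coeff_taylorSeries (f : ℂ → ℂ) (k : ℕ) :
    PowerSeries.coeff k (taylorSeries f) = taylorCoeff f k := by
  simp [taylorSeries]

lemma taylorCoeff_zero (f : ℂ → ℂ) : taylorCoeff f 0 = f 0 := by simp [taylorCoeff]

lemma taylorCoeff_one (f : ℂ → ℂ) : taylorCoeff f 1 = deriv f 0 := by simp [taylorCoeff]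

lemma taylorCoeff_congr (h : f =ᶠ[𝓝 0] g) (k : ℕ) : taylorCoeff f k = taylorCoeff g k := by
  rw [taylorCoeff, h.iteratedDeriv_eq k, taylorCoeff]

lemma taylorSeries_mul (hf : AnalyticAt ℂ f 0) (hg : AnalyticAt ℂ g 0) :
    taylorSeries (fun z => f z * g z) = taylorSeries f * taylorSeries g := by
  ext k
  simp only [coeff_taylorSeries, taylorCoeff, PowerSeries.coeff_mul,
    Finset.Nat.sum_antidiagonal_eq_sum_range_succ_mk, Nat.succ_eq_add_one,
    iteratedDeriv_fun_mul hf.contDiffAt hg.contDiffAt, Finset.sum_div]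
  refine Finset.sum_congr rfl fun i hi ↦ ?_
  rw [Nat.cast_choose _ (by grind)]
  field_simp [Nat.factorial_ne_zero]

lemma taylorSeries_add (hf : AnalyticAt ℂ f 0) (hg : AnalyticAt ℂ g 0) :
    taylorSeries (fun z => f z + g z) = taylorSeries f + taylorSeries g := by
  ext k
  simp only [coeff_taylorSeries, taylorCoeff, map_add, add_div,
    iteratedDeriv_fun_add hf.contDiffAt hg.contDiffAt]

lemma taylorSeries_const (c : ℂ) : taylorSeries (fun _ => c) = PowerSeries.C c := by
  ext k
  simp only [coeff_taylorSeries, taylorCoeff, PowerSeries.coeff_C, iteratedDeriv_const]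
  split_ifs with h <;> simp [h]

lemma taylorSeries_id : taylorSeries (fun z => z) = PowerSeries.X := by
  ext k
  rw [coeff_taylorSeries, PowerSeries.coeff_X, taylorCoeff, iteratedDeriv_fun_id]
  rcases k with _ | _ | k <;> simp

lemma taylorSeries_const_mul (c : ℂ) (hf : AnalyticAt ℂ f 0) :
    taylorSeries (fun z => c * f z) = PowerSeries.C c * taylorSeries f := by
  rw [taylorSeries_mul analyticAt_const hf, taylorSeries_const]

lemma taylorSeries_pow (hf : AnalyticAt ℂ f 0) (n : ℕ) :
    taylorSeries (fun z => f z ^ n) = taylorSeries f ^ n := by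
  induction n with
  | zero => simpa using taylorSeries_const 1
  | succ n ih =>
    simp only [pow_succ]
    rw [taylorSeries_mul (hf.fun_pow n) hf, ih]

lemma taylorSeries_sum {ι : Type*} (s : Finset ι) {f : ι → ℂ → ℂ}
    (hf : ∀ i ∈ s, AnalyticAt ℂ (f i) 0) :
    taylorSeries (fun z => ∑ i ∈ s, f i z) = ∑ i ∈ s, taylorSeries (f i) := by
  classical
  induction s using Finset.induction_on with
  | empty => simpa using taylorSeries_const 0
  | insert a s ha ih =>
    have hs : ∀ i ∈ s, AnalyticAt ℂ (f i) 0 := fun i hi => hf i (Finset.mem_insert_of_mem hi)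
    simp only [Finset.sum_insert ha]
    rw [taylorSeries_add (hf a (Finset.mem_insert_self a s)) (Finset.analyticAt_fun_sum _ hs),
      ih hs]

lemma taylorSeries_pow_mul (n : ℕ) (hf : AnalyticAt ℂ f 0) :
    taylorSeries (fun z => z ^ n * f z) = PowerSeries.X ^ n * taylorSeries f := by
  rw [taylorSeries_mul (analyticAt_fun_id.fun_pow n) hf, taylorSeries_pow analyticAt_fun_id,
    taylorSeries_id]

lemma taylorSeries_id_mul (hf : AnalyticAt ℂ f 0) :
    taylorSeries (fun z => z * f z) = PowerSeries.X * taylorSeries f := by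
  simpa using taylorSeries_pow_mul 1 hf

lemma taylorCoeff_const_mul (c : ℂ) (hf : AnalyticAt ℂ f 0) (k : ℕ) :
    taylorCoeff (fun z => c * f z) k = c * taylorCoeff f k := by
  rw [← coeff_taylorSeries, taylorSeries_const_mul c hf, PowerSeries.coeff_C_mul,
    coeff_taylorSeries]

lemma taylorCoeff_succ_id_mul (hf : AnalyticAt ℂ f 0) (k : ℕ) :
    taylorCoeff (fun z => z * f z) (k + 1) = taylorCoeff f k := by
  rw [← coeff_taylorSeries, taylorSeries_id_mul hf, PowerSeries.coeff_succ_X_mul,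
    coeff_taylorSeries]

lemma taylorCoeff_succ_const_add_id_mul (c : ℂ) (hf : AnalyticAt ℂ f 0) (k : ℕ) :
    taylorCoeff (fun z => c + z * f z) (k + 1) = taylorCoeff f k := by
  rw [← coeff_taylorSeries, taylorSeries_add analyticAt_const (analyticAt_fun_id.fun_mul hf),
    taylorSeries_const, map_add, PowerSeries.coeff_C, if_neg k.succ_ne_zero, zero_add,
    coeff_taylorSeries, taylorCoeff_succ_id_mul hf]

lemma taylorCoeff_mul (hf : AnalyticAt ℂ f 0) (hg : AnalyticAt ℂ g 0) (k : ℕ) :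
    taylorCoeff (fun z => f z * g z) k =
      ∑ j ∈ Finset.range (k + 1), taylorCoeff f j * taylorCoeff g (k - j) := by
  rw [← coeff_taylorSeries, taylorSeries_mul hf hg, PowerSeries.coeff_mul,
    Finset.Nat.sum_antidiagonal_eq_sum_range_succ_mk]
  simp only [coeff_taylorSeries]

lemma taylorCoeff_deriv (f : ℂ → ℂ) (k : ℕ) :
    taylorCoeff (deriv f) k = (k + 1) * taylorCoeff f (k + 1) := by
  have hk : (k + 1 : ℂ) ≠ 0 := by exact_mod_cast k.succ_ne_zero
  rw [taylorCoeff, taylorCoeff, ← iteratedDeriv_succ', Nat.factorial_succ]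
  push_cast
  field_simp [k.factorial_ne_zero]

lemma taylorCoeff_id_mul_deriv (hf : AnalyticAt ℂ f 0) (k : ℕ) :
    taylorCoeff (fun z => z * deriv f z) k = k * taylorCoeff f k := by
  rcases k with _ | k
  · simp [taylorCoeff_zero]
  · rw [taylorCoeff_succ_id_mul hf.deriv, taylorCoeff_deriv]
    push_cast
    rfl

lemma exists_eq_sum_taylorCoeff_add_pow_mul (hf : AnalyticAt ℂ f 0) (n : ℕ) :
    ∃ R : ℂ → ℂ, AnalyticAt ℂ R 0 ∧
      ∀ z, f z = ∑ i ∈ Finset.range n, taylorCoeff f i * z ^ i + z ^ n * R z := by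
  obtain ⟨R, hR, h⟩ := hf.exists_eq_sum_add_pow_mul n
  refine ⟨R, hR, fun z => ?_⟩
  rw [h z]
  simp only [smul_eq_mul, taylorCoeff]
  refine congrArg (· + _) (Finset.sum_congr rfl fun i _ => ?_)
  ring

lemma exists_eq_zero_add_id_mul (hf : AnalyticAt ℂ f 0) :
    ∃ R : ℂ → ℂ, AnalyticAt ℂ R 0 ∧ ∀ z, f z = f 0 + z * R z := by
  simpa [taylorCoeff_zero] using exists_eq_sum_taylorCoeff_add_pow_mul hf 1

lemma taylorCoeff_mul_comp {q p : ℂ → ℂ} (hq : AnalyticAt ℂ q 0) (hg : AnalyticAt ℂ g 0)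
    (hp : AnalyticAt ℂ p 0) (hp0 : p 0 = 0) {k n : ℕ} (hk : k < n) :
    taylorCoeff (fun z => q z * g (p z)) k =
      ∑ i ∈ Finset.range n, taylorCoeff g i * taylorCoeff (fun z => q z * p z ^ i) k := by
  obtain ⟨R, hR, hgR⟩ := exists_eq_sum_taylorCoeff_add_pow_mul hg n
  obtain ⟨p₁, hp₁, hpe⟩ := exists_eq_zero_add_id_mul hp
  simp only [hp0, zero_add] at hpe
  have hRp : AnalyticAt ℂ (fun z => q z * p₁ z ^ n * R (p z)) 0 :=
    (hq.fun_mul (hp₁.fun_pow n)).fun_mul (hR.fun_comp_of_eq hp hp0)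
  have hterm : ∀ i ∈ Finset.range n,
      AnalyticAt ℂ (fun z => taylorCoeff g i * (q z * p z ^ i)) 0 :=
    fun i _ => analyticAt_const.fun_mul (hq.fun_mul (hp.fun_pow i))
  have expand : (fun z => q z * g (p z)) =
      fun z => (∑ i ∈ Finset.range n, taylorCoeff g i * (q z * p z ^ i)) +
        z ^ n * (q z * p₁ z ^ n * R (p z)) := by
    funext z
    have hpn : p z ^ n = z ^ n * p₁ z ^ n := by rw [hpe z, mul_pow]
    rw [hgR (p z), mul_add, Finset.mul_sum, hpn]
    congr 1
    · exact Finset.sum_congr rfl fun i _ => by ring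
    · ring
  rw [expand, ← coeff_taylorSeries,
    taylorSeries_add (Finset.analyticAt_fun_sum _ hterm)
      ((analyticAt_fun_id.fun_pow n).fun_mul hRp),
    taylorSeries_sum _ hterm, taylorSeries_pow_mul n hRp, map_add,
    PowerSeries.coeff_X_pow_mul', if_neg (by omega), add_zero, map_sum]
  refine Finset.sum_congr rfl fun i _ => ?_
  rw [coeff_taylorSeries, taylorCoeff_const_mul _ (hq.fun_mul (hp.fun_pow i))]

lemma hasSum_taylorCoeff (hf : DifferentiableOn ℂ f (ball 0 1)) {z : ℂ} (hz : ‖z‖ < 1) :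
    HasSum (fun k => taylorCoeff f k * z ^ k) (f z) := by
  have summand_eq : (fun k => taylorCoeff f k * z ^ k) =
      fun n : ℕ => ((n.factorial : ℂ))⁻¹ • (z - 0) ^ n • iteratedDeriv n f 0 := by
    funext k
    simp only [taylorCoeff, sub_zero, smul_eq_mul]
    ring
  rw [summand_eq]
  exact Complex.hasSum_taylorSeries_on_ball hf (mem_ball_zero_iff.2 hz)

lemma analyticAt_zero_of_differentiableOn_ball (hf : DifferentiableOn ℂ f (ball 0 1)) :
    AnalyticAt ℂ f 0 :=
  hf.analyticAt (ball_mem_nhds _ one_pos)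

end TaylorSeries

section BoundedMultiplier

open Polynomial in
lemma sum_sq_norm_coeff_mul_le {T : ℂ[X]} {C : ℝ} (hT : ∀ z : ℂ, ‖z‖ = 1 → ‖T.eval z‖ ≤ C)
    (P : ℂ[X]) (n : ℕ) :
    ∑ j ∈ Finset.range n, ‖(T * P).coeff j‖ ^ 2 ≤ C ^ 2 * P.sum fun _ c => ‖c‖ ^ 2 := by
  have sum_le : ∑ j ∈ Finset.range n, ‖(T * P).coeff j‖ ^ 2 ≤
      ∑ j ∈ (T * P).support, ‖(T * P).coeff j‖ ^ 2 := by
    change _ ≤ (T * P).sum fun _ c => ‖c‖ ^ 2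
    rw [sum_over_range' _ (by simp) (max n ((T * P).natDegree + 1)) (by omega)]
    exact Finset.sum_le_sum_of_subset_of_nonneg (Finset.range_mono (le_max_left _ _))
      fun _ _ _ => sq_nonneg _
  refine sum_le.trans ?_
  rw [Polynomial.sum, sum_sq_norm_coeff_eq_circleAverage, sum_sq_norm_coeff_eq_circleAverage,
    ← smul_eq_mul (a := C ^ 2), ← Real.circleAverage_fun_smul]
  refine Real.circleAverage_mono ?_ ?_ fun z hz => ?_
  · exact Continuous.continuousOn (by fun_prop) |>.circleIntegrable'
  · exact Continuous.continuousOn (by fun_prop) |>.circleIntegrable'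
  · rw [eval_mul, norm_mul, mul_pow, smul_eq_mul]
    gcongr
    exact hT z (by simpa using hz)

lemma sum_sq_norm_coeff_mul_le_of_trunc {A : PowerSeries ℂ} {n m : ℕ} (hnm : n ≤ m) {C : ℝ}
    (hA : ∀ z : ℂ, ‖z‖ = 1 → ‖(PowerSeries.trunc m A).eval z‖ ≤ C) (F : PowerSeries ℂ) :
    ∑ j ∈ Finset.range n, ‖PowerSeries.coeff j (A * F)‖ ^ 2 ≤
      C ^ 2 * ∑ j ∈ Finset.range n, ‖PowerSeries.coeff j F‖ ^ 2 := by
  have key := sum_sq_norm_coeff_mul_le hA (PowerSeries.trunc n F) n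
  rcases n with _ | n
  · simp
  rw [Polynomial.sum_over_range' _ (by simp) (n + 1) (PowerSeries.natDegree_trunc_lt F n)] at key
  convert key using 2 with j hj
  · rw [PowerSeries.coeff_mul_eq_coeff_trunc_mul_trunc₂ A F
      ((Finset.mem_range.1 hj).trans_le hnm) (Finset.mem_range.1 hj)]
    norm_cast
  · refine Finset.sum_congr rfl fun j hj => ?_
    rw [PowerSeries.coeff_trunc, if_pos (Finset.mem_range.1 hj)]

variable {χ : ℂ → ℂ} (hχ : DifferentiableOn ℂ χ (ball 0 1)) (hχ1 : ∀ z ∈ ball (0 : ℂ) 1, ‖χ z‖ ≤ 1)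
include hχ hχ1

lemma norm_eval_trunc_rescale_le {ρ : ℝ} (h0 : 0 ≤ ρ) (h1 : ρ < 1) (m : ℕ) {z : ℂ}
    (hz : ‖z‖ = 1) :
    ‖(PowerSeries.trunc m (PowerSeries.rescale (ρ : ℂ) (taylorSeries χ))).eval z‖ ≤
      1 + ∑' k, ‖taylorCoeff χ (k + m) * (ρ : ℂ) ^ (k + m)‖ := by
  have hρz : ‖(ρ : ℂ) * z‖ < 1 := by simpa [hz, abs_of_nonneg h0] using h1
  have hsum := hasSum_taylorCoeff hχ hρz
  have hnorm : Summable fun k => ‖taylorCoeff χ k * (ρ : ℂ) ^ k‖ := by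
    simpa [hz, mul_pow] using hsum.summable.norm
  have split := hsum.summable.sum_add_tsum_nat_add m
  have eval_eq : (PowerSeries.trunc m (PowerSeries.rescale (ρ : ℂ) (taylorSeries χ))).eval z =
      ∑ k ∈ Finset.range m, taylorCoeff χ k * ((ρ : ℂ) * z) ^ k := by
    rw [Polynomial.eval, PowerSeries.eval₂_trunc_eq_sum_range]
    refine Finset.sum_congr rfl fun k _ => ?_
    rw [RingHom.id_apply, PowerSeries.coeff_rescale, coeff_taylorSeries, mul_pow]
    ring
  rw [hsum.tsum_eq] at split
  rw [eval_eq, eq_sub_of_add_eq split]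
  refine (norm_sub_le _ _).trans (add_le_add (hχ1 _ (by simpa using hρz)) ?_)
  refine tsum_of_norm_bounded ((summable_nat_add_iff m).2 hnorm).hasSum fun k => ?_
  simp [hz, mul_pow]

lemma sum_sq_norm_coeff_rescale_mul_le {ρ : ℝ} (h0 : 0 ≤ ρ) (h1 : ρ < 1) (F : PowerSeries ℂ)
    (n : ℕ) :
    ∑ j ∈ Finset.range n,
        ‖PowerSeries.coeff j (PowerSeries.rescale (ρ : ℂ) (taylorSeries χ) * F)‖ ^ 2 ≤
      ∑ j ∈ Finset.range n, ‖PowerSeries.coeff j F‖ ^ 2 := by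
  set tail : ℕ → ℝ := fun m => ∑' k, ‖taylorCoeff χ (k + m) * (ρ : ℂ) ^ (k + m)‖
  have tail_tendsto : Tendsto tail atTop (𝓝 0) :=
    tendsto_sum_nat_add fun k => ‖taylorCoeff χ k * (ρ : ℂ) ^ k‖
  have hlim : Tendsto
      (fun m => (1 + tail m) ^ 2 * ∑ j ∈ Finset.range n, ‖PowerSeries.coeff j F‖ ^ 2)
      atTop (𝓝 ((1 + 0) ^ 2 * ∑ j ∈ Finset.range n, ‖PowerSeries.coeff j F‖ ^ 2)) :=
    ((tail_tendsto.const_add 1).pow 2).mul_const _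
  rw [add_zero, one_pow, one_mul] at hlim
  refine ge_of_tendsto hlim ?_
  filter_upwards [eventually_ge_atTop n] with m hm
  exact sum_sq_norm_coeff_mul_le_of_trunc hm
    (fun _ => norm_eval_trunc_rescale_le hχ hχ1 h0 h1 m) F

lemma sum_sq_norm_coeff_taylorSeries_mul_le (F : PowerSeries ℂ) (n : ℕ) :
    ∑ j ∈ Finset.range n, ‖PowerSeries.coeff j (taylorSeries χ * F)‖ ^ 2 ≤
      ∑ j ∈ Finset.range n, ‖PowerSeries.coeff j F‖ ^ 2 := by
  have hcont : Continuous fun ρ : ℝ => ∑ j ∈ Finset.range n,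
      ‖PowerSeries.coeff j (PowerSeries.rescale (ρ : ℂ) (taylorSeries χ) * F)‖ ^ 2 := by
    simp only [PowerSeries.coeff_mul, PowerSeries.coeff_rescale]
    fun_prop
  have hlim := (hcont.tendsto 1).mono_left (nhdsWithin_le_nhds (s := Iio 1))
  simp only [Complex.ofReal_one, PowerSeries.rescale_one, RingHom.id_apply] at hlim
  refine le_of_tendsto hlim ?_
  filter_upwards [Ioo_mem_nhdsLT (zero_lt_one' ℝ)] with ρ hρ
  exact sum_sq_norm_coeff_rescale_mul_le hχ hχ1 hρ.1.le hρ.2 F n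

lemma sum_sq_norm_taylorCoeff_mul_le {f : ℂ → ℂ} (hf : AnalyticAt ℂ f 0) (n : ℕ) :
    ∑ j ∈ Finset.range n, ‖taylorCoeff (fun z => χ z * f z) j‖ ^ 2 ≤
      ∑ j ∈ Finset.range n, ‖taylorCoeff f j‖ ^ 2 := by
  simpa only [← taylorSeries_mul (analyticAt_zero_of_differentiableOn_ball hχ) hf,
    coeff_taylorSeries] using sum_sq_norm_coeff_taylorSeries_mul_le hχ hχ1 (taylorSeries f) n

end BoundedMultiplier

section Schwarz

/-- A Schwarz function: a holomorphic self-map of the unit disc fixing the origin. It is the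
one-dimensional case of the maps occurring in `Subordinate`. -/
structure IsSchwarz (ω : ℂ → ℂ) : Prop where
  differentiableOn : DifferentiableOn ℂ ω (ball 0 1)
  mapsTo : MapsTo ω (ball 0 1) (ball 0 1)
  map_zero : ω 0 = 0

namespace IsSchwarz

variable {ω : ℂ → ℂ} (hω : IsSchwarz ω)
include hω

lemma analyticAt : AnalyticAt ℂ ω 0 :=
  analyticAt_zero_of_differentiableOn_ball hω.differentiableOn

lemma comp {η : ℂ → ℂ} (hη : IsSchwarz η) : IsSchwarz fun z => ω (η z) where
  differentiableOn := hω.differentiableOn.fun_comp hη.differentiableOn hη.mapsTo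
  mapsTo := fun _ hz => hω.mapsTo (hη.mapsTo hz)
  map_zero := by rw [hη.map_zero, hω.map_zero]

lemma exists_eq_id_mul : ∃ χ : ℂ → ℂ, DifferentiableOn ℂ χ (ball 0 1) ∧
    (∀ z ∈ ball (0 : ℂ) 1, ‖χ z‖ ≤ 1) ∧ ∀ z, ω z = z * χ z := by
  refine ⟨dslope ω 0, (Complex.differentiableOn_dslope (ball_mem_nhds _ one_pos)).2
    hω.differentiableOn, fun z hz => ?_, fun z => ?_⟩
  · have hmaps : MapsTo ω (ball 0 1) (closedBall (ω 0) 1) := by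
      rw [hω.map_zero]
      exact hω.mapsTo.mono_right ball_subset_closedBall
    simpa using Complex.norm_dslope_le_div_of_mapsTo_ball hω.differentiableOn hmaps hz
  · simpa [hω.map_zero] using (sub_smul_dslope ω 0 z).symm

theorem sum_sq_norm_taylorCoeff_comp_le {f : ℂ → ℂ} (hf : AnalyticAt ℂ f 0) (n : ℕ) :
    ∑ j ∈ Finset.range n, ‖taylorCoeff (fun z => f (ω z)) j‖ ^ 2 ≤
      ∑ j ∈ Finset.range n, ‖taylorCoeff f j‖ ^ 2 := by
  obtain ⟨χ, hχ, hχ1, hωχ⟩ := hω.exists_eq_id_mul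
  have hχ0 := analyticAt_zero_of_differentiableOn_ball hχ
  induction n generalizing f with
  | zero => simp
  | succ n ih =>
    obtain ⟨f₁, hf₁, hff₁⟩ := exists_eq_zero_add_id_mul hf
    have hf₁ω : AnalyticAt ℂ (fun z => f₁ (ω z)) 0 := hf₁.fun_comp_of_eq hω.analyticAt hω.map_zero
    have coeff_f (j : ℕ) : taylorCoeff f (j + 1) = taylorCoeff f₁ j := by
      rw [funext hff₁, taylorCoeff_succ_const_add_id_mul _ hf₁]
    have coeff_fω (j : ℕ) : taylorCoeff (fun z => f (ω z)) (j + 1) =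
        taylorCoeff (fun z => χ z * f₁ (ω z)) j := by
      have hfω : (fun z => f (ω z)) = fun z => f 0 + z * (χ z * f₁ (ω z)) := by
        funext z
        rw [hff₁ (ω z), ← mul_assoc, ← hωχ]
      rw [hfω, taylorCoeff_succ_const_add_id_mul _ (hχ0.fun_mul hf₁ω)]
    rw [Finset.sum_range_succ', Finset.sum_range_succ']
    simp only [coeff_f, coeff_fω, taylorCoeff_zero, hω.map_zero]
    refine add_le_add_left ?_ _
    exact (sum_sq_norm_taylorCoeff_mul_le hχ hχ1 hf₁ω n).trans (ih hf₁)

lemma norm_taylorCoeff_mul_sq_comp_le {h : ℂ → ℂ} (hh : AnalyticAt ℂ h 0) (n : ℕ) :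
    ‖taylorCoeff (fun z => ω z * h (ω z) ^ 2) (n + 1)‖ ≤
      ∑ j ∈ Finset.range (n + 1), ‖taylorCoeff h j‖ ^ 2 := by
  obtain ⟨χ, hχ, hχ1, hωχ⟩ := hω.exists_eq_id_mul
  have hχ0 := analyticAt_zero_of_differentiableOn_ball hχ
  have hhω : AnalyticAt ℂ (fun z => h (ω z)) 0 := hh.fun_comp_of_eq hω.analyticAt hω.map_zero
  set b := taylorCoeff fun z => h (ω z)
  set c := taylorCoeff fun z => χ z * h (ω z)
  set S := ∑ j ∈ Finset.range (n + 1), ‖taylorCoeff h j‖ ^ 2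
  have hb : ∑ j ∈ Finset.range (n + 1), ‖b (n - j)‖ ^ 2 ≤ S := by
    refine (Finset.sum_range_reflect (fun j => ‖b j‖ ^ 2) (n + 1)).trans_le ?_
    exact hω.sum_sq_norm_taylorCoeff_comp_le hh (n + 1)
  have hc : ∑ j ∈ Finset.range (n + 1), ‖c j‖ ^ 2 ≤ S :=
    (sum_sq_norm_taylorCoeff_mul_le hχ hχ1 hhω (n + 1)).trans
      (hω.sum_sq_norm_taylorCoeff_comp_le hh (n + 1))
  have factor : (fun z => ω z * h (ω z) ^ 2) = fun z => z * ((χ z * h (ω z)) * h (ω z)) := by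
    funext z
    calc ω z * h (ω z) ^ 2 = z * χ z * h (ω z) ^ 2 := by rw [← hωχ]
      _ = _ := by ring
  calc ‖taylorCoeff (fun z => ω z * h (ω z) ^ 2) (n + 1)‖
      = ‖∑ j ∈ Finset.range (n + 1), c j * b (n - j)‖ := by
        rw [factor, taylorCoeff_succ_id_mul ((hχ0.fun_mul hhω).fun_mul hhω),
          taylorCoeff_mul (hχ0.fun_mul hhω) hhω]
    _ ≤ ∑ j ∈ Finset.range (n + 1), (‖c j‖ ^ 2 / 2 + ‖b (n - j)‖ ^ 2 / 2) := by
        refine norm_sum_le_of_le _ fun j _ => ?_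
        rw [norm_mul]
        linarith [two_mul_le_add_sq ‖c j‖ ‖b (n - j)‖]
    _ ≤ S := by
        rw [Finset.sum_add_distrib, ← Finset.sum_div, ← Finset.sum_div]
        linarith

end IsSchwarz

end Schwarz

section SymmetricPower

open Polynomial Matrix

variable {S A : Type*} [CommRing S] [CommRing A]

/-- The linear polynomial whose coefficients form row `i` of the `2 × 2` matrix `M`. -/
def rowPoly (M : Matrix (Fin 2) (Fin 2) S) (i : Fin 2) : S[X] := C (M i 0) + C (M i 1) * X

/-- The `(j, k)` entry of the `n`-th symmetric power of a `2 × 2` matrix in the monomial basis,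
dehomogenized so that row `j` consists of the coefficients of a polynomial in one variable. It is
meaningful for `j ≤ n` only, since `n - j` is truncated. -/
def symPowEntry (M : Matrix (Fin 2) (Fin 2) S) (n j k : ℕ) : S :=
  (rowPoly M 0 ^ (n - j) * rowPoly M 1 ^ j).coeff k

/-- The trace of the `n`-th symmetric power of a `2 × 2` matrix. -/
def symPowTrace (M : Matrix (Fin 2) (Fin 2) S) (n : ℕ) : S :=
  ∑ j ∈ Finset.range (n + 1), symPowEntry M n j j

lemma natDegree_rowPoly_le (M : Matrix (Fin 2) (Fin 2) S) (i : Fin 2) :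
    (rowPoly M i).natDegree ≤ 1 := by
  rw [rowPoly]
  compute_degree

lemma map_rowPoly (f : S →+* A) (M : Matrix (Fin 2) (Fin 2) S) (i : Fin 2) :
    (rowPoly M i).map f = rowPoly (M.map f) i := by
  simp [rowPoly]

lemma map_symPowEntry (f : S →+* A) (M : Matrix (Fin 2) (Fin 2) S) (n j k : ℕ) :
    f (symPowEntry M n j k) = symPowEntry (M.map f) n j k := by
  simp only [symPowEntry, ← map_rowPoly, ← Polynomial.map_pow, ← Polynomial.map_mul, coeff_map]

lemma sum_symPowEntry_mul_pow [Algebra S A] (M : Matrix (Fin 2) (Fin 2) S) {n j : ℕ} (hj : j ≤ n)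
    (u v : A) :
    ∑ k ∈ Finset.range (n + 1), algebraMap S A (symPowEntry M n j k) * u ^ (n - k) * v ^ k =
      (algebraMap S A (M 0 0) * u + algebraMap S A (M 0 1) * v) ^ (n - j) *
        (algebraMap S A (M 1 0) * u + algebraMap S A (M 1 1) * v) ^ j := by
  have aeval_homogenize (P : S[X]) (m : ℕ) : MvPolynomial.aeval ![v, u] (P.homogenize m) =
      ∑ k ∈ Finset.range (m + 1), algebraMap S A (P.coeff k) * u ^ (m - k) * v ^ k := by
    rw [homogenize, map_sum,
      Finset.Nat.sum_antidiagonal_eq_sum_range_succ_mk]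
    refine Finset.sum_congr rfl fun k _ => ?_
    rw [Finsupp.update_eq_add_single (by simp), MvPolynomial.aeval_monomial,
      Finsupp.prod_add_index' (by simp) (by simp [pow_add])]
    simp [mul_assoc, mul_comm]
  have row (i : Fin 2) (m : ℕ) : (rowPoly M i ^ m).homogenize m =
      (MvPolynomial.C (M i 0) * .X 1 + MvPolynomial.C (M i 1) * .X 0) ^ m := by
    have := homogenize_finsetProd (s := Finset.range m) (p := fun _ => rowPoly M i)
      (n := fun _ => 1) fun _ _ => natDegree_rowPoly_le M i
    simpa [rowPoly] using this
  have degree (i : Fin 2) (m : ℕ) : (rowPoly M i ^ m).natDegree ≤ m :=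
    (natDegree_pow_le_of_le m (natDegree_rowPoly_le M i)).trans (by simp)
  have split := homogenize_mul _ _ (degree 0 (n - j)) (degree 1 j)
  rw [Nat.sub_add_cancel hj] at split
  simp only [symPowEntry]
  rw [← aeval_homogenize, split, row, row]
  simp

lemma symPowEntry_mul (M N : Matrix (Fin 2) (Fin 2) S) {n j : ℕ} (hj : j ≤ n) (k : ℕ) :
    symPowEntry (M * N) n j k =
      ∑ l ∈ Finset.range (n + 1), symPowEntry M n j l * symPowEntry N n l k := by
  have row (i : Fin 2) : rowPoly (M * N) i =
      algebraMap S S[X] (M i 0) * rowPoly N 0 + algebraMap S S[X] (M i 1) * rowPoly N 1 := by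
    simp only [rowPoly, Matrix.mul_apply, Fin.sum_univ_two, algebraMap_eq, C_add, C_mul]
    ring
  rw [symPowEntry, row, row, ← sum_symPowEntry_mul_pow M hj, finsetSum_coeff]
  simp only [algebraMap_eq, mul_assoc, coeff_C_mul, symPowEntry]

lemma symPowEntry_diagonal (a b : S) {n j : ℕ} (k : ℕ) :
    symPowEntry (diagonal ![a, b]) n j k = if k = j then a ^ (n - j) * b ^ j else 0 := by
  have polynomial_eq : rowPoly (diagonal ![a, b]) 0 ^ (n - j) * rowPoly (diagonal ![a, b]) 1 ^ j =
      C (a ^ (n - j) * b ^ j) * X ^ j := by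
    simp [rowPoly, mul_pow, mul_assoc]
  rw [symPowEntry, polynomial_eq, coeff_C_mul_X_pow]

lemma symPowEntry_mul_diagonal (M : Matrix (Fin 2) (Fin 2) S) (a b : S) {n j k : ℕ} (hj : j ≤ n)
    (hk : k ≤ n) :
    symPowEntry (M * diagonal ![a, b]) n j k = symPowEntry M n j k * (a ^ (n - k) * b ^ k) := by
  simp_rw [symPowEntry_mul M _ hj, symPowEntry_diagonal, mul_ite, mul_zero]
  rw [Finset.sum_ite_eq, if_pos (Finset.mem_range_succ_iff.2 hk)]

lemma coeff_coeff_swap (p : S[X][X]) (i j : ℕ) :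
    ((Bivariate.swap p).coeff i).coeff j = (p.coeff j).coeff i := by
  induction p using Polynomial.induction_on' with
  | add p q hp hq => simp [hp, hq]
  | monomial m f =>
    induction f using Polynomial.induction_on' with
    | add f g hf hg => simp only [map_add, coeff_add, hf, hg]
    | monomial l r =>
      rw [Bivariate.swap_monomial_monomial]
      simp only [coeff_monomial]
      split_ifs <;> simp [coeff_monomial, *]

lemma coeff_C_add_C_mul_X_pow (p q : S) (n j : ℕ) :
    ((C p + C q * X) ^ n).coeff j = n.choose j * (p ^ (n - j) * q ^ j) := by
  have summand (i : ℕ) : (C q * X) ^ i * C p ^ (n - i) * ((n.choose i : ℕ) : S[X]) =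
      C (n.choose i * (p ^ (n - i) * q ^ i)) * X ^ i := by
    simp only [C_mul, C_pow, map_natCast]
    ring
  simp_rw [add_comm (C p), add_pow, summand, finsetSum_coeff, coeff_C_mul_X_pow]
  rw [Finset.sum_ite_eq]
  split_ifs with hj
  · rfl
  · rw [Nat.choose_eq_zero_of_lt (not_le.1 fun h => hj (Finset.mem_range_succ_iff.2 h))]
    simp

lemma choose_mul_symPowEntry_transpose (M : Matrix (Fin 2) (Fin 2) S) (n j k : ℕ) :
    (n.choose k : S) * symPowEntry Mᵀ n k j = n.choose j * symPowEntry M n j k := by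
  -- Both sides are the coefficient of `x ^ j * y ^ k` in `(∑ i l, M i l * x ^ i * y ^ l) ^ n`.
  have coeff_coeff (N : Matrix (Fin 2) (Fin 2) S) (i l : ℕ) :
      (((C (rowPoly N 0) + C (rowPoly N 1) * X) ^ n).coeff i).coeff l =
        n.choose i * symPowEntry N n i l := by
    rw [coeff_C_add_C_mul_X_pow, ← C_eq_natCast, coeff_C_mul, symPowEntry]
  have swap_eq : Bivariate.swap ((C (rowPoly M 0) + C (rowPoly M 1) * X) ^ n) =
      (C (rowPoly Mᵀ 0) + C (rowPoly Mᵀ 1) * X) ^ n := by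
    simp only [map_pow, map_add, map_mul, Bivariate.swap_C, Bivariate.swap_Y, rowPoly,
      map_C, map_X, transpose_apply]
    ring
  rw [← coeff_coeff, ← coeff_coeff, ← swap_eq, coeff_coeff_swap]

lemma symPowEntry_mul_transpose_nonneg (M : Matrix (Fin 2) (Fin 2) ℝ) {n j k : ℕ} (hj : j ≤ n)
    (hk : k ≤ n) : 0 ≤ symPowEntry M n j k * symPowEntry Mᵀ n k j := by
  have hj' : (0 : ℝ) < n.choose j := by exact_mod_cast Nat.choose_pos hj
  have hk' : (0 : ℝ) < n.choose k := by exact_mod_cast Nat.choose_pos hk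
  have : n.choose k * (symPowEntry M n j k * symPowEntry Mᵀ n k j) =
      n.choose j * symPowEntry M n j k ^ 2 := by
    linear_combination symPowEntry M n j k * choose_mul_symPowEntry_transpose M n j k
  exact nonneg_of_mul_nonneg_right (this ▸ by positivity) hk'

section Recurrence

variable (M : Matrix (Fin 2) (Fin 2) S)

lemma symPowEntry_succ {n j : ℕ} (hj : j ≤ n) (k : ℕ) : symPowEntry M (n + 1) j (k + 1) =
    M 0 0 * symPowEntry M n j (k + 1) + M 0 1 * symPowEntry M n j k := by
  have : rowPoly M 0 ^ (n + 1 - j) * rowPoly M 1 ^ j =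
      C (M 0 0) * (rowPoly M 0 ^ (n - j) * rowPoly M 1 ^ j) +
        C (M 0 1) * (X * (rowPoly M 0 ^ (n - j) * rowPoly M 1 ^ j)) := by
    rw [Nat.sub_add_comm hj, pow_succ]
    nth_rw 2 [rowPoly]
    ring
  rw [symPowEntry, this, coeff_add, coeff_C_mul, coeff_C_mul, coeff_X_mul, symPowEntry,
    symPowEntry]

lemma symPowEntry_succ_succ (n j k : ℕ) : symPowEntry M (n + 1) (j + 1) (k + 1) =
    M 1 0 * symPowEntry M n j (k + 1) + M 1 1 * symPowEntry M n j k := by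
  have : rowPoly M 0 ^ (n + 1 - (j + 1)) * rowPoly M 1 ^ (j + 1) =
      C (M 1 0) * (rowPoly M 0 ^ (n - j) * rowPoly M 1 ^ j) +
        C (M 1 1) * (X * (rowPoly M 0 ^ (n - j) * rowPoly M 1 ^ j)) := by
    rw [Nat.add_sub_add_right, pow_succ]
    nth_rw 3 [rowPoly]
    ring
  rw [symPowEntry, this, coeff_add, coeff_C_mul, coeff_C_mul, coeff_X_mul, symPowEntry,
    symPowEntry]

lemma symPowEntry_zero_zero (n : ℕ) : symPowEntry M n 0 0 = M 0 0 ^ n := by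
  simp [symPowEntry, rowPoly, coeff_zero_eq_eval_zero]

lemma symPowEntry_self_succ (n : ℕ) : symPowEntry M n n (n + 1) = 0 := by
  rw [symPowEntry, Nat.sub_self, pow_zero, one_mul]
  refine coeff_eq_zero_of_natDegree_lt (Nat.lt_succ_of_le ?_)
  simpa using natDegree_pow_le_of_le n (natDegree_rowPoly_le M 1)

lemma symPowTrace_succ (n : ℕ) : symPowTrace M (n + 1) = M 0 0 ^ (n + 1) +
    M 1 0 * (∑ j ∈ Finset.range (n + 1), symPowEntry M n j (j + 1)) +
      M 1 1 * symPowTrace M n := by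
  rw [symPowTrace, Finset.sum_range_succ', symPowEntry_zero_zero]
  simp_rw [symPowEntry_succ_succ, Finset.sum_add_distrib, ← Finset.mul_sum, symPowTrace]
  ring

lemma sum_symPowEntry_succ (n : ℕ) :
    ∑ j ∈ Finset.range (n + 2), symPowEntry M (n + 1) j (j + 1) =
      M 0 0 * (∑ j ∈ Finset.range (n + 1), symPowEntry M n j (j + 1)) +
        M 0 1 * symPowTrace M n := by
  rw [Finset.sum_range_succ, symPowEntry_self_succ, add_zero, symPowTrace, Finset.mul_sum,
    Finset.mul_sum, ← Finset.sum_add_distrib]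
  exact Finset.sum_congr rfl fun j hj => symPowEntry_succ M (Finset.mem_range_succ_iff.1 hj) j

lemma symPowTrace_add_two (n : ℕ) :
    symPowTrace M (n + 2) = M.trace * symPowTrace M (n + 1) - M.det * symPowTrace M n := by
  rw [symPowTrace_succ M (n + 1), sum_symPowEntry_succ, trace_fin_two, det_fin_two]
  linear_combination -M 0 0 * symPowTrace_succ M n

lemma symPowTrace_zero : symPowTrace M 0 = 1 := by
  simp [symPowTrace, symPowEntry]

lemma symPowTrace_one : symPowTrace M 1 = M.trace := by
  have := symPowEntry_self_succ M 0
  simp_all [symPowTrace_succ, symPowTrace_zero, trace_fin_two]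

end Recurrence

end SymmetricPower

section ChebyshevLaurent

open Polynomial

/-- The coefficient of `q ^ k` in the Laurent polynomial `U_n (1 - y + y * (q + q⁻¹) / 2)`, where
`U_n` is the Chebyshev polynomial of the second kind, as a polynomial in `y`. -/
def chebyshevLaurent : ℕ → ℤ → ℝ[X]
  | 0, k => if k = 0 then 1 else 0
  | 1, k => 2 * (1 - X) * (if k = 0 then 1 else 0) +
      X * ((if k + 1 = 0 then 1 else 0) + (if k - 1 = 0 then 1 else 0))
  | n + 2, k => 2 * (1 - X) * chebyshevLaurent (n + 1) k +
      X * (chebyshevLaurent (n + 1) (k + 1) + chebyshevLaurent (n + 1) (k - 1)) -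
        chebyshevLaurent n k

lemma chebyshevLaurent_eq_zero (n : ℕ) : ∀ k : ℤ, (n : ℤ) < |k| → chebyshevLaurent n k = 0 := by
  induction n using Nat.twoStepInduction with
  | zero =>
    intro k hk
    exact if_neg (abs_pos.1 hk)
  | one =>
    intro k hk
    rw [lt_abs] at hk
    rw [chebyshevLaurent, if_neg (by omega), if_neg (by omega), if_neg (by omega)]
    simp
  | more n ih ih' =>
    intro k hk
    rw [lt_abs] at hk
    push_cast at hk
    rw [chebyshevLaurent, ih' k (by rw [lt_abs]; omega), ih' (k + 1) (by rw [lt_abs]; omega),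
      ih' (k - 1) (by rw [lt_abs]; omega), ih k (by rw [lt_abs]; omega)]
    simp

lemma X_mul_derivative_chebyshevLaurent_add (n : ℕ) : ∀ k : ℤ,
    X * derivative (chebyshevLaurent n k + chebyshevLaurent n (k + 1)) =
      (k : ℝ[X]) * chebyshevLaurent n k - ((k : ℝ[X]) + 1) * chebyshevLaurent n (k + 1) := by
  induction n using Nat.twoStepInduction with
  | zero =>
    intro k
    simp only [chebyshevLaurent]
    split_ifs with h1 h2 h2
    · omega
    · simp [h1]
    · have : (k : ℝ[X]) + 1 = 0 := by exact_mod_cast h2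
      simp [this]
    · simp
  | one =>
    intro k
    simp only [chebyshevLaurent]
    obtain rfl | rfl | rfl | rfl | hk : k = 0 ∨ k = -1 ∨ k = -2 ∨ k = 1 ∨
      (k ≠ 0 ∧ k + 1 ≠ 0 ∧ k - 1 ≠ 0 ∧ k + 1 + 1 ≠ 0 ∧ k + 1 - 1 ≠ 0) := by omega
    · simp; ring
    · simp; ring
    · simp; ring
    · simp
    · simp [hk]
  | more n ih ih' =>
    intro k
    have h_up := ih' (k + 1)
    have h_mid := ih' k
    have h_down := ih' (k - 1)
    have h_prev := ih k
    rw [show k - 1 + 1 = k by ring] at h_down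
    simp only [chebyshevLaurent, derivative_add, derivative_sub, derivative_mul, derivative_X,
      derivative_one, derivative_ofNat] at *
    rw [show k + 1 - 1 = k by ring]
    push_cast at *
    linear_combination X * h_up + X * h_down + 2 * (1 - X) * h_mid - h_prev

lemma eval_one_chebyshevLaurent_add (n : ℕ) : ∀ k : ℤ,
    (chebyshevLaurent n k + chebyshevLaurent n (k + 1)).eval 1 =
      if -(n : ℤ) - 1 ≤ k ∧ k ≤ n then 1 else 0 := by
  induction n using Nat.twoStepInduction with
  | zero =>
    intro k
    simp only [chebyshevLaurent]
    split_ifs <;> first | omega | simp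
  | one =>
    intro k
    simp only [chebyshevLaurent]
    split_ifs <;> first | omega | simp
  | more n ih ih' =>
    intro k
    have h_up := ih' (k + 1)
    have h_down := ih' (k - 1)
    have h_prev := ih k
    rw [show k - 1 + 1 = k by ring] at h_down
    simp only [chebyshevLaurent, eval_add, eval_sub, eval_mul, eval_X, eval_one,
      eval_ofNat] at *
    rw [show k + 1 - 1 = k by ring]
    have indicator : (if -((n + 2 : ℕ) : ℤ) - 1 ≤ k ∧ k ≤ ((n + 2 : ℕ) : ℤ) then (1 : ℝ) else 0) =
        (if -((n + 1 : ℕ) : ℤ) - 1 ≤ k + 1 ∧ k + 1 ≤ ((n + 1 : ℕ) : ℤ) then (1 : ℝ) else 0) +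
        (if -((n + 1 : ℕ) : ℤ) - 1 ≤ k - 1 ∧ k - 1 ≤ ((n + 1 : ℕ) : ℤ) then (1 : ℝ) else 0) -
        (if -(n : ℤ) - 1 ≤ k ∧ k ≤ n then 1 else 0) := by
      push_cast
      split_ifs <;> first | omega | simp
    linear_combination h_up + h_down - h_prev - indicator

end ChebyshevLaurent

section Positivity

open LaurentPolynomial Matrix

/-- `R D Rᵀ D⁻¹` for the rotation `R` with cosine `c` and sine `s` and for `D = diag(1, q)`: a
matrix with determinant `1` and trace `2 * c ^ 2 + s ^ 2 * (q + q⁻¹)`. -/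
def twistedRotation (c s : ℝ) : Matrix (Fin 2) (Fin 2) ℝ[T;T⁻¹] :=
  (!![c, s; -s, c] : Matrix (Fin 2) (Fin 2) ℝ).map C * diagonal ![1, T 1] *
    (!![c, s; -s, c] : Matrix (Fin 2) (Fin 2) ℝ)ᵀ.map C * diagonal ![1, T (-1)]

lemma symPowEntry_twistedRotation (c s : ℝ) {n j : ℕ} (hj : j ≤ n) :
    symPowEntry (twistedRotation c s) n j j = ∑ k ∈ Finset.range (n + 1),
      C (symPowEntry !![c, s; -s, c] n j k * symPowEntry !![c, s; -s, c]ᵀ n k j) *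
        T ((k : ℤ) - j) := by
  rw [twistedRotation, symPowEntry_mul_diagonal _ _ _ hj hj, symPowEntry_mul _ _ hj,
    Finset.sum_mul]
  refine Finset.sum_congr rfl fun k hk => ?_
  rw [symPowEntry_mul_diagonal _ _ _ hj (Finset.mem_range_succ_iff.1 hk), ← map_symPowEntry,
    ← map_symPowEntry, map_mul, T_sub]
  simp only [one_pow, one_mul, T_pow, mul_one, mul_neg]
  ring

lemma coeff_symPowTrace_twistedRotation_nonneg (c s : ℝ) (n : ℕ) (k : ℤ) :
    0 ≤ (symPowTrace (twistedRotation c s) n).coeff k := by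
  rw [symPowTrace, AddMonoidAlgebra.coeff_sum, Finsupp.finsetSum_apply]
  refine Finset.sum_nonneg fun j hj => ?_
  have hj := Finset.mem_range_succ_iff.1 hj
  rw [symPowEntry_twistedRotation c s hj, AddMonoidAlgebra.coeff_sum, Finsupp.finsetSum_apply]
  refine Finset.sum_nonneg fun l hl => ?_
  have := symPowEntry_mul_transpose_nonneg !![c, s; -s, c] hj (Finset.mem_range_succ_iff.1 hl)
  rw [← single_eq_C_mul_T, AddMonoidAlgebra.coeff_single, Finsupp.single_apply]
  split_ifs
  exacts [this, le_rfl]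

lemma twistedRotation_eq (c s : ℝ) : twistedRotation c s =
    !![C (c ^ 2) + C (s ^ 2) * T 1, C (c * s) * (1 - T (-1));
      C (c * s) * (T 1 - 1), C (s ^ 2) * T (-1) + C (c ^ 2)] := by
  have hT : (T 1 : ℝ[T;T⁻¹]) * T (-1) = 1 := by rw [← T_add]; exact T_zero
  ext1 i j
  fin_cases i <;> fin_cases j <;>
    simp only [twistedRotation, Fin.zero_eta, Fin.mk_one, Fin.isValue, Matrix.mul_apply,
      Fin.sum_univ_two, map_apply, transpose_apply, of_apply, cons_val', cons_val_zero,
      cons_val_one, cons_val_fin_one, diagonal_apply_eq, diagonal_apply_ne, ne_eq, one_ne_zero,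
      zero_ne_one, not_false_eq_true, map_neg, map_mul, map_pow] <;>
    grind

lemma trace_twistedRotation {c s : ℝ} (hcs : c ^ 2 + s ^ 2 = 1) : (twistedRotation c s).trace =
    C (2 * (1 - s ^ 2)) + C (s ^ 2) * (T (-1) + T 1) := by
  rw [twistedRotation_eq, trace_fin_two_of, ← hcs]
  simp only [map_mul, map_sub, map_add, map_pow, map_ofNat]
  ring

lemma det_twistedRotation {c s : ℝ} (hcs : c ^ 2 + s ^ 2 = 1) :
    (twistedRotation c s).det = 1 := by
  have hT : (T 1 : ℝ[T;T⁻¹]) * T (-1) = 1 := by rw [← T_add]; exact T_zero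
  have hC : (C c ^ 2 + C s ^ 2 : ℝ[T;T⁻¹]) = 1 := by
    rw [← map_pow, ← map_pow, ← map_add, hcs, map_one]
  rw [twistedRotation_eq, det_fin_two_of]
  simp only [map_mul, map_pow]
  linear_combination (C c ^ 2 + C s ^ 2 + 1) * hC + C s ^ 2 * (C c ^ 2 + C s ^ 2) * hT

lemma coeff_symPowTrace_twistedRotation {c s : ℝ} (hcs : c ^ 2 + s ^ 2 = 1) (n : ℕ) :
    ∀ k : ℤ, (symPowTrace (twistedRotation c s) n).coeff k =
      (chebyshevLaurent n k).eval (s ^ 2) := by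
  have coeff_C_mul (a : ℝ) (P : ℝ[T;T⁻¹]) (k : ℤ) : (C a * P).coeff k = a * P.coeff k := by
    rw [← smul_eq_C_mul, AddMonoidAlgebra.coeff_smul, Finsupp.smul_apply, smul_eq_mul]
  have coeff_T_mul (m k : ℤ) (P : ℝ[T;T⁻¹]) : (T m * P).coeff k = P.coeff (k - m) := by
    rw [T, AddMonoidAlgebra.coeff_single_mul_apply, one_mul, neg_add_eq_sub]
  induction n using Nat.twoStepInduction with
  | zero =>
    intro k
    rw [symPowTrace_zero, ← T_zero, T_apply, chebyshevLaurent]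
    simp only [eq_comm]
    split_ifs <;> simp
  | one =>
    intro k
    rw [symPowTrace_one, trace_twistedRotation hcs, AddMonoidAlgebra.coeff_add, Finsupp.add_apply,
      coeff_C_mul, AddMonoidAlgebra.coeff_add, Finsupp.add_apply, T_apply, T_apply, C_apply,
      chebyshevLaurent]
    obtain rfl | rfl | rfl | hk : k = 0 ∨ k = -1 ∨ k = 1 ∨
      (k ≠ 0 ∧ k + 1 ≠ 0 ∧ k - 1 ≠ 0 ∧ -1 ≠ k ∧ 1 ≠ k) := by omega
    all_goals simp [*]
  | more n ih ih' =>
    intro k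
    rw [symPowTrace_add_two, trace_twistedRotation hcs, det_twistedRotation hcs, one_mul, add_mul,
      mul_assoc, add_mul]
    simp only [AddMonoidAlgebra.coeff_add, AddMonoidAlgebra.coeff_sub, Finsupp.add_apply,
      Finsupp.sub_apply, coeff_C_mul, coeff_T_mul, ih, ih', chebyshevLaurent, sub_neg_eq_add,
      Polynomial.eval_add, Polynomial.eval_sub, Polynomial.eval_mul, Polynomial.eval_X,
      Polynomial.eval_one, Polynomial.eval_ofNat]

lemma eval_chebyshevLaurent_nonneg (n : ℕ) (k : ℤ) {y : ℝ} (h0 : 0 ≤ y) (h1 : y ≤ 1) :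
    0 ≤ (chebyshevLaurent n k).eval y := by
  have hs : √y ^ 2 = y := Real.sq_sqrt h0
  have hc : √(1 - y) ^ 2 = 1 - y := Real.sq_sqrt (by linarith)
  have := coeff_symPowTrace_twistedRotation_nonneg √(1 - y) √y n k
  rwa [coeff_symPowTrace_twistedRotation (by rw [hs, hc]; ring), hs] at this

end Positivity

section FirstOrderExpansion

open Asymptotics

lemma isBigO_sub_affine_of_contDiffOn {f : ℝ → ℝ} {f' a b : ℝ} (hab : a < b)
    (hf : ContDiffOn ℝ 2 f (Icc a b)) (hd : HasDerivAt f f' b) :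
    (fun x => f x - (f b + (x - b) * f')) =O[𝓟 (Icc a b)] fun x => (x - b) ^ 2 := by
  have hreflect : MapsTo (fun x : ℝ => -x) (Icc (-b) (-a)) (Icc a b) :=
    fun x hx => ⟨by linarith [hx.2], by linarith [hx.1]⟩
  have hg : ContDiffOn ℝ (1 + 1) (fun x => f (-x)) (Icc (-b) (-a)) := by
    rw [one_add_one_eq_two]
    exact hf.comp contDiff_neg.contDiffOn hreflect
  obtain ⟨C, hC⟩ := exists_taylor_mean_remainder_bound (n := 1) (neg_le_neg hab.le) hg
  have hdg : derivWithin (fun x => f (-x)) (Icc (-b) (-a)) (-b) = -f' := by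
    have hd' : HasDerivAt f f' (- -b) := by rwa [neg_neg]
    have h := hd'.comp (-b) (hasDerivAt_neg (-b))
    rw [mul_neg_one] at h
    exact h.hasDerivWithinAt.derivWithin
      (uniqueDiffOn_Icc (neg_lt_neg hab) _ (left_mem_Icc.2 (neg_le_neg hab.le)))
  refine isBigO_principal.2 ⟨C, fun x hx => ?_⟩
  have h := hC (-x) ⟨neg_le_neg hx.2, neg_le_neg hx.1⟩
  rw [taylorWithinEval_succ, taylor_within_zero_eval, iteratedDerivWithin_one, hdg] at h
  rw [Real.norm_of_nonneg (sq_nonneg _)]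
  simp only [neg_neg] at h
  convert h using 1
  · congr 1
    norm_num
    ring
  · ring

lemma isBigO_inv_pow_sub (k : ℕ) :
    (fun m : ℝ => m⁻¹ ^ k - (1 + (1 - m) * k)) =O[𝓟 (Icc (1 / 2) 1)] fun m => (1 - m) ^ 2 := by
  have hne : ∀ m ∈ Icc (1 / 2 : ℝ) 1, m ≠ 0 := fun m hm => by linarith [hm.1]
  have hd : HasDerivAt (fun m : ℝ => m⁻¹ ^ k) (-k) 1 := by
    simpa using (hasDerivAt_inv (one_ne_zero (α := ℝ))).fun_pow k
  have h := isBigO_sub_affine_of_contDiffOn (by norm_num)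
    ((contDiffOn_id.fun_inv hne).pow k) hd
  convert h using 2 with m
  · norm_num
    ring
  · ring

/-- The Taylor series of the Blaschke factor `(m - z) / (1 - m z)`, with `m` as an indeterminate. -/
def blaschkeSeries : PowerSeries (Polynomial ℝ) :=
  PowerSeries.mk fun l => if l = 0 then .X else .X ^ (l - 1) * (.X ^ 2 - 1)

lemma exists_coeff_blaschkeSeries_pow (i l : ℕ) : ∃ R : Polynomial ℝ,
    PowerSeries.coeff l (blaschkeSeries ^ i) = (if l = 0 then 1 else 0) +
      (.X - 1) * (i * if l = 0 then 1 else .X ^ (l - 1) * (.X + 1)) + (.X - 1) ^ 2 * R := by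
  let S : PowerSeries (Polynomial ℝ) :=
    PowerSeries.mk fun l => if l = 0 then 1 else .X ^ (l - 1) * (.X + 1)
  have hS : blaschkeSeries = 1 + PowerSeries.C (.X - 1) * S := by
    ext1 l
    rw [map_add, PowerSeries.coeff_C_mul, PowerSeries.coeff_one]
    simp only [blaschkeSeries, S, PowerSeries.coeff_mk]
    split_ifs <;> ring
  obtain ⟨R, hR⟩ := Polynomial.powAddExpansion 1 (PowerSeries.C (.X - 1) * S) i
  refine ⟨PowerSeries.coeff l (R * S ^ 2), ?_⟩
  have hexp : (1 + PowerSeries.C (.X - 1) * S) ^ i = 1 + PowerSeries.C (.X - 1) *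
      (PowerSeries.C (i : Polynomial ℝ) * S) + PowerSeries.C ((.X - 1) ^ 2) * (R * S ^ 2) := by
    rw [hR, map_natCast, map_pow]
    ring
  rw [hS, hexp, map_add, map_add, PowerSeries.coeff_C_mul, PowerSeries.coeff_C_mul,
    PowerSeries.coeff_C_mul, PowerSeries.coeff_one, PowerSeries.coeff_mk]

lemma isBigO_eval_coeff_blaschkeSeries_pow (i l : ℕ) :
    (fun m : ℝ => (PowerSeries.coeff l (blaschkeSeries ^ i)).eval m -
      ((if l = 0 then 1 else 0) - (1 - m) * (i * if l = 0 then 1 else 2)))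
      =O[𝓟 (Icc (1 / 2) 1)] fun m => (1 - m) ^ 2 := by
  obtain ⟨R, hR⟩ := exists_coeff_blaschkeSeries_pow i l
  set p := PowerSeries.coeff l (blaschkeSeries ^ i)
  have heval : p.eval 1 = if l = 0 then 1 else 0 := by
    rw [hR]
    split_ifs <;> simp
  have hderiv : p.derivative.eval 1 = i * if l = 0 then 1 else 2 := by
    rw [hR]
    split_ifs <;> simp [Polynomial.derivative_pow, one_add_one_eq_two]
  have h := isBigO_sub_affine_of_contDiffOn (by norm_num : (1 / 2 : ℝ) < 1)
    (Polynomial.contDiff_aeval p 2).contDiffOn (p.hasDerivAt 1)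
  simp only [Polynomial.coe_aeval_eq_eval, heval, hderiv] at h
  convert h using 2 with m <;> ring

/-- The coefficients of the transformation law of the logarithmic coefficients under composition
with `z ↦ z (m - z) / (1 - m z)`, see `taylorCoeff_radialLogDeriv_elementaryStep`. -/
def transitionCoeff (k i : ℕ) (m : ℝ) : ℝ :=
  if i = 0 then (if k = 0 then 1 else m ^ k - m⁻¹ ^ k)
  else k / i * (PowerSeries.coeff (k - i) (blaschkeSeries ^ i)).eval m

lemma isBigO_transitionCoeff {k i : ℕ} (hik : i ≤ k) :
    (fun m => transitionCoeff k i m -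
      ((if i = k then 1 else 0) - (1 - m) * (k * if i = k then 1 else 2)))
      =O[𝓟 (Icc (1 / 2) 1)] fun m => (1 - m) ^ 2 := by
  rcases eq_or_ne i 0 with rfl | hi
  · rcases eq_or_ne k 0 with rfl | hk
    · simpa [transitionCoeff] using isBigO_zero _ _
    · have hpow := isBigO_sub_affine_of_contDiffOn (by norm_num : (1 / 2 : ℝ) < 1)
        (contDiff_id.pow k).contDiffOn (hasDerivAt_pow k (1 : ℝ))
      have hpow' : (fun m : ℝ => m ^ k - (1 - (1 - m) * k)) =O[𝓟 (Icc (1 / 2) 1)]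
          fun m => (1 - m) ^ 2 := by
        convert hpow using 2 with m
        · norm_num
          ring
        · ring
      refine (hpow'.sub (isBigO_inv_pow_sub k)).congr_left fun m => ?_
      rw [transitionCoeff, if_pos rfl, if_neg hk, if_neg hk.symm, if_neg hk.symm]
      ring
  · have hi' : (i : ℝ) ≠ 0 := Nat.cast_ne_zero.2 hi
    refine ((isBigO_eval_coeff_blaschkeSeries_pow i (k - i)).const_mul_left (k / i : ℝ)).congr_left
      fun m => ?_
    have hiff : k - i = 0 ↔ i = k := by omega
    rw [transitionCoeff, if_neg hi]
    simp only [hiff]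
    split_ifs with h
    · subst h
      field_simp
    · field_simp
      ring

end FirstOrderExpansion

section ElementaryMap

/-- The Möbius factor `(m - κ z) / (1 - m κ z)`. -/
def blaschkeFactor (κ : ℂ) (m : ℝ) (z : ℂ) : ℂ := (m - κ * z) * (1 - m * κ * z)⁻¹

/-- The self-map `z (m - κ z) / (1 - m κ z)` of the unit disc, of which Koebe's osculation
procedure extracts a composition factor. -/
def elementaryMap (κ : ℂ) (m : ℝ) (z : ℂ) : ℂ := z * blaschkeFactor κ m z

/-- Composition with an elementary map, in terms of the quotient `u z = p z / z`: it sends the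
quotient of `p` to that of `p ∘ elementaryMap κ m`. -/
def elementaryStep (κ : ℂ) (m : ℝ) (u : ℂ → ℂ) (z : ℂ) : ℂ :=
  blaschkeFactor κ m z * u (elementaryMap κ m z)

/-- The quotient `z p' / p` of the function `p z = z * u z`. -/
def radialLogDeriv (u : ℂ → ℂ) (z : ℂ) : ℂ := 1 + z * (deriv u z / u z)

variable {κ : ℂ} {m : ℝ} {u : ℂ → ℂ}

lemma analyticAt_one_sub_mul_inv (c : ℂ) : AnalyticAt ℂ (fun z => (1 - c * z)⁻¹) 0 :=
  AnalyticAt.fun_inv (by fun_prop) (by simp)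

lemma eventually_one_sub_mul_ne_zero (c : ℂ) : ∀ᶠ z : ℂ in 𝓝 0, 1 - c * z ≠ 0 :=
  ContinuousAt.eventually_ne (by fun_prop) (by simp)

lemma taylorCoeff_one_sub_mul_inv (c : ℂ) (k : ℕ) :
    taylorCoeff (fun z => (1 - c * z)⁻¹) k = c ^ k := by
  induction k with
  | zero => simp [taylorCoeff_zero]
  | succ k ih =>
    have hrec : (fun z : ℂ => (1 - c * z)⁻¹) =ᶠ[𝓝 0] fun z => 1 + z * (c * (1 - c * z)⁻¹) := by
      filter_upwards [eventually_one_sub_mul_ne_zero c] with z hz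
      field_simp
      ring
    have han := analyticAt_one_sub_mul_inv c
    rw [taylorCoeff_congr hrec,
      taylorCoeff_succ_const_add_id_mul 1 (analyticAt_const.fun_mul han),
      taylorCoeff_const_mul c han, ih, pow_succ']

lemma analyticAt_blaschkeFactor : AnalyticAt ℂ (blaschkeFactor κ m) 0 :=
  AnalyticAt.fun_mul (by fun_prop) (analyticAt_one_sub_mul_inv _)

lemma blaschkeFactor_zero : blaschkeFactor κ m 0 = m := by simp [blaschkeFactor]

lemma analyticAt_elementaryMap : AnalyticAt ℂ (elementaryMap κ m) 0 :=
  analyticAt_fun_id.fun_mul analyticAt_blaschkeFactor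

lemma elementaryMap_zero : elementaryMap κ m 0 = 0 := by simp [elementaryMap]

lemma hasDerivAt_elementaryMap {z : ℂ} (hz : AnalyticAt ℂ (blaschkeFactor κ m) z) :
    HasDerivAt (elementaryMap κ m)
      (1 * blaschkeFactor κ m z + z * deriv (blaschkeFactor κ m) z) z :=
  (hasDerivAt_id z).mul hz.differentiableAt.hasDerivAt

lemma eventually_analyticAt_and_ne_zero_blaschkeFactor (hm : m ≠ 0) :
    ∀ᶠ z in 𝓝 0, AnalyticAt ℂ (blaschkeFactor κ m) z ∧ blaschkeFactor κ m z ≠ 0 :=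
  analyticAt_blaschkeFactor.eventually_analyticAt.and
    (analyticAt_blaschkeFactor.continuousAt.eventually_ne (by simpa [blaschkeFactor_zero] using hm))

lemma analyticAt_elementaryStep (hu : AnalyticAt ℂ u 0) :
    AnalyticAt ℂ (elementaryStep κ m u) 0 :=
  analyticAt_blaschkeFactor.fun_mul
    (hu.fun_comp_of_eq analyticAt_elementaryMap elementaryMap_zero)

lemma elementaryStep_zero : elementaryStep κ m u 0 = m * u 0 := by
  simp [elementaryStep, blaschkeFactor_zero, elementaryMap_zero]

lemma analyticAt_radialLogDeriv (hu : AnalyticAt ℂ u 0) (h0 : u 0 ≠ 0) :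
    AnalyticAt ℂ (radialLogDeriv u) 0 :=
  analyticAt_const.fun_add (analyticAt_fun_id.fun_mul (hu.deriv.fun_div hu h0))

lemma taylorSeries_blaschkeFactor (κ : ℂ) (m : ℝ) :
    taylorSeries (blaschkeFactor κ m) = PowerSeries.rescale κ
      (PowerSeries.map (Complex.ofRealHom.comp (Polynomial.evalRingHom m)) blaschkeSeries) := by
  have hgeom := analyticAt_one_sub_mul_inv (m * κ)
  have hκgeom := analyticAt_const.fun_mul hgeom (f := fun _ => -κ)
  have hsplit : blaschkeFactor κ m =
      fun z => (m : ℂ) * (1 - m * κ * z)⁻¹ + z * (-κ * (1 - m * κ * z)⁻¹) := by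
    funext z
    rw [blaschkeFactor]
    ring
  ext l
  rw [hsplit, taylorSeries_add (analyticAt_const.fun_mul hgeom) (analyticAt_fun_id.fun_mul hκgeom),
    taylorSeries_id_mul hκgeom, taylorSeries_const_mul _ hgeom, taylorSeries_const_mul _ hgeom,
    map_add, PowerSeries.coeff_C_mul, coeff_taylorSeries, taylorCoeff_one_sub_mul_inv,
    PowerSeries.coeff_rescale, PowerSeries.coeff_map, blaschkeSeries, PowerSeries.coeff_mk]
  rcases l with _ | l
  · simp
  · rw [PowerSeries.coeff_succ_X_mul, PowerSeries.coeff_C_mul, coeff_taylorSeries,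
      taylorCoeff_one_sub_mul_inv]
    simp
    ring

lemma radialLogDeriv_blaschkeFactor_eventuallyEq (κ : ℂ) (hm : m ≠ 0) :
    radialLogDeriv (blaschkeFactor κ m) =ᶠ[𝓝 0]
      fun z => 1 + ((1 - m * κ * z)⁻¹ + (-1) * (1 - κ / m * z)⁻¹) := by
  have hm' : (m : ℂ) ≠ 0 := Complex.ofReal_ne_zero.2 hm
  filter_upwards [eventually_one_sub_mul_ne_zero (m * κ), eventually_one_sub_mul_ne_zero (κ / m)]
    with z hden hnum
  have hd : HasDerivAt (blaschkeFactor κ m) (-(κ * 1) * (1 - m * κ * z)⁻¹ +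
      (m - κ * z) * (-(-(m * κ * 1)) / (1 - m * κ * z) ^ 2)) z :=
    (((hasDerivAt_id z).const_mul κ).const_sub (m : ℂ)).mul
      ((((hasDerivAt_id z).const_mul (m * κ)).const_sub 1).inv hden)
  have hnum_eq : 1 - κ / m * z = (m - κ * z) / m := by field_simp
  rw [hnum_eq, div_ne_zero_iff] at hnum
  rw [radialLogDeriv, hd.deriv, blaschkeFactor, hnum_eq]
  generalize hA : m - κ * z = A at *
  generalize hB : 1 - m * κ * z = B at *
  have hA0 := hnum.1
  field_simp
  rw [← hA, ← hB]
  ring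

lemma taylorCoeff_radialLogDeriv_blaschkeFactor (κ : ℂ) (hm : m ≠ 0) (k : ℕ) :
    taylorCoeff (radialLogDeriv (blaschkeFactor κ m)) k = κ ^ k * transitionCoeff k 0 m := by
  have hzero := analyticAt_one_sub_mul_inv (κ / m)
  have hpole := analyticAt_one_sub_mul_inv (m * κ)
  rw [taylorCoeff_congr (radialLogDeriv_blaschkeFactor_eventuallyEq κ hm), ← coeff_taylorSeries,
    taylorSeries_add analyticAt_const (hpole.fun_add (analyticAt_const.fun_mul hzero)),
    taylorSeries_add hpole (analyticAt_const.fun_mul hzero), taylorSeries_const_mul _ hzero,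
    taylorSeries_const, map_add, map_add, PowerSeries.coeff_C_mul, coeff_taylorSeries,
    coeff_taylorSeries, taylorCoeff_one_sub_mul_inv, taylorCoeff_one_sub_mul_inv,
    PowerSeries.coeff_C, transitionCoeff, if_pos rfl]
  split_ifs with hk
  · simp [hk]
  · push_cast
    rw [div_eq_mul_inv, mul_pow, mul_pow]
    ring

lemma radialLogDeriv_blaschkeFactor_mul_pow_eventuallyEq (κ : ℂ) (hm : m ≠ 0) (i : ℕ) :
    (fun z => (i + 1) * (radialLogDeriv (blaschkeFactor κ m) z * elementaryMap κ m z ^ (i + 1)))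
      =ᶠ[𝓝 0] fun z => z * deriv (fun w => elementaryMap κ m w ^ (i + 1)) z := by
  filter_upwards [eventually_analyticAt_and_ne_zero_blaschkeFactor (κ := κ) hm] with z ⟨han, hne⟩
  rw [((hasDerivAt_elementaryMap han).fun_pow (i + 1)).deriv, radialLogDeriv, pow_succ,
    Nat.add_sub_cancel]
  nth_rw 2 [elementaryMap]
  field_simp
  push_cast
  ring

lemma taylorCoeff_radialLogDeriv_blaschkeFactor_mul_pow (κ : ℂ) (hm : m ≠ 0) {k i : ℕ}
    (hik : i ≤ k) :
    taylorCoeff (fun z => radialLogDeriv (blaschkeFactor κ m) z * elementaryMap κ m z ^ i) k =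
      κ ^ (k - i) * transitionCoeff k i m := by
  rcases i with _ | i
  · simpa using taylorCoeff_radialLogDeriv_blaschkeFactor κ hm k
  have hpow : AnalyticAt ℂ (fun z => elementaryMap κ m z ^ (i + 1)) 0 :=
    analyticAt_elementaryMap.fun_pow _
  have hi : (i + 1 : ℂ) ≠ 0 := by exact_mod_cast i.succ_ne_zero
  have hlog : AnalyticAt ℂ (radialLogDeriv (blaschkeFactor κ m)) 0 :=
    analyticAt_radialLogDeriv analyticAt_blaschkeFactor
      (by simpa [blaschkeFactor_zero] using hm)
  have hfactor : (fun z => elementaryMap κ m z ^ (i + 1)) =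
      fun z => z ^ (i + 1) * blaschkeFactor κ m z ^ (i + 1) := by
    funext z
    rw [elementaryMap, mul_pow]
  refine mul_left_cancel₀ hi ?_
  rw [← taylorCoeff_const_mul _ (hlog.fun_mul hpow),
    taylorCoeff_congr (radialLogDeriv_blaschkeFactor_mul_pow_eventuallyEq κ hm i),
    taylorCoeff_id_mul_deriv hpow, hfactor, ← coeff_taylorSeries,
    taylorSeries_pow_mul _ (analyticAt_blaschkeFactor.fun_pow _),
    taylorSeries_pow analyticAt_blaschkeFactor, PowerSeries.coeff_X_pow_mul', if_pos hik,
    taylorSeries_blaschkeFactor, ← map_pow, ← map_pow, PowerSeries.coeff_rescale,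
    PowerSeries.coeff_map, transitionCoeff, if_neg i.succ_ne_zero]
  simp only [RingHom.comp_apply, Polynomial.coe_evalRingHom, Complex.ofRealHom_eq_coe]
  push_cast
  field_simp

lemma radialLogDeriv_elementaryStep_eventuallyEq (κ : ℂ) (hm : m ≠ 0) (hu : AnalyticAt ℂ u 0)
    (h0 : u 0 ≠ 0) :
    radialLogDeriv (elementaryStep κ m u) =ᶠ[𝓝 0] fun z =>
      radialLogDeriv (blaschkeFactor κ m) z * radialLogDeriv u (elementaryMap κ m z) := by
  have hmap : Tendsto (elementaryMap κ m) (𝓝 0) (𝓝 0) := by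
    simpa only [elementaryMap_zero] using
      (analyticAt_elementaryMap (κ := κ) (m := m)).continuousAt.tendsto
  filter_upwards [eventually_analyticAt_and_ne_zero_blaschkeFactor (κ := κ) hm,
    hmap.eventually hu.eventually_analyticAt,
    hmap.eventually (hu.continuousAt.eventually_ne h0)] with z ⟨han, hne⟩ hanu hneu
  have hd : HasDerivAt (elementaryStep κ m u) _ z := han.differentiableAt.hasDerivAt.mul
    (hanu.differentiableAt.hasDerivAt.comp z (hasDerivAt_elementaryMap han))
  rw [radialLogDeriv, hd.deriv, elementaryStep, radialLogDeriv, radialLogDeriv]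
  rw [elementaryMap] at hneu
  simp only [elementaryMap]
  field_simp
  ring

lemma taylorCoeff_radialLogDeriv_elementaryStep (κ : ℂ) (hm : m ≠ 0) (hu : AnalyticAt ℂ u 0)
    (h0 : u 0 ≠ 0) (k : ℕ) :
    taylorCoeff (radialLogDeriv (elementaryStep κ m u)) k = ∑ i ∈ Finset.range (k + 1),
      taylorCoeff (radialLogDeriv u) i * (κ ^ (k - i) * transitionCoeff k i m) := by
  have hlog : AnalyticAt ℂ (radialLogDeriv (blaschkeFactor κ m)) 0 :=
    analyticAt_radialLogDeriv analyticAt_blaschkeFactor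
      (by simpa [blaschkeFactor_zero] using hm)
  rw [taylorCoeff_congr (radialLogDeriv_elementaryStep_eventuallyEq κ hm hu h0),
    taylorCoeff_mul_comp hlog (analyticAt_radialLogDeriv hu h0) analyticAt_elementaryMap
      elementaryMap_zero k.lt_succ_self]
  refine Finset.sum_congr rfl fun i hi => ?_
  rw [taylorCoeff_radialLogDeriv_blaschkeFactor_mul_pow κ hm (Finset.mem_range_succ_iff.1 hi)]

end ElementaryMap

section DeBrangesWeight

/-- The `k`-th weight of de Branges' functional as a polynomial in the flow parameter, the partial
sum making `X_mul_derivative_deBrangesWeight` the adjoint of Loewner's coefficient system. -/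
def deBrangesWeight (n k : ℕ) : Polynomial ℝ :=
  ∑ j ∈ Finset.Ico k (n + 1), (chebyshevLaurent n j + chebyshevLaurent n (j + 1))

variable {n k : ℕ}

lemma deBrangesWeight_eq_add_succ (hk : k ≤ n) : deBrangesWeight n k =
    chebyshevLaurent n k + chebyshevLaurent n (k + 1) + deBrangesWeight n (k + 1) := by
  rw [deBrangesWeight, Finset.sum_eq_sum_Ico_succ_bot (by omega), deBrangesWeight]

lemma deBrangesWeight_self_succ (n : ℕ) : deBrangesWeight n (n + 1) = 0 := by
  simp [deBrangesWeight]

lemma chebyshevLaurent_self_succ (n : ℕ) : chebyshevLaurent n (n + 1) = 0 :=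
  chebyshevLaurent_eq_zero _ _ (by rw [abs_of_nonneg] <;> omega)

lemma X_mul_derivative_deBrangesWeight (hk : k ≤ n + 1) :
    .X * (deBrangesWeight n k).derivative = (k : Polynomial ℝ) * chebyshevLaurent n k := by
  induction hk using Nat.decreasingInduction with
  | self => simp [deBrangesWeight_self_succ, chebyshevLaurent_self_succ]
  | of_succ k hk ih =>
    rw [deBrangesWeight_eq_add_succ (by omega), Polynomial.derivative_add, mul_add,
      X_mul_derivative_chebyshevLaurent_add, ih]
    push_cast
    ring

lemma eval_one_deBrangesWeight (hk : k ≤ n + 1) :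
    (deBrangesWeight n k).eval 1 = (n : ℝ) + 1 - k := by
  induction hk using Nat.decreasingInduction with
  | self => simp [deBrangesWeight_self_succ]
  | of_succ k hk ih =>
    rw [deBrangesWeight_eq_add_succ (by omega), Polynomial.eval_add,
      eval_one_chebyshevLaurent_add, ih, if_pos (by omega)]
    push_cast
    ring

lemma eval_deBrangesWeight_nonneg (n k : ℕ) {y : ℝ} (h0 : 0 ≤ y) (h1 : y ≤ 1) :
    0 ≤ (deBrangesWeight n k).eval y := by
  rw [deBrangesWeight, Polynomial.eval_finsetSum]
  refine Finset.sum_nonneg fun j _ => ?_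
  rw [Polynomial.eval_add]
  exact add_nonneg (eval_chebyshevLaurent_nonneg n j h0 h1)
    (eval_chebyshevLaurent_nonneg n (j + 1) h0 h1)

end DeBrangesWeight

section DeBrangesFunctional

/-- De Branges' functional of the coefficients `E` of `z p' / p`; the logarithmic coefficients of
`p` itself are `E k / k`. -/
def deBrangesFunctional (n : ℕ) (y : ℝ) (E : ℕ → ℂ) : ℝ :=
  ∑ k ∈ Finset.range n, (deBrangesWeight n (k + 1)).eval y * ((‖E (k + 1)‖ ^ 2 - 4) / (k + 1))

/-- The factor for which `-k * loewnerVelocity E k` is the velocity of `E k` under Loewner's flow,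
the coefficients being those of `z p' / p`. -/
def loewnerVelocity (E : ℕ → ℂ) (k : ℕ) : ℂ := E k + 2 * ∑ i ∈ Finset.range k, E i

/-- The time derivative of de Branges' functional along Loewner's flow. -/
def deBrangesDrift (n : ℕ) (y : ℝ) (E : ℕ → ℂ) : ℝ :=
  ∑ k ∈ Finset.range n, ((chebyshevLaurent n (k + 1)).eval y * (‖E (k + 1)‖ ^ 2 - 4) -
    (deBrangesWeight n (k + 1)).eval y *
      (2 * (star (E (k + 1)) * loewnerVelocity E (k + 1)).re))

variable {n : ℕ} {E : ℕ → ℂ}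

lemma two_mul_re_star_mul_add (b e : ℂ) : 2 * (star e * (2 + (b + e) + b)).re =
    (2 * ‖b + e‖ ^ 2 + 4 * (b + e).re) - (2 * ‖b‖ ^ 2 + 4 * b.re) := by
  simp only [← Complex.normSq_eq_norm_sq, Complex.normSq_apply, Complex.star_def, Complex.mul_re,
    Complex.conj_re, Complex.conj_im, Complex.add_re, Complex.add_im, Complex.re_ofNat,
    Complex.im_ofNat]
  ring

lemma sq_norm_sub_four_eq (b e : ℂ) : ‖e‖ ^ 2 - 4 = (2 * ‖b + e‖ ^ 2 + 4 * (b + e).re) +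
    (2 * ‖b‖ ^ 2 + 4 * b.re) - ‖(b + e) + b + 2‖ ^ 2 := by
  simp only [← Complex.normSq_eq_norm_sq, Complex.normSq_apply, Complex.add_re, Complex.add_im,
    Complex.re_ofNat, Complex.im_ofNat]
  ring

lemma sum_chebyshevLaurent_mul_add_sub_deBrangesWeight_mul_sub (y : ℝ) {g : ℕ → ℝ} (hg : g 0 = 0)
    {N : ℕ} (hN : N ≤ n) :
    ∑ k ∈ Finset.range N, ((chebyshevLaurent n (k + 1)).eval y * (g (k + 1) + g k) -
      (deBrangesWeight n (k + 1)).eval y * (g (k + 1) - g k)) =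
    -((deBrangesWeight n (N + 1)).eval y + (chebyshevLaurent n (N + 1)).eval y) * g N := by
  induction N with
  | zero => simp [hg]
  | succ N ih =>
    rw [Finset.sum_range_succ, ih (by omega), deBrangesWeight_eq_add_succ (k := N + 1) (by omega)]
    simp only [Polynomial.eval_add]
    push_cast
    ring

-- Up to a telescoping sum, the drift is `-∑ σₖ |bₖ + bₖ₋₁ + 2|²` with `bₖ = E 1 + ⋯ + E k` and
-- nonnegative `σₖ`.
theorem deBrangesDrift_nonpos {y : ℝ} (h0 : 0 ≤ y) (h1 : y ≤ 1) (hE : E 0 = 1) :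
    deBrangesDrift n y E ≤ 0 := by
  set b : ℕ → ℂ := fun k => ∑ i ∈ Finset.range k, E (i + 1) with hb
  set g : ℕ → ℝ := fun k => 2 * ‖b k‖ ^ 2 + 4 * (b k).re with hg
  have hb_succ : ∀ k, b (k + 1) = b k + E (k + 1) := fun k => Finset.sum_range_succ _ _
  have hvel : ∀ k, loewnerVelocity E (k + 1) = 2 + (b k + E (k + 1)) + b k := by
    intro k
    rw [loewnerVelocity, Finset.sum_range_succ', hE]
    simp only [hb]
    ring
  have htel := sum_chebyshevLaurent_mul_add_sub_deBrangesWeight_mul_sub y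
    (show g 0 = 0 by simp [hg, hb]) (le_refl n)
  rw [deBrangesWeight_self_succ, chebyshevLaurent_self_succ, Polynomial.eval_zero, add_zero,
    neg_zero, zero_mul] at htel
  rw [deBrangesDrift, ← htel]
  refine Finset.sum_le_sum fun k _ => ?_
  have hσ := eval_chebyshevLaurent_nonneg n (k + 1) h0 h1
  have hsq := mul_nonneg hσ (sq_nonneg ‖b k + E (k + 1) + b k + 2‖)
  rw [hvel, two_mul_re_star_mul_add, sq_norm_sub_four_eq (b k)]
  simp only [hg, hb_succ]
  linarith

end DeBrangesFunctional

section TransitionExpansion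

open Asymptotics

/-- The `ℓ¹` norm of `E 0, …, E n`, in which the error of an elementary step is measured. -/
def coeffNorm (n : ℕ) (E : ℕ → ℂ) : ℝ := ∑ k ∈ Finset.range (n + 1), ‖E k‖

/-- The transformation law of the logarithmic coefficients under an elementary step, after the
rotation making its parameter `κ` equal to `1`. -/
def transition (m : ℝ) (E : ℕ → ℂ) (k : ℕ) : ℂ :=
  ∑ i ∈ Finset.range (k + 1), E i * transitionCoeff k i m

variable {α : Type*} {l : Filter α}

lemma isBigO_mul_sub_of_isBigO_sub {R : Type*} [NormedRing R] [NormedAlgebra ℝ R] {ε A B : α → ℝ}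
    {a a₁ a' b b₁ b' : α → R} (hε : ε =O[l] fun _ => (1 : ℝ))
    (ha : a =O[l] A) (ha₁ : a₁ =O[l] A)
    (ha' : (fun x => a' x - (a x + ε x • a₁ x)) =O[l] fun x => ε x ^ 2 * A x)
    (hb : b =O[l] B) (hb₁ : b₁ =O[l] B)
    (hb' : (fun x => b' x - (b x + ε x • b₁ x)) =O[l] fun x => ε x ^ 2 * B x) :
    (fun x => a' x * b' x - (a x * b x + ε x • (a x * b₁ x + a₁ x * b x)))
      =O[l] fun x => ε x ^ 2 * (A x * B x) := by
  have hε2 : (fun x => ε x ^ 2) =O[l] fun _ => (1 : ℝ) := by simpa using hε.pow 2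
  have hlinear {c c₁ : α → R} {C : α → ℝ} (hc : c =O[l] C) (hc₁ : c₁ =O[l] C) :
      (fun x => c x + ε x • c₁ x) =O[l] C :=
    hc.add (by simpa using hε.smul hc₁)
  have ha'_bdd : a' =O[l] A := by
    have := (ha'.trans (by simpa using hε2.mul (isBigO_refl A l))).add (hlinear ha ha₁)
    simpa using this
  have h₁ := ha'_bdd.mul hb'
  have h₂ := ha'.mul (hlinear hb hb₁)
  have h₃ := (isBigO_refl (fun x => ε x ^ 2) l).smul (ha₁.mul hb₁)
  refine (((h₁.congr_right fun x => ?_).add (h₂.congr_right fun x => ?_)).add h₃).congr_left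
    fun x => ?_
  · simp only [smul_eq_mul]
    ring
  · simp only [smul_eq_mul]
    ring
  · simp only [mul_sub, sub_mul, mul_add, add_mul, smul_mul_assoc, mul_smul_comm]
    module

lemma isBigO_sq_norm_sub_of_isBigO_sub {ε T : α → ℝ} {e v e' : α → ℂ}
    (hε : ε =O[l] fun _ => (1 : ℝ)) (he : e =O[l] T) (hv : v =O[l] T)
    (he' : (fun x => e' x - (e x + ε x • v x)) =O[l] fun x => ε x ^ 2 * T x) :
    (fun x => ‖e' x‖ ^ 2 - (‖e x‖ ^ 2 + ε x • (2 * (star (e x) * v x).re)))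
      =O[l] fun x => ε x ^ 2 * T x ^ 2 := by
  have hstar : (fun x => star (e' x) - (star (e x) + ε x • star (v x)))
      =O[l] fun x => ε x ^ 2 * T x := by
    refine (he'.norm_left.congr_left fun x => ?_).of_norm_left
    rw [← norm_star]
    simp
  have hstar_left {f : α → ℂ} (hf : f =O[l] T) : (fun x => star (f x)) =O[l] T :=
    (hf.norm_left.congr_left fun x => (norm_star _).symm).of_norm_left
  have h := isBigO_mul_sub_of_isBigO_sub hε (hstar_left he) (hstar_left hv) hstar he hv he'
  refine (Complex.isBigO_ofReal_left.1 (h.congr_left fun x => ?_)).congr_right fun x => by ring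
  have hsq (z : ℂ) : star z * z = ((‖z‖ ^ 2 : ℝ) : ℂ) := by
    simpa using Complex.conj_mul' z
  have hre : star (e x) * v x + star (v x) * e x = ((2 * (star (e x) * v x).re : ℝ) : ℂ) := by
    simpa [mul_comm] using Complex.add_conj (star (e x) * v x)
  rw [hsq, hsq, hre]
  push_cast
  simp

variable {m y : α → ℝ} {E : α → ℕ → ℂ} {T : α → ℝ} {n k : ℕ}

lemma isBigO_one_sub (hm : Tendsto m l (𝓟 (Icc (1 / 2) 1))) :
    (fun x => 1 - m x) =O[l] fun _ => (1 : ℝ) := by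
  refine IsBigO.of_bound 1 ((tendsto_principal.1 hm).mono fun x hx => ?_)
  rw [norm_one, Real.norm_of_nonneg (by linarith [hx.2])]
  linarith [hx.1]

lemma isBigO_eval (p : Polynomial ℝ) (hy : Tendsto y l (𝓟 (Icc 0 1))) :
    (fun x => p.eval (y x)) =O[l] fun _ => (1 : ℝ) :=
  (p.continuous.continuousOn.isBigO_principal isCompact_Icc (c := (1 : ℝ))
    (by simp)).comp_tendsto hy

lemma isBigO_eval_div_sub (p : Polynomial ℝ) (hm : Tendsto m l (𝓟 (Icc (1 / 2) 1)))
    (hy : Tendsto y l (𝓟 (Icc 0 1))) :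
    (fun x => p.eval (y x / m x) - (p.eval (y x) + (1 - m x) * (.X * p.derivative).eval (y x)))
      =O[l] fun x => (1 - m x) ^ 2 := by
  induction p using Polynomial.induction_on' with
  | add p q hp hq =>
    refine (hp.add hq).congr_left fun x => ?_
    simp only [Polynomial.derivative_add, mul_add, Polynomial.eval_add]
    ring
  | monomial k c =>
    have hpow := (isBigO_eval (.monomial k c) hy).mul ((isBigO_inv_pow_sub k).comp_tendsto hm)
    refine (hpow.congr_left fun x => ?_).trans (by simpa using isBigO_refl _ _)
    rcases k with _ | k
    · simp
    · simp
      ring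

lemma isBigO_loewnerVelocity (hE : ∀ i ≤ k, (fun x => E x i) =O[l] T) :
    (fun x => loewnerVelocity (E x) k) =O[l] T :=
  (hE k le_rfl).add
    ((IsBigO.fun_sum fun i hi => hE i (Finset.mem_range.1 hi).le).const_mul_left 2)

lemma isBigO_transition_sub (hm : Tendsto m l (𝓟 (Icc (1 / 2) 1)))
    (hE : ∀ i ≤ k, (fun x => E x i) =O[l] T) :
    (fun x => transition (m x) (E x) k -
      (E x k + (1 - m x) • -(k * loewnerVelocity (E x) k)))
      =O[l] fun x => (1 - m x) ^ 2 * T x := by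
  have hterm : ∀ i ∈ Finset.range (k + 1), (fun x => E x i * ((transitionCoeff k i (m x) -
      ((if i = k then 1 else 0) - (1 - m x) * (k * if i = k then 1 else 2)) : ℝ) : ℂ))
      =O[l] fun x => (1 - m x) ^ 2 * T x := by
    intro i hi
    have hik : i ≤ k := Finset.mem_range_succ_iff.1 hi
    exact ((hE i hik).mul (Complex.isBigO_ofReal_left.2
      ((isBigO_transitionCoeff hik).comp_tendsto hm))).congr_right fun x => mul_comm _ _
  refine (IsBigO.fun_sum hterm).congr_left fun x => ?_
  have haffine : E x k + (1 - m x) • -(k * loewnerVelocity (E x) k) =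
      ∑ i ∈ Finset.range (k + 1), E x i * (((if i = k then 1 else 0) -
        (1 - m x) * (k * if i = k then 1 else 2) : ℝ) : ℂ) := by
    have hlow : ∀ i ∈ Finset.range k, E x i * (((if i = k then 1 else 0) -
        (1 - m x) * (k * if i = k then 1 else 2) : ℝ) : ℂ) =
        E x i * -((1 - m x) * (k * 2)) := by
      intro i hi
      rw [if_neg (Finset.mem_range.1 hi).ne, if_neg (Finset.mem_range.1 hi).ne]
      push_cast
      ring
    rw [Finset.sum_range_succ, Finset.sum_congr rfl hlow, ← Finset.sum_mul, if_pos rfl, if_pos rfl,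
      loewnerVelocity, Complex.real_smul]
    push_cast
    ring
  rw [transition, haffine, ← Finset.sum_sub_distrib]
  exact Finset.sum_congr rfl fun i _ => by rw [Complex.ofReal_sub, mul_sub]

lemma isBigO_norm_transition_sub_norm (hm : Tendsto m l (𝓟 (Icc (1 / 2) 1)))
    (hE : ∀ i ≤ k, (fun x => E x i) =O[l] T) :
    (fun x => ‖transition (m x) (E x) k‖ - ‖E x k‖) =O[l] fun x => (1 - m x) * T x := by
  have hvel := (isBigO_refl (fun x => 1 - m x) l).smul
    ((isBigO_loewnerVelocity hE).const_mul_left (-k))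
  have hsq : (fun x => (1 - m x) ^ 2 * T x) =O[l] fun x => (1 - m x) * T x := by
    simpa [pow_two] using ((isBigO_one_sub hm).mul (isBigO_refl (fun x => 1 - m x) l)).mul
      (isBigO_refl T l)
  have hsub := ((isBigO_transition_sub hm hE).trans hsq).add hvel
  refine IsBigO.trans (IsBigO.of_norm_le fun x => abs_norm_sub_norm_le _ _)
    (hsub.congr_left fun x => ?_).norm_left
  rw [neg_mul, sub_add_eq_sub_sub, sub_add_cancel]

lemma isBigO_sq_norm_transition_sub (hm : Tendsto m l (𝓟 (Icc (1 / 2) 1)))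
    (hE : ∀ i ≤ k, (fun x => E x i) =O[l] T) :
    (fun x => ‖transition (m x) (E x) k‖ ^ 2 - (‖E x k‖ ^ 2 -
      (1 - m x) * (k * (2 * (star (E x k) * loewnerVelocity (E x) k).re))))
      =O[l] fun x => (1 - m x) ^ 2 * T x ^ 2 := by
  refine (isBigO_sq_norm_sub_of_isBigO_sub (isBigO_one_sub hm) (hE k le_rfl)
    ((isBigO_loewnerVelocity hE).const_mul_left k).neg_left
    (isBigO_transition_sub hm hE)).congr_left fun x => ?_
  rw [mul_neg, mul_left_comm, Complex.neg_re, ← Complex.ofReal_natCast, Complex.re_ofReal_mul,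
    smul_eq_mul]
  ring

lemma isBigO_deBrangesWeight_mul_sub (hm : Tendsto m l (𝓟 (Icc (1 / 2) 1)))
    (hy : Tendsto y l (𝓟 (Icc 0 1))) (hT : (fun _ => (1 : ℝ)) =O[l] T)
    (hE : ∀ i ≤ n, (fun x => E x i) =O[l] T) (hk : k + 1 ≤ n) :
    (fun x => (deBrangesWeight n (k + 1)).eval (y x / m x) *
        ((‖transition (m x) (E x) (k + 1)‖ ^ 2 - 4) / (k + 1)) -
      ((deBrangesWeight n (k + 1)).eval (y x) * ((‖E x (k + 1)‖ ^ 2 - 4) / (k + 1)) +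
        (1 - m x) * ((chebyshevLaurent n (k + 1)).eval (y x) * (‖E x (k + 1)‖ ^ 2 - 4) -
          (deBrangesWeight n (k + 1)).eval (y x) *
            (2 * (star (E x (k + 1)) * loewnerVelocity (E x) (k + 1)).re))))
      =O[l] fun x => (1 - m x) ^ 2 * T x ^ 2 := by
  have hEk : ∀ i ≤ k + 1, (fun x => E x i) =O[l] T := fun i hi => hE i (hi.trans hk)
  have hweight : (fun x => (deBrangesWeight n (k + 1)).eval (y x / m x) -
      ((deBrangesWeight n (k + 1)).eval (y x) +
        (1 - m x) • ((k + 1) * (chebyshevLaurent n (k + 1)).eval (y x))))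
      =O[l] fun x => (1 - m x) ^ 2 * 1 := by
    have h := isBigO_eval_div_sub (deBrangesWeight n (k + 1)) hm hy
    rw [X_mul_derivative_deBrangesWeight (by omega)] at h
    simpa using h
  have hE2 : (fun x => (‖E x (k + 1)‖ ^ 2 - 4) * (k + 1 : ℝ)⁻¹) =O[l] fun x => T x ^ 2 := by
    have hT2 : (fun _ => (4 : ℝ)) =O[l] fun x => T x ^ 2 := by
      simpa using (hT.pow 2).const_mul_left 4
    simpa [mul_comm] using
      (((hEk _ le_rfl).norm_left.pow 2).sub hT2).const_mul_left (k + 1 : ℝ)⁻¹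
  have hvel : (fun x => -(2 * (star (E x (k + 1)) * loewnerVelocity (E x) (k + 1)).re))
      =O[l] fun x => T x ^ 2 := by
    refine (IsBigO.const_mul_left ?_ 2).neg_left
    have h := (hEk _ le_rfl).norm_left.mul (isBigO_loewnerVelocity hEk).norm_left
    refine (IsBigO.of_norm_le fun x => ?_).trans (h.congr_right fun x => (pow_two _).symm)
    simpa using Complex.abs_re_le_norm (star (E x (k + 1)) * loewnerVelocity (E x) (k + 1))
  have hk0 : (k : ℝ) + 1 ≠ 0 := by positivity
  have hsq := (isBigO_sq_norm_transition_sub hm hEk).const_mul_left (k + 1 : ℝ)⁻¹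
  refine ((isBigO_mul_sub_of_isBigO_sub (isBigO_one_sub hm) (isBigO_eval _ hy)
    ((isBigO_eval _ hy).const_mul_left _) hweight hE2 hvel (b' := fun x =>
      (‖transition (m x) (E x) (k + 1)‖ ^ 2 - 4) * (k + 1 : ℝ)⁻¹)
    (hsq.congr_left fun x => ?_)).congr_left fun x => ?_).congr_right fun x => ?_
  · push_cast
    rw [smul_eq_mul]
    field_simp
    ring
  · rw [smul_eq_mul]
    field_simp
    ring
  · rw [one_mul]

lemma isBigO_deBrangesFunctional_transition_sub (hm : Tendsto m l (𝓟 (Icc (1 / 2) 1)))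
    (hy : Tendsto y l (𝓟 (Icc 0 1))) (hT : (fun _ => (1 : ℝ)) =O[l] T)
    (hE : ∀ i ≤ n, (fun x => E x i) =O[l] T) :
    (fun x => deBrangesFunctional n (y x / m x) (transition (m x) (E x)) -
      (deBrangesFunctional n (y x) (E x) + (1 - m x) * deBrangesDrift n (y x) (E x)))
      =O[l] fun x => (1 - m x) ^ 2 * T x ^ 2 := by
  refine (IsBigO.fun_sum fun k hk => isBigO_deBrangesWeight_mul_sub hm hy hT hE
    (Finset.mem_range.1 hk)).congr_left fun x => ?_
  rw [deBrangesFunctional, deBrangesFunctional, deBrangesDrift, Finset.mul_sum,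
    ← Finset.sum_add_distrib, ← Finset.sum_sub_distrib]

lemma norm_le_coeffNorm (E : ℕ → ℂ) (hk : k ≤ n) : ‖E k‖ ≤ coeffNorm n E :=
  Finset.single_le_sum (f := fun k => ‖E k‖) (fun _ _ => norm_nonneg _)
    (Finset.mem_range_succ_iff.2 hk)

lemma coeffNorm_nonneg (n : ℕ) (E : ℕ → ℂ) : 0 ≤ coeffNorm n E :=
  Finset.sum_nonneg fun _ _ => norm_nonneg _

theorem exists_deBrangesFunctional_transition_le (n : ℕ) : ∃ K : ℝ, 0 ≤ K ∧
    ∀ m ∈ Icc (1 / 2 : ℝ) 1, ∀ y ∈ Icc (0 : ℝ) 1, ∀ E : ℕ → ℂ, E 0 = 1 →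
      deBrangesFunctional n (y / m) (transition m E) ≤
        deBrangesFunctional n y E + K * (1 - m) ^ 2 * coeffNorm n E ^ 2 ∧
      coeffNorm n (transition m E) ≤ (1 + K * (1 - m)) * coeffNorm n E := by
  set S : Set (ℝ × ℝ × (ℕ → ℂ)) := {x | x.1 ∈ Icc (1 / 2) 1 ∧ x.2.1 ∈ Icc 0 1 ∧ x.2.2 0 = 1}
  have hm : Tendsto (fun x : ℝ × ℝ × (ℕ → ℂ) => x.1) (𝓟 S) (𝓟 (Icc (1 / 2) 1)) :=
    tendsto_principal_principal.2 fun x hx => hx.1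
  have hy : Tendsto (fun x : ℝ × ℝ × (ℕ → ℂ) => x.2.1) (𝓟 S) (𝓟 (Icc 0 1)) :=
    tendsto_principal_principal.2 fun x hx => hx.2.1
  have hE : ∀ i ≤ n, (fun x : ℝ × ℝ × (ℕ → ℂ) => x.2.2 i) =O[𝓟 S] fun x => coeffNorm n x.2.2 :=
    fun i hi => IsBigO.of_norm_le fun x => norm_le_coeffNorm _ hi
  have hT : (fun _ => (1 : ℝ)) =O[𝓟 S] fun x => coeffNorm n x.2.2 := by
    refine (hE 0 n.zero_le).norm_left.congr' (eventually_principal.2 fun x hx => ?_) .rfl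
    simp only [hx.2.2, norm_one]
  obtain ⟨K₁, hK₁, hbound₁⟩ :=
    (isBigO_deBrangesFunctional_transition_sub hm hy hT hE).exists_nonneg
  obtain ⟨K₂, _, hbound₂⟩ := (IsBigO.fun_sum fun k (hk : k ∈ Finset.range (n + 1)) =>
    isBigO_norm_transition_sub_norm hm fun i hi =>
      hE i (hi.trans (Finset.mem_range_succ_iff.1 hk))).exists_nonneg
  refine ⟨max K₁ K₂, le_max_of_le_left hK₁, fun m hm y hy E hE0 => ?_⟩
  have hε : 0 ≤ 1 - m := by linarith [hm.2]
  have hT0 := coeffNorm_nonneg n E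
  have h₁ := (le_abs_self _).trans
    (isBigOWith_principal.1 hbound₁ (m, y, E) ⟨hm, hy, hE0⟩)
  have h₂ := (le_abs_self _).trans
    (isBigOWith_principal.1 hbound₂ (m, y, E) ⟨hm, hy, hE0⟩)
  rw [Real.norm_of_nonneg (by positivity)] at h₁ h₂
  rw [Finset.sum_sub_distrib] at h₂
  have hdrift := mul_nonpos_of_nonneg_of_nonpos hε (deBrangesDrift_nonpos (n := n) hy.1 hy.2 hE0)
  have hK₁' := mul_le_mul_of_nonneg_right (le_max_left K₁ K₂)
    (show 0 ≤ (1 - m) ^ 2 * coeffNorm n E ^ 2 by positivity)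
  have hK₂' := mul_le_mul_of_nonneg_right (le_max_right K₁ K₂)
    (show 0 ≤ (1 - m) * coeffNorm n E by positivity)
  refine ⟨by linarith, ?_⟩
  change coeffNorm n (transition m E) - coeffNorm n E ≤ _ at h₂
  linarith

end TransitionExpansion

section LebedevMilin

variable {h D : ℕ → ℂ}

lemma sq_norm_succ_le_of_two_mul_eq_sum {n : ℕ}
    (hrec : 2 * ((n : ℂ) + 1) * h (n + 1) = ∑ k ∈ Finset.range (n + 1), D (k + 1) * h (n - k)) :
    ‖h (n + 1)‖ ^ 2 ≤ (∑ k ∈ Finset.range (n + 1), ‖D (k + 1)‖ ^ 2 / 4) / (n + 1) ^ 2 *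
      ∑ i ∈ Finset.range (n + 1), ‖h i‖ ^ 2 := by
  have hnorm : 2 * ((n : ℝ) + 1) * ‖h (n + 1)‖ ≤
      ∑ k ∈ Finset.range (n + 1), ‖D (k + 1)‖ * ‖h (n - k)‖ := by
    have hn : ‖2 * ((n : ℂ) + 1)‖ = 2 * (n + 1) := by
      rw [norm_mul, Complex.norm_two]
      exact_mod_cast congrArg ((2 : ℝ) * ·) (Complex.norm_natCast (n + 1))
    rw [← hn, ← norm_mul, hrec]
    exact (norm_sum_le _ _).trans_eq (Finset.sum_congr rfl fun k _ => norm_mul _ _)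
  have hreflect : ∑ k ∈ Finset.range (n + 1), ‖h (n - k)‖ ^ 2 =
      ∑ i ∈ Finset.range (n + 1), ‖h i‖ ^ 2 := by
    simpa using Finset.sum_range_reflect (fun k => ‖h k‖ ^ 2) (n + 1)
  have hCS := (pow_le_pow_left₀ (by positivity) hnorm 2).trans (Finset.sum_mul_sq_le_sq_mul_sq
    (Finset.range (n + 1)) (fun k => ‖D (k + 1)‖) fun k => ‖h (n - k)‖)
  rw [hreflect] at hCS
  rw [← Finset.sum_div, div_div, div_mul_eq_mul_div, le_div_iff₀ (by positivity)]
  linarith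

/-- The exponent in the Lebedev–Milin inequality. -/
def lebedevMilinExponent (D : ℕ → ℂ) (n : ℕ) : ℝ :=
  ∑ k ∈ Finset.range n, (‖D (k + 1)‖ ^ 2 / 4 - 1) * (1 / (k + 1) - 1 / (n + 1))

lemma lebedevMilinExponent_succ (D : ℕ → ℂ) (n : ℕ) : lebedevMilinExponent D (n + 1) =
    lebedevMilinExponent D n + (∑ k ∈ Finset.range (n + 1), ‖D (k + 1)‖ ^ 2 / 4 - (n + 1)) *
      (1 / (n + 1) - 1 / (n + 2)) := by
  have hcard : ∑ k ∈ Finset.range (n + 1), ‖D (k + 1)‖ ^ 2 / 4 - (n + 1 : ℝ) =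
      ∑ k ∈ Finset.range (n + 1), (‖D (k + 1)‖ ^ 2 / 4 - 1) := by
    simp [Finset.sum_sub_distrib]
  have hlast : lebedevMilinExponent D n = ∑ k ∈ Finset.range (n + 1),
      (‖D (k + 1)‖ ^ 2 / 4 - 1) * (1 / (k + 1) - 1 / (n + 1)) := by
    simp [lebedevMilinExponent, Finset.sum_range_succ]
  rw [hcard, hlast, Finset.sum_mul, ← Finset.sum_add_distrib, lebedevMilinExponent]
  refine Finset.sum_congr rfl fun k _ => ?_
  push_cast
  ring

theorem lebedev_milin (hrec : ∀ j : ℕ, 2 * ((j : ℂ) + 1) * h (j + 1) =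
    ∑ k ∈ Finset.range (j + 1), D (k + 1) * h (j - k)) (n : ℕ) :
    ∑ i ∈ Finset.range (n + 1), ‖h i‖ ^ 2 ≤
      ‖h 0‖ ^ 2 * (n + 1) * Real.exp (lebedevMilinExponent D n) := by
  induction n with
  | zero => simp [lebedevMilinExponent]
  | succ n ih =>
    set A := ∑ k ∈ Finset.range (n + 1), ‖D (k + 1)‖ ^ 2 / 4
    set B := ∑ i ∈ Finset.range (n + 1), ‖h i‖ ^ 2
    set s := (A - (n + 1)) * (1 / ((n : ℝ) + 1) - 1 / (n + 2)) with hs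
    have hexp : 1 + A / ((n : ℝ) + 1) ^ 2 ≤ (n + 2) / (n + 1) * Real.exp s := by
      calc 1 + A / ((n : ℝ) + 1) ^ 2 = (n + 2) / (n + 1) * (s + 1) := by
            rw [hs]
            field_simp
            ring
        _ ≤ _ := by gcongr; exact Real.add_one_le_exp s
    have : 0 ≤ A := by positivity
    calc ∑ i ∈ Finset.range (n + 2), ‖h i‖ ^ 2 ≤ B + A / (n + 1) ^ 2 * B := by
          rw [Finset.sum_range_succ]
          gcongr
          exact sq_norm_succ_le_of_two_mul_eq_sum (hrec n)
      _ = B * (1 + A / (n + 1) ^ 2) := by ring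
      _ ≤ ‖h 0‖ ^ 2 * (n + 1) * Real.exp (lebedevMilinExponent D n) *
            ((n + 2) / (n + 1) * Real.exp s) := by gcongr
      _ = ‖h 0‖ ^ 2 * ((n + 1 : ℕ) + 1) * Real.exp (lebedevMilinExponent D (n + 1)) := by
          rw [lebedevMilinExponent_succ, ← hs, Real.exp_add]
          push_cast
          field_simp
          ring

lemma lebedevMilinExponent_eq (D : ℕ → ℂ) (n : ℕ) :
    lebedevMilinExponent D n = deBrangesFunctional n 1 D / (4 * (n + 1)) := by
  rw [lebedevMilinExponent, deBrangesFunctional, Finset.sum_div]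
  refine Finset.sum_congr rfl fun k hk => ?_
  have hkn := Finset.mem_range.1 hk
  rw [eval_one_deBrangesWeight (by omega)]
  push_cast
  field_simp

lemma exists_analyticAt_sq_eq {u : ℂ → ℂ} {z₀ : ℂ} (hu : AnalyticAt ℂ u z₀)
    (h0 : u z₀ ∈ Complex.slitPlane) :
    ∃ h : ℂ → ℂ, AnalyticAt ℂ h z₀ ∧ ∀ᶠ z in 𝓝 z₀, h z ^ 2 = u z := by
  refine ⟨fun z => Complex.exp (Complex.log (u z) / 2),
    ((hu.clog h0).fun_div analyticAt_const two_ne_zero).cexp, ?_⟩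
  filter_upwards [hu.continuousAt.eventually_ne (Complex.slitPlane_ne_zero h0)] with z hz
  rw [← Complex.exp_nat_mul, Nat.cast_ofNat, mul_div_cancel₀ _ two_ne_zero, Complex.exp_log hz]

variable {h u : ℂ → ℂ}

lemma two_mul_deriv_eventuallyEq_of_sq_eq (hh : AnalyticAt ℂ h 0) (h0 : u 0 ≠ 0)
    (hsq : ∀ᶠ z in 𝓝 0, h z ^ 2 = u z) :
    (fun z => 2 * deriv h z) =ᶠ[𝓝 0] fun z => deriv u z / u z * h z := by
  have hsq' : (fun z => h z ^ 2) =ᶠ[𝓝 0] u := hsq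
  have hne : ∀ᶠ z in 𝓝 0, h z ≠ 0 := by
    refine hh.continuousAt.eventually_ne fun hzero => h0 ?_
    rw [← hsq.self_of_nhds, hzero, zero_pow two_ne_zero]
  filter_upwards [hsq'.eventuallyEq_nhds, hh.eventually_analyticAt, hne, hsq]
    with z hz hhz hhne hhsq
  rw [((hhz.differentiableAt.hasDerivAt.fun_pow 2).congr_of_eventuallyEq hz.symm).deriv, ← hhsq]
  field_simp
  push_cast
  ring

lemma two_mul_taylorCoeff_succ_of_sq_eq (hu : AnalyticAt ℂ u 0) (hh : AnalyticAt ℂ h 0)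
    (h0 : u 0 ≠ 0) (hsq : ∀ᶠ z in 𝓝 0, h z ^ 2 = u z) (j : ℕ) :
    2 * ((j : ℂ) + 1) * taylorCoeff h (j + 1) = ∑ k ∈ Finset.range (j + 1),
      taylorCoeff (radialLogDeriv u) (k + 1) * taylorCoeff h (j - k) := by
  have hlog := hu.deriv.fun_div hu h0
  rw [mul_assoc, ← taylorCoeff_deriv, ← taylorCoeff_const_mul 2 hh.deriv,
    taylorCoeff_congr (two_mul_deriv_eventuallyEq_of_sq_eq hh h0 hsq), taylorCoeff_mul hlog hh]
  exact Finset.sum_congr rfl fun k _ =>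
    congrArg (· * _) (taylorCoeff_succ_const_add_id_mul 1 hlog k).symm

lemma sum_sq_norm_taylorCoeff_le_of_sq_eq (hu : AnalyticAt ℂ u 0) (hh : AnalyticAt ℂ h 0)
    (h0 : u 0 ≠ 0) (hsq : ∀ᶠ z in 𝓝 0, h z ^ 2 = u z) (n : ℕ) :
    ∑ i ∈ Finset.range (n + 1), ‖taylorCoeff h i‖ ^ 2 ≤ ‖u 0‖ * (n + 1) *
      Real.exp (deBrangesFunctional n 1 (taylorCoeff (radialLogDeriv u)) / (4 * (n + 1))) := by
  have hLM := lebedev_milin (two_mul_taylorCoeff_succ_of_sq_eq hu hh h0 hsq) n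
  rwa [lebedevMilinExponent_eq, taylorCoeff_zero, ← norm_pow, hsq.self_of_nhds] at hLM

end LebedevMilin

section ElementaryComposition

/-- `z ↦ z * u z` is a composition of `j` elementary maps with the common parameter `m`. -/
inductive IsElementaryComposition (m : ℝ) : ℕ → (ℂ → ℂ) → Prop
  | one : IsElementaryComposition m 0 fun _ => 1
  | step {j : ℕ} {u : ℂ → ℂ} {κ : ℂ} (hu : IsElementaryComposition m j u) (hκ : ‖κ‖ = 1) :
      IsElementaryComposition m (j + 1) (elementaryStep κ m u)

variable {m : ℝ} {j : ℕ} {u : ℂ → ℂ}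

lemma IsElementaryComposition.analyticAt (hu : IsElementaryComposition m j u) :
    AnalyticAt ℂ u 0 := by
  induction hu with
  | one => exact analyticAt_const
  | step _ _ ih => exact analyticAt_elementaryStep ih

lemma IsElementaryComposition.apply_zero (hu : IsElementaryComposition m j u) :
    u 0 = ((m ^ j : ℝ) : ℂ) := by
  induction hu with
  | one => simp
  | step _ _ ih =>
    rw [elementaryStep_zero, ih, pow_succ']
    push_cast
    rfl

lemma IsElementaryComposition.apply_zero_ne_zero (hu : IsElementaryComposition m j u)
    (hm : m ≠ 0) : u 0 ≠ 0 := by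
  rw [hu.apply_zero]
  exact Complex.ofReal_ne_zero.2 (pow_ne_zero j hm)

lemma taylorCoeff_radialLogDeriv_zero (u : ℂ → ℂ) : taylorCoeff (radialLogDeriv u) 0 = 1 := by
  simp [taylorCoeff_zero, radialLogDeriv]

lemma taylorCoeff_radialLogDeriv_one_succ (k : ℕ) :
    taylorCoeff (radialLogDeriv fun _ => 1) (k + 1) = 0 := by
  have hone : radialLogDeriv (fun _ => 1) = fun _ => 1 := by
    funext z
    simp [radialLogDeriv]
  rw [hone, ← coeff_taylorSeries, taylorSeries_const, PowerSeries.coeff_C, if_neg k.succ_ne_zero]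

lemma coeffNorm_congr_norm {n : ℕ} {E E' : ℕ → ℂ} (h : ∀ k, ‖E k‖ = ‖E' k‖) :
    coeffNorm n E = coeffNorm n E' := by
  simp only [coeffNorm, h]

lemma deBrangesFunctional_congr_norm {n : ℕ} {y : ℝ} {E E' : ℕ → ℂ} (h : ∀ k, ‖E k‖ = ‖E' k‖) :
    deBrangesFunctional n y E = deBrangesFunctional n y E' := by
  simp only [deBrangesFunctional, h]

lemma inv_pow_mul_taylorCoeff_radialLogDeriv_elementaryStep {κ : ℂ} (hκ : κ ≠ 0) (hm : m ≠ 0)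
    (hu : AnalyticAt ℂ u 0) (h0 : u 0 ≠ 0) (k : ℕ) :
    (κ ^ k)⁻¹ * taylorCoeff (radialLogDeriv (elementaryStep κ m u)) k =
      transition m (fun i => (κ ^ i)⁻¹ * taylorCoeff (radialLogDeriv u) i) k := by
  rw [taylorCoeff_radialLogDeriv_elementaryStep κ hm hu h0, transition, Finset.mul_sum]
  refine Finset.sum_congr rfl fun i hi => ?_
  rw [← Nat.add_sub_cancel' (Finset.mem_range_succ_iff.1 hi), pow_add, Nat.add_sub_cancel_left]
  field_simp

lemma exists_deBrangesFunctional_elementaryStep_le (n : ℕ) : ∃ K : ℝ, 0 ≤ K ∧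
    ∀ m ∈ Icc (1 / 2 : ℝ) 1, ∀ κ : ℂ, ‖κ‖ = 1 → ∀ u : ℂ → ℂ, AnalyticAt ℂ u 0 → u 0 ≠ 0 →
      let E := taylorCoeff (radialLogDeriv u)
      let E' := taylorCoeff (radialLogDeriv (elementaryStep κ m u))
      (∀ y ∈ Icc (0 : ℝ) 1, deBrangesFunctional n (y / m) E' ≤
        deBrangesFunctional n y E + K * (1 - m) ^ 2 * coeffNorm n E ^ 2) ∧
      coeffNorm n E' ≤ (1 + K * (1 - m)) * coeffNorm n E := by
  obtain ⟨K, hK0, hK⟩ := exists_deBrangesFunctional_transition_le n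
  refine ⟨K, hK0, ?_⟩
  intro m hm κ hκ u hu h0 E E'
  have hm0 : m ≠ 0 := by linarith [hm.1]
  have hκ0 : κ ≠ 0 := norm_ne_zero_iff.1 (hκ ▸ one_ne_zero)
  set rotated : ℕ → ℂ := fun k => (κ ^ k)⁻¹ * E k
  have hE : ∀ k, ‖E k‖ = ‖rotated k‖ := fun k => by simp [rotated, hκ]
  have hE' : ∀ k, ‖E' k‖ = ‖transition m rotated k‖ := fun k => by
    rw [← inv_pow_mul_taylorCoeff_radialLogDeriv_elementaryStep hκ0 hm0 hu h0]
    simp [E', hκ]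
  have hzero : rotated 0 = 1 := by simp [rotated, E, taylorCoeff_radialLogDeriv_zero]
  rw [coeffNorm_congr_norm hE, coeffNorm_congr_norm hE']
  refine ⟨fun y hy => ?_, (hK m hm 0 (by simp) rotated hzero).2⟩
  rw [deBrangesFunctional_congr_norm hE, deBrangesFunctional_congr_norm hE']
  exact (hK m hm y hy rotated hzero).1

lemma deBrangesFunctional_radialLogDeriv_one_nonpos (n : ℕ) {y : ℝ} (hy : y ∈ Icc (0 : ℝ) 1) :
    deBrangesFunctional n y (taylorCoeff (radialLogDeriv fun _ => 1)) ≤ 0 := by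
  refine Finset.sum_nonpos fun k _ => mul_nonpos_of_nonneg_of_nonpos
    (eval_deBrangesWeight_nonneg n _ hy.1 hy.2) (div_nonpos_of_nonpos_of_nonneg ?_ (by positivity))
  rw [taylorCoeff_radialLogDeriv_one_succ]
  norm_num

lemma exists_deBrangesFunctional_le_of_isElementaryComposition (n : ℕ) : ∃ K : ℝ, 0 ≤ K ∧
    ∀ m ∈ Icc (1 / 2 : ℝ) 1, ∀ j u, IsElementaryComposition m j u →
      coeffNorm n (taylorCoeff (radialLogDeriv u)) ≤ (1 + K * (1 - m)) ^ j ∧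
      ∀ y ∈ Icc 0 (m ^ j), deBrangesFunctional n (y / m ^ j) (taylorCoeff (radialLogDeriv u)) ≤
        j * (K * (1 - m) ^ 2 * (1 + K * (1 - m)) ^ (2 * j)) := by
  obtain ⟨K, hK0, hK⟩ := exists_deBrangesFunctional_elementaryStep_le n
  refine ⟨K, hK0, fun m hm j u hu => ?_⟩
  have hm0 : 0 < m := by linarith [hm.1]
  have hε : 0 ≤ 1 - m := by linarith [hm.2]
  have hbase : 1 ≤ 1 + K * (1 - m) := le_add_of_nonneg_right (by positivity)
  induction hu with
  | one =>
    constructor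
    · rw [coeffNorm, Finset.sum_range_succ', taylorCoeff_radialLogDeriv_zero]
      simp [taylorCoeff_radialLogDeriv_one_succ]
    · intro y hy
      simpa using deBrangesFunctional_radialLogDeriv_one_nonpos n (by simpa using hy)
  | @step j u κ hu hκ ih =>
    obtain ⟨hfunctional, hnorm⟩ := hK m hm κ hκ u hu.analyticAt (hu.apply_zero_ne_zero hm0.ne')
    constructor
    · rw [pow_succ']
      exact hnorm.trans (by gcongr; exact ih.1)
    · intro y hy
      have hmj : 0 < m ^ j := by positivity
      have hy' : y ≤ m ^ j := hy.2.trans (pow_le_pow_of_le_one hm0.le hm.2 j.le_succ)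
      have hprev := ih.2 y ⟨hy.1, hy'⟩
      have hstep := hfunctional (y / m ^ j)
        ⟨div_nonneg hy.1 hmj.le, (div_le_one hmj).2 hy'⟩
      rw [div_div, ← pow_succ] at hstep
      have hsq : coeffNorm n (taylorCoeff (radialLogDeriv u)) ^ 2 ≤
          (1 + K * (1 - m)) ^ (2 * (j + 1)) := by
        refine (pow_le_pow_left₀ (coeffNorm_nonneg _ _) ih.1 2).trans ?_
        rw [← pow_mul, mul_comm j 2]
        exact pow_le_pow_right₀ hbase (by omega)
      calc _ ≤ j * (K * (1 - m) ^ 2 * (1 + K * (1 - m)) ^ (2 * j)) + K * (1 - m) ^ 2 *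
              coeffNorm n (taylorCoeff (radialLogDeriv u)) ^ 2 :=
            hstep.trans (by gcongr)
        _ ≤ j * (K * (1 - m) ^ 2 * (1 + K * (1 - m)) ^ (2 * (j + 1))) +
              K * (1 - m) ^ 2 * (1 + K * (1 - m)) ^ (2 * (j + 1)) := by
            gcongr
            exact j.le_succ
        _ = _ := by
            push_cast
            ring

theorem exists_sqrt_sum_sq_norm_taylorCoeff_le (n : ℕ) : ∃ K : ℝ, 0 ≤ K ∧
    ∀ m ∈ Icc (1 / 2 : ℝ) 1, ∀ j u, IsElementaryComposition m j u →
      ∃ h : ℂ → ℂ, AnalyticAt ℂ h 0 ∧ (∀ᶠ z in 𝓝 0, h z ^ 2 = u z) ∧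
        ∑ i ∈ Finset.range (n + 1), ‖taylorCoeff h i‖ ^ 2 ≤ m ^ j * (n + 1) *
          Real.exp (j * (K * (1 - m) ^ 2 * (1 + K * (1 - m)) ^ (2 * j))) := by
  obtain ⟨K, hK0, hK⟩ := exists_deBrangesFunctional_le_of_isElementaryComposition n
  refine ⟨K, hK0, fun m hm j u hu => ?_⟩
  have hm0 : 0 < m := by linarith [hm.1]
  have hε : 0 ≤ 1 - m := by linarith [hm.2]
  have hmj : 0 < m ^ j := by positivity
  obtain ⟨h, hh, hsq⟩ := exists_analyticAt_sq_eq hu.analyticAt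
    (by rw [hu.apply_zero]; exact Complex.ofReal_mem_slitPlane.2 hmj)
  refine ⟨h, hh, hsq, ?_⟩
  have hLM := sum_sq_norm_taylorCoeff_le_of_sq_eq hu.analyticAt hh
    (hu.apply_zero_ne_zero hm0.ne') hsq n
  rw [hu.apply_zero, Complex.norm_real, Real.norm_of_nonneg hmj.le] at hLM
  have hfunctional := (hK m hm j u hu).2 (m ^ j) ⟨hmj.le, le_rfl⟩
  rw [div_self hmj.ne'] at hfunctional
  refine hLM.trans ?_
  gcongr
  exact (div_le_div_of_nonneg_right hfunctional (by positivity)).trans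
    (div_le_self (by positivity) (by linarith [n.cast_nonneg (α := ℝ)]))

end ElementaryComposition

section UnivalentFunctions

variable {f φ : ℂ → ℂ} {U : Set ℂ} {c z : ℂ} {R s : ℝ}

lemma exists_hasDerivAt_eq_mul_exp (hf : DifferentiableOn ℂ f (ball c R))
    (hf0 : ∀ z ∈ ball c R, f z ≠ 0) :
    ∃ L : ℂ → ℂ, L c = 0 ∧ (∀ z ∈ ball c R, HasDerivAt L (deriv f z / f z) z) ∧
      ∀ z ∈ ball c R, f z = f c * Complex.exp (L z) := by
  obtain ⟨L, hLc, hL⟩ :=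
    ((hf.deriv isOpen_ball).fun_div hf hf0).isExactOn_ball.with_val_at c 0
  refine ⟨L, hLc, hL, fun z hz => ?_⟩
  have hasDerivAt_zero : ∀ z ∈ ball c R, HasDerivAt (fun z => f z * Complex.exp (-L z)) 0 z := by
    intro z hz
    have hfz := (hf.differentiableAt (isOpen_ball.mem_nhds hz)).hasDerivAt
    refine (hfz.fun_mul (hL z hz).fun_neg.cexp).congr_deriv ?_
    field [hf0 z hz]
  have hconst := isOpen_ball.is_const_of_deriv_eq_zero (convex_ball c R).isPreconnected
    (fun z hz => (hasDerivAt_zero z hz).differentiableAt.differentiableWithinAt)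
    (fun z hz => (hasDerivAt_zero z hz).deriv) hz
    (mem_ball_self (dist_nonneg.trans_lt (mem_ball.1 hz)))
  rw [hLc, neg_zero, Complex.exp_zero, mul_one] at hconst
  rw [← hconst, mul_assoc, ← Complex.exp_add, neg_add_cancel, Complex.exp_zero, mul_one]

lemma exists_differentiableOn_sq_eq (hf : DifferentiableOn ℂ f (ball c R))
    (hf0 : ∀ z ∈ ball c R, f z ≠ 0) {a : ℂ} (ha : f c = a ^ 2) :
    ∃ h : ℂ → ℂ, DifferentiableOn ℂ h (ball c R) ∧ h c = a ∧ ∀ z ∈ ball c R, h z ^ 2 = f z := by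
  obtain ⟨L, hLc, hL, hfL⟩ := exists_hasDerivAt_eq_mul_exp hf hf0
  refine ⟨fun z => a * Complex.exp (L z / 2), fun z hz => ?_, by simp [hLc], fun z hz => ?_⟩
  · exact (((hL z hz).differentiableAt.div_const 2).cexp.const_mul a).differentiableWithinAt
  · rw [mul_pow, ← Complex.exp_nat_mul, hfL z hz, ha, Nat.cast_ofNat, mul_div_cancel₀ _ two_ne_zero]

lemma _root_.IsBiholoOn.of_leftInverse {E₁ E₂ : Type*} [NormedAddCommGroup E₁] [NormedSpace ℂ E₁]
    [NormedAddCommGroup E₂] [NormedSpace ℂ E₂] {f : E₁ → E₂} {g : E₂ → E₁} {s : Set E₁}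
    (hf : DifferentiableOn ℂ f s) (hg : DifferentiableOn ℂ g (f '' s))
    (hgf : ∀ x ∈ s, g (f x) = x) : IsBiholoOn f s :=
  ⟨hf, fun x hx y hy hxy => by rw [← hgf x hx, hxy, hgf y hy], g, hg, hgf⟩

lemma _root_.IsBiholoOn.isOpen_image (hφ : IsBiholoOn φ U) (hU : IsOpen U) : IsOpen (φ '' U) := by
  refine isOpen_iff_mem_nhds.2 ?_
  rintro _ ⟨z, hz, rfl⟩
  have hUz := hU.mem_nhds hz
  rcases (hφ.1.analyticAt hUz).eventually_constant_or_nhds_le_map_nhds with hconst | hmap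
  · have hsub : ∀ᶠ w in 𝓝 z, w = z := by
      filter_upwards [hconst, hUz] with w hw hwU using hφ.2.1 hwU hz hw
    obtain ⟨w, hwz, hne⟩ := ((hsub.filter_mono nhdsWithin_le_nhds).and
      (self_mem_nhdsWithin : {z}ᶜ ∈ 𝓝[≠] z)).exists
    exact absurd hwz hne
  · exact hmap (image_mem_map hUz)

lemma _root_.IsBiholoOn.exists_hasDerivAt_inverse (hφ : IsBiholoOn φ U) (hU : IsOpen U) :
    ∃ g : ℂ → ℂ, ∀ z ∈ U, g (φ z) = z ∧ HasDerivAt g (deriv φ z)⁻¹ (φ z) ∧ deriv φ z ≠ 0 := by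
  have himage := hφ.isOpen_image hU
  obtain ⟨hd, -, g, hg, hgφ⟩ := hφ
  refine ⟨g, fun z hz => ⟨hgφ z hz, ?_⟩⟩
  have hgz := (hg.differentiableAt (himage.mem_nhds (mem_image_of_mem φ hz))).hasDerivAt
  have hφz := (hd.differentiableAt (hU.mem_nhds hz)).hasDerivAt
  have hid : HasDerivAt (g ∘ φ) 1 z :=
    (hasDerivAt_id z).congr_of_eventuallyEq (eventually_of_mem (hU.mem_nhds hz) hgφ)
  have hmul : deriv g (φ z) * deriv φ z = 1 := (hgz.comp z hφz).unique hid
  exact ⟨eq_inv_of_mul_eq_one_left hmul ▸ hgz, right_ne_zero_of_mul_eq_one hmul⟩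

lemma _root_.IsBiholoOn.deriv_ne_zero (hφ : IsBiholoOn φ U) (hU : IsOpen U) (hz : z ∈ U) :
    deriv φ z ≠ 0 := by
  obtain ⟨g, hg⟩ := hφ.exists_hasDerivAt_inverse hU
  exact (hg z hz).2.2

/- If `w` were omitted, then `log (φ - w)` composed with `φ⁻¹` would be a primitive of
`(ζ - w)⁻¹` along the circle, whose integral is `2πi`. -/
lemma _root_.IsBiholoOn.ball_subset_image_of_sphere_subset (hφ : IsBiholoOn φ (ball z R))
    (hsphere : sphere c s ⊆ φ '' ball z R) : ball c s ⊆ φ '' ball z R := by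
  intro w hw
  by_contra hwφ
  have hs : 0 ≤ s := (dist_nonneg.trans_lt (mem_ball.1 hw)).le
  obtain ⟨g, hg⟩ := hφ.exists_hasDerivAt_inverse isOpen_ball
  have hne : ∀ ζ ∈ ball z R, φ ζ - w ≠ 0 := fun ζ hζ h => hwφ ⟨ζ, hζ, sub_eq_zero.1 h⟩
  obtain ⟨L, -, hL, -⟩ := exists_hasDerivAt_eq_mul_exp (hφ.1.sub_const w) hne
  have hzero : (∮ ζ in C(c, s), (ζ - w)⁻¹) = 0 := by
    refine circleIntegral.integral_eq_zero_of_hasDerivWithinAt' (f := L ∘ g) fun η hη => ?_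
    rw [abs_of_nonneg hs] at hη
    obtain ⟨ζ, hζ, rfl⟩ := hsphere hη
    obtain ⟨hgζ, hgd, hφ0⟩ := hg ζ hζ
    have hLζ := hL ζ hζ
    rw [deriv_sub_const] at hLζ
    refine ((hLζ.comp_of_eq (φ ζ) hgd hgζ.symm).congr_deriv ?_).hasDerivWithinAt
    field
  rw [circleIntegral.integral_sub_inv_of_mem_ball hw] at hzero
  exact Complex.two_pi_I_ne_zero hzero

lemma _root_.IsBiholoOn.le_mul_norm_deriv_of_ball_subset_image (hφ : IsBiholoOn φ (ball z R))
    (hR : 0 < R) (hs : 0 < s) (hball : ball (φ z) s ⊆ φ '' ball z R) : s ≤ R * ‖deriv φ z‖ := by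
  have hz : z ∈ ball z R := mem_ball_self hR
  obtain ⟨g, hg⟩ := hφ.exists_hasDerivAt_inverse isOpen_ball
  have hderiv : ‖deriv g (φ z)‖ ≤ R / s := by
    refine Complex.norm_deriv_le_div_of_mapsTo_ball (fun w hw => ?_) (fun w hw => ?_) hs
    · obtain ⟨ζ, hζ, rfl⟩ := hball hw
      exact (hg ζ hζ).2.1.differentiableAt.differentiableWithinAt
    · obtain ⟨ζ, hζ, rfl⟩ := hball hw
      rw [(hg ζ hζ).1, (hg z hz).1]
      exact ball_subset_closedBall hζ
  obtain ⟨-, hgd, hφ0⟩ := hg z hz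
  rw [hgd.deriv, norm_inv, le_div_iff₀ hs, inv_mul_le_iff₀ (norm_pos_iff.2 hφ0)] at hderiv
  rwa [mul_comm]

lemma IsSchwarz.norm_deriv_zero_le_one {ω : ℂ → ℂ} (hω : IsSchwarz ω) : ‖deriv ω 0‖ ≤ 1 := by
  have hmaps : MapsTo ω (ball 0 1) (closedBall (ω 0) 1) := by
    rw [hω.map_zero]
    exact hω.mapsTo.mono_right ball_subset_closedBall
  simpa using Complex.norm_deriv_le_div_of_mapsTo_ball hω.differentiableOn hmaps one_pos

end UnivalentFunctions

section KoebeOsculation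

variable {κ : ℂ} {a m : ℝ} {z : ℂ}

lemma one_sub_mul_mul_ne_zero (hκ : ‖κ‖ = 1) (hm : |m| < 1) (hz : ‖z‖ < 1) :
    1 - m * κ * z ≠ 0 := by
  refine sub_ne_zero.2 fun h => ?_
  have hnorm : 1 = |m| * ‖z‖ := by simpa [hκ] using congrArg norm h
  exact hnorm.not_gt (mul_lt_one_of_nonneg_of_lt_one_left (abs_nonneg m) hm hz.le)

lemma norm_blaschkeFactor_lt_one (hκ : ‖κ‖ = 1) (hm : |m| < 1) (hz : ‖z‖ < 1) :
    ‖blaschkeFactor κ m z‖ < 1 := by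
  rw [blaschkeFactor, ← div_eq_mul_inv, norm_div,
    div_lt_one (norm_pos_iff.2 (one_sub_mul_mul_ne_zero hκ hm hz))]
  refine lt_of_pow_lt_pow_left₀ 2 (norm_nonneg _) (sub_pos.1 ?_)
  calc 0 < (1 - m ^ 2) * (1 - ‖κ * z‖ ^ 2) := by
        rw [norm_mul, hκ, one_mul]
        exact mul_pos (sub_pos.2 ((sq_lt_one_iff_abs_lt_one m).2 hm))
          (sub_pos.2 (pow_lt_one₀ (norm_nonneg z) hz two_ne_zero))
    _ = ‖1 - m * κ * z‖ ^ 2 - ‖m - κ * z‖ ^ 2 := by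
        rw [mul_assoc]
        simp only [← Complex.normSq_eq_norm_sq, Complex.normSq_apply, Complex.sub_re,
          Complex.sub_im, Complex.one_re, Complex.one_im, Complex.re_ofReal_mul,
          Complex.im_ofReal_mul, Complex.ofReal_re, Complex.ofReal_im]
        ring

lemma differentiableAt_blaschkeFactor (hκ : ‖κ‖ = 1) (hm : |m| < 1) (hz : ‖z‖ < 1) :
    DifferentiableAt ℂ (blaschkeFactor κ m) z := by
  have hne := one_sub_mul_mul_ne_zero hκ hm hz
  unfold blaschkeFactor
  fun_prop (disch := assumption)

lemma differentiableAt_elementaryMap (hκ : ‖κ‖ = 1) (hm : |m| < 1) (hz : ‖z‖ < 1) :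
    DifferentiableAt ℂ (elementaryMap κ m) z :=
  differentiableAt_fun_id.fun_mul (differentiableAt_blaschkeFactor hκ hm hz)

lemma norm_elementaryMap_lt_one (hκ : ‖κ‖ = 1) (hm : |m| < 1) (hz : ‖z‖ < 1) :
    ‖elementaryMap κ m z‖ < 1 := by
  rw [elementaryMap, norm_mul]
  exact mul_lt_one_of_nonneg_of_lt_one_left (norm_nonneg z) hz
    (norm_blaschkeFactor_lt_one hκ hm hz).le

lemma blaschkeFactor_one_blaschkeFactor (hκ : ‖κ‖ = 1) (hm : |m| < 1) (hz : ‖z‖ < 1) :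
    blaschkeFactor 1 m (blaschkeFactor κ m z) = κ * z := by
  have hne := one_sub_mul_mul_ne_zero hκ hm hz
  have hsq : (1 : ℂ) - m ^ 2 ≠ 0 :=
    mod_cast (sub_pos.2 ((sq_lt_one_iff_abs_lt_one m).2 hm)).ne'
  have hnum : m - blaschkeFactor κ m z = κ * z * ((1 - m ^ 2) / (1 - m * κ * z)) := by
    rw [blaschkeFactor]
    field
  have hden : 1 - m * blaschkeFactor κ m z = (1 - m ^ 2) / (1 - m * κ * z) := by
    rw [blaschkeFactor]
    field
  rw [blaschkeFactor, one_mul, mul_one, hnum, hden,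
    mul_inv_cancel_right₀ (div_ne_zero hsq hne)]

lemma blaschkeFactor_inv_mul_blaschkeFactor_one (hκ : ‖κ‖ = 1) (hm : |m| < 1) (hz : ‖z‖ < 1) :
    blaschkeFactor κ m (κ⁻¹ * blaschkeFactor 1 m z) = z := by
  have hκ0 : κ ≠ 0 := norm_ne_zero_iff.1 (hκ ▸ one_ne_zero)
  calc blaschkeFactor κ m (κ⁻¹ * blaschkeFactor 1 m z)
      = blaschkeFactor 1 m (blaschkeFactor 1 m z) := by
        simp only [blaschkeFactor, mul_assoc, mul_inv_cancel_left₀ hκ0, one_mul]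
    _ = z := by rw [blaschkeFactor_one_blaschkeFactor norm_one hm hz, one_mul]

lemma blaschkeFactor_injOn (hκ : ‖κ‖ = 1) (hm : |m| < 1) :
    InjOn (blaschkeFactor κ m) (ball 0 1) := by
  intro z hz w hw h
  have hκ0 : κ ≠ 0 := norm_ne_zero_iff.1 (hκ ▸ one_ne_zero)
  refine mul_left_cancel₀ hκ0 ?_
  rw [← blaschkeFactor_one_blaschkeFactor hκ hm (mem_ball_zero_iff.1 hz), h,
    blaschkeFactor_one_blaschkeFactor hκ hm (mem_ball_zero_iff.1 hw)]

lemma two_mul_div_one_add_sq_mem_Ioo (ha : a ∈ Ioo 0 1) : 2 * a / (1 + a ^ 2) ∈ Ioo 0 1 := by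
  obtain ⟨ha0, ha1⟩ := ha
  refine ⟨by positivity, (div_lt_one (by positivity)).2 ?_⟩
  linarith [sq_pos_of_pos (sub_pos.2 ha1), sub_sq (1 : ℝ) a]

lemma abs_lt_one_of_mem_Ioo (ha : a ∈ Ioo 0 1) : |a| < 1 :=
  abs_lt.2 ⟨by linarith [ha.1], ha.2⟩

lemma blaschkeFactor_sq_elementaryMap (hκ : ‖κ‖ = 1) (ha : a ∈ Ioo 0 1)
    (hm : m = 2 * a / (1 + a ^ 2)) (hz : ‖z‖ < 1) :
    blaschkeFactor κ (a ^ 2) (elementaryMap κ m z) = blaschkeFactor κ a z ^ 2 := by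
  have hne : (1 : ℂ) - m * κ * z ≠ 0 := one_sub_mul_mul_ne_zero hκ
    (abs_lt_one_of_mem_Ioo (hm ▸ two_mul_div_one_add_sq_mem_Ioo ha)) hz
  have hmul : (m : ℂ) * (1 + a ^ 2) = 2 * a := by
    rw [hm]
    push_cast
    exact div_mul_cancel₀ _ (mod_cast (by positivity : (1 + a ^ 2 : ℝ) ≠ 0))
  have hinv := inv_mul_cancel₀ hne
  have hnum : (a ^ 2 : ℂ) - κ * elementaryMap κ m z = (a - κ * z) ^ 2 / (1 - m * κ * z) := by
    rw [elementaryMap, blaschkeFactor, eq_div_iff hne]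
    linear_combination -(κ * z) * hmul - κ * z * (m - κ * z) * hinv
  have hden : 1 - a ^ 2 * κ * elementaryMap κ m z = (1 - a * κ * z) ^ 2 / (1 - m * κ * z) := by
    rw [elementaryMap, blaschkeFactor, eq_div_iff hne]
    linear_combination -(κ * z) * hmul - a ^ 2 * κ * z * (m - κ * z) * hinv
  rw [blaschkeFactor, Complex.ofReal_pow, hnum, hden, inv_div, div_mul_div_cancel₀ hne,
    blaschkeFactor, mul_pow, inv_pow, div_eq_mul_inv]

variable {v w : ℂ → ℂ}

lemma IsSchwarz.exists_blaschkeFactor_eq_sq (hv : IsSchwarz v) (ha : a ∈ Ioo 0 1) {c : ℂ}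
    (hc : ‖c‖ = a ^ 2) (hcv : c ∉ v '' ball 0 1) :
    ∃ (κ : ℂ) (w : ℂ → ℂ), ‖κ‖ = 1 ∧ IsSchwarz w ∧
      ∀ z ∈ ball (0 : ℂ) 1, blaschkeFactor κ (a ^ 2) (v z) = blaschkeFactor κ a (w z) ^ 2 := by
  have ha1 := abs_lt_one_of_mem_Ioo ha
  have ha2 : |a ^ 2| < 1 := (abs_sq a).trans_lt (pow_lt_one₀ ha.1.le ha.2 two_ne_zero)
  have hc0 : c ≠ 0 := norm_pos_iff.1 (hc ▸ pow_pos ha.1 2)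
  obtain ⟨κ, hκ, hκc⟩ : ∃ κ : ℂ, ‖κ‖ = 1 ∧ κ * c = (a ^ 2 : ℝ) := by
    refine ⟨(a ^ 2 : ℝ) / c, ?_, div_mul_cancel₀ _ hc0⟩
    rw [norm_div, hc, Complex.norm_real, Real.norm_eq_abs, abs_sq,
      div_self (pow_pos ha.1 2).ne']
  have hκ0 : κ ≠ 0 := norm_ne_zero_iff.1 (hκ ▸ one_ne_zero)
  have hvz {z : ℂ} (hz : z ∈ ball (0 : ℂ) 1) : ‖v z‖ < 1 := mem_ball_zero_iff.1 (hv.mapsTo hz)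
  have hne : ∀ z ∈ ball (0 : ℂ) 1, blaschkeFactor κ (a ^ 2) (v z) ≠ 0 := by
    intro z hz
    refine mul_ne_zero (fun h => hcv ⟨z, hz, mul_left_cancel₀ hκ0 ?_⟩)
      (inv_ne_zero (one_sub_mul_mul_ne_zero hκ ha2 (hvz hz)))
    rw [hκc, sub_eq_zero.1 h]
  have hdiff : DifferentiableOn ℂ (fun z => blaschkeFactor κ (a ^ 2) (v z)) (ball 0 1) :=
    fun z hz => (differentiableAt_blaschkeFactor hκ ha2 (hvz hz)).comp_differentiableWithinAt z
      (hv.differentiableOn z hz)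
  obtain ⟨h, hh, hh0, hsq⟩ := exists_differentiableOn_sq_eq hdiff hne (a := a)
    (by rw [hv.map_zero, blaschkeFactor_zero, Complex.ofReal_pow])
  have hhz : ∀ z ∈ ball (0 : ℂ) 1, ‖h z‖ < 1 := by
    intro z hz
    refine (pow_lt_one_iff_of_nonneg (norm_nonneg _) two_ne_zero).1 ?_
    rw [← norm_pow, hsq z hz]
    exact norm_blaschkeFactor_lt_one hκ ha2 (hvz hz)
  refine ⟨κ, fun z => κ⁻¹ * blaschkeFactor 1 a (h z), hκ, ⟨fun z hz => ?_, fun z hz => ?_, ?_⟩,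
    fun z hz => ?_⟩
  · exact ((differentiableAt_blaschkeFactor norm_one ha1 (hhz z hz)).comp_differentiableWithinAt z
      (hh z hz)).const_mul _
  · rw [mem_ball_zero_iff, norm_mul, norm_inv, hκ, inv_one, one_mul]
    exact norm_blaschkeFactor_lt_one norm_one ha1 (hhz z hz)
  · rw [hh0, blaschkeFactor, one_mul, sub_self, zero_mul, mul_zero]
  · rw [blaschkeFactor_inv_mul_blaschkeFactor_one hκ ha1 (hhz z hz), hsq z hz]

lemma IsSchwarz.exists_eq_elementaryMap (hv : IsSchwarz v) (ha : a ∈ Ioo 0 1)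
    (hm : m = 2 * a / (1 + a ^ 2)) {c : ℂ} (hc : ‖c‖ = a ^ 2) (hcv : c ∉ v '' ball 0 1) :
    ∃ (κ : ℂ) (w : ℂ → ℂ), ‖κ‖ = 1 ∧ IsSchwarz w ∧
      ∀ z ∈ ball (0 : ℂ) 1, v z = elementaryMap κ m (w z) := by
  obtain ⟨κ, w, hκ, hw, hvw⟩ := hv.exists_blaschkeFactor_eq_sq ha hc hcv
  refine ⟨κ, w, hκ, hw, fun z hz => ?_⟩
  have hwz : ‖w z‖ < 1 := mem_ball_zero_iff.1 (hw.mapsTo hz)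
  have hm1 : |m| < 1 := abs_lt_one_of_mem_Ioo (hm ▸ two_mul_div_one_add_sq_mem_Ioo ha)
  have ha2 : |a ^ 2| < 1 := (abs_sq a).trans_lt (pow_lt_one₀ ha.1.le ha.2 two_ne_zero)
  refine blaschkeFactor_injOn hκ ha2 (hv.mapsTo hz)
    (mem_ball_zero_iff.2 (norm_elementaryMap_lt_one hκ hm1 hwz)) ?_
  rw [hvw z hz, blaschkeFactor_sq_elementaryMap hκ ha hm hwz]

lemma IsSchwarz.isBiholoOn_of_eq_elementaryMap (hw : IsSchwarz w) (hκ : ‖κ‖ = 1) (hm : |m| < 1)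
    (hv : IsBiholoOn v (ball 0 1)) (hvw : ∀ z ∈ ball (0 : ℂ) 1, v z = elementaryMap κ m (w z)) :
    IsBiholoOn w (ball 0 1) := by
  obtain ⟨-, -, g, hg, hgv⟩ := hv
  refine .of_leftInverse (g := fun ζ => g (elementaryMap κ m ζ)) hw.differentiableOn
    (hg.fun_comp ?_ ?_) fun z hz => ?_
  · rintro _ ⟨z, hz, rfl⟩
    exact (differentiableAt_elementaryMap hκ hm
      (mem_ball_zero_iff.1 (hw.mapsTo hz))).differentiableWithinAt
  · rintro _ ⟨z, hz, rfl⟩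
    exact ⟨z, hz, hvw z hz⟩
  · rw [← hvw z hz, hgv z hz]

lemma IsSchwarz.deriv_eq_of_eq_elementaryMap (hw : IsSchwarz w)
    (hvw : ∀ z ∈ ball (0 : ℂ) 1, v z = elementaryMap κ m (w z)) :
    deriv v 0 = m * deriv w 0 := by
  have helem : HasDerivAt (elementaryMap κ m) (m : ℂ) 0 := by
    simpa [blaschkeFactor_zero] using
      hasDerivAt_elementaryMap (analyticAt_blaschkeFactor (κ := κ) (m := m))
  exact ((helem.comp_of_eq 0 hw.analyticAt.differentiableAt.hasDerivAt
    hw.map_zero.symm).congr_of_eventuallyEq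
      (eventually_of_mem (ball_mem_nhds 0 one_pos) hvw)).deriv

/-- The state of Koebe's osculation procedure after `j` steps applied to `v`: `v = p ∘ w` near
the origin, where `p z = z * u z` is a composition of `j` elementary maps. -/
structure IsOsculation (m : ℝ) (v : ℂ → ℂ) (j : ℕ) (u w : ℂ → ℂ) : Prop where
  isElementaryComposition : IsElementaryComposition m j u
  isSchwarz : IsSchwarz w
  isBiholoOn : IsBiholoOn w (ball 0 1)
  eventually_eq : ∀ᶠ z in 𝓝 0, v z = w z * u (w z)
  norm_deriv : ‖deriv v 0‖ = m ^ j * ‖deriv w 0‖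

namespace IsOsculation

variable {j : ℕ} {u : ℂ → ℂ}

lemma refl (m : ℝ) (hv : IsSchwarz v) (hvb : IsBiholoOn v (ball 0 1)) :
    IsOsculation m v 0 (fun _ => 1) v where
  isElementaryComposition := .one
  isSchwarz := hv
  isBiholoOn := hvb
  eventually_eq := .of_forall fun _ => (mul_one _).symm
  norm_deriv := by rw [pow_zero, one_mul]

lemma norm_deriv_le_pow (h : IsOsculation m v j u w) (hm : 0 ≤ m) : ‖deriv v 0‖ ≤ m ^ j :=
  h.norm_deriv.trans_le
    (mul_le_of_le_one_right (pow_nonneg hm j) h.isSchwarz.norm_deriv_zero_le_one)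

lemma pow_mul_le_norm_deriv (h : IsOsculation m v j u w) (hm : 0 ≤ m) {s : ℝ} (hs : 0 < s)
    (hsphere : sphere 0 s ⊆ w '' ball 0 1) : m ^ j * s ≤ ‖deriv v 0‖ := by
  have hball := h.isBiholoOn.ball_subset_image_of_sphere_subset hsphere
  have hle := h.isBiholoOn.le_mul_norm_deriv_of_ball_subset_image one_pos hs
    (by rwa [h.isSchwarz.map_zero])
  rw [h.norm_deriv]
  exact mul_le_mul_of_nonneg_left (hle.trans_eq (one_mul _)) (pow_nonneg hm j)

lemma exists_succ (h : IsOsculation m v j u w) (ha : a ∈ Ioo 0 1)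
    (hm : m = 2 * a / (1 + a ^ 2)) (hsphere : ¬ sphere 0 (a ^ 2) ⊆ w '' ball 0 1) :
    ∃ u' w', IsOsculation m v (j + 1) u' w' := by
  obtain ⟨c, hc, hcw⟩ := not_subset.1 hsphere
  obtain ⟨κ, w', hκ, hw', hww'⟩ :=
    h.isSchwarz.exists_eq_elementaryMap ha hm (mem_sphere_zero_iff_norm.1 hc) hcw
  have hm01 : m ∈ Ioo 0 1 := hm ▸ two_mul_div_one_add_sq_mem_Ioo ha
  refine ⟨elementaryStep κ m u, w', h.isElementaryComposition.step hκ, hw',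
    hw'.isBiholoOn_of_eq_elementaryMap hκ (abs_lt_one_of_mem_Ioo hm01) h.isBiholoOn hww', ?_, ?_⟩
  · filter_upwards [h.eventually_eq, ball_mem_nhds 0 one_pos] with z hz hz1
    rw [hz, hww' z hz1, elementaryStep, elementaryMap, mul_assoc]
  · rw [h.norm_deriv, hw'.deriv_eq_of_eq_elementaryMap hww', norm_mul, Complex.norm_real,
      Real.norm_of_nonneg hm01.1.le, pow_succ, mul_assoc]

end IsOsculation

theorem exists_isOsculation (hv : IsSchwarz v) (hvb : IsBiholoOn v (ball 0 1))
    (ha : a ∈ Ioo 0 1) (hm : m = 2 * a / (1 + a ^ 2)) :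
    ∃ j u w, IsOsculation m v j u w ∧ m ^ j * a ^ 2 ≤ ‖deriv v 0‖ := by
  have hm01 : m ∈ Ioo 0 1 := hm ▸ two_mul_div_one_add_sq_mem_Ioo ha
  by_contra! hstuck
  have hexists : ∀ j, ∃ u w, IsOsculation m v j u w := by
    intro j
    induction j with
    | zero => exact ⟨_, _, .refl m hv hvb⟩
    | succ j ih =>
      obtain ⟨u, w, h⟩ := ih
      refine h.exists_succ ha hm fun hsphere => (hstuck j u w h).not_ge ?_
      exact h.pow_mul_le_norm_deriv hm01.1.le (pow_pos ha.1 2) hsphere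
  have hpos : 0 < ‖deriv v 0‖ :=
    norm_pos_iff.2 (hvb.deriv_ne_zero isOpen_ball (mem_ball_self one_pos))
  obtain ⟨j, hj⟩ := exists_pow_lt_of_lt_one hpos hm01.2
  obtain ⟨u, w, h⟩ := hexists j
  exact (h.norm_deriv_le_pow hm01.1.le).not_gt hj

end KoebeOsculation

section Rogosinski

variable {φ v ω : ℂ → ℂ} {α a m K : ℝ} {j : ℕ}

lemma natCast_mul_one_sub_le_neg_log (hm : 0 < m) (hα : 0 < α) (h : α ≤ m ^ j) :
    j * (1 - m) ≤ -Real.log α := by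
  have hlog : Real.log α ≤ j * Real.log m := Real.log_pow m j ▸ Real.log_le_log hα h
  have hle : j * Real.log m ≤ j * (m - 1) :=
    mul_le_mul_of_nonneg_left (Real.log_le_sub_one_of_pos hm) j.cast_nonneg
  linarith

lemma natCast_mul_le_one_sub_mul (hK : 0 ≤ K) (hm : 0 < m) (hm1 : m ≤ 1) (hα : 0 < α)
    (h : α ≤ m ^ j) :
    j * (K * (1 - m) ^ 2 * (1 + K * (1 - m)) ^ (2 * j)) ≤
      (1 - m) * (-Real.log α * K * Real.exp (2 * K * -Real.log α)) := by
  have hlog := natCast_mul_one_sub_le_neg_log hm hα h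
  have hε : 0 ≤ 1 - m := sub_nonneg.2 hm1
  have hα1 : 0 ≤ -Real.log α := (mul_nonneg j.cast_nonneg hε).trans hlog
  have hpow : (1 + K * (1 - m)) ^ (2 * j) ≤ Real.exp (2 * K * -Real.log α) := by
    calc (1 + K * (1 - m)) ^ (2 * j) ≤ Real.exp (K * (1 - m)) ^ (2 * j) := by
          gcongr
          linarith [Real.add_one_le_exp (K * (1 - m))]
      _ = Real.exp (2 * K * (j * (1 - m))) := by
          rw [← Real.exp_nat_mul]
          push_cast
          ring_nf
      _ ≤ _ := by gcongr
  calc j * (K * (1 - m) ^ 2 * (1 + K * (1 - m)) ^ (2 * j))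
      = (1 - m) * (j * (1 - m) * K * (1 + K * (1 - m)) ^ (2 * j)) := by ring
    _ ≤ _ := by gcongr

/- After `j` osculation steps `m ^ j ≤ |v'(0)| / a ^ 2`, while the accumulated discretization
error is `O(j (1 - m) ^ 2) = O(1 - m)` because `j (1 - m)` is at most `-log |v'(0)|`. -/
lemma IsSchwarz.exists_norm_taylorCoeff_comp_le (hv : IsSchwarz v)
    (hvb : IsBiholoOn v (ball 0 1)) (hω : IsSchwarz ω) (n : ℕ) :
    ∃ C : ℝ, ∀ a ∈ Ioo (1 / 2 : ℝ) 1, ‖taylorCoeff (fun z => v (ω z)) (n + 1)‖ ≤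
      ‖deriv v 0‖ / a ^ 2 * (n + 1) * Real.exp ((1 - 2 * a / (1 + a ^ 2)) * C) := by
  obtain ⟨K, hK0, hK⟩ := exists_sqrt_sum_sq_norm_taylorCoeff_le n
  have hα : 0 < ‖deriv v 0‖ :=
    norm_pos_iff.2 (hvb.deriv_ne_zero isOpen_ball (mem_ball_self one_pos))
  refine ⟨-Real.log ‖deriv v 0‖ * K * Real.exp (2 * K * -Real.log ‖deriv v 0‖), fun a ha => ?_⟩
  have ha0 : 0 < a := one_half_pos.trans ha.1
  obtain ⟨j, u, w, hosc, hpow⟩ := exists_isOsculation hv hvb ⟨ha0, ha.2⟩ rfl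
  have hm : 2 * a / (1 + a ^ 2) ∈ Ioo 0 1 := two_mul_div_one_add_sq_mem_Ioo ⟨ha0, ha.2⟩
  have hm_half : 1 / 2 ≤ 2 * a / (1 + a ^ 2) := by
    rw [le_div_iff₀ (by positivity)]
    nlinarith [ha.1, ha.2]
  set m := 2 * a / (1 + a ^ 2)
  obtain ⟨h, hh, hsq, hbound⟩ := hK m ⟨hm_half, hm.2.le⟩ j u hosc.isElementaryComposition
  have hwω := hosc.isSchwarz.comp hω
  have heq : (fun z => v (ω z)) =ᶠ[𝓝 0] fun z => w (ω z) * h (w (ω z)) ^ 2 := by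
    have hω0 := hω.analyticAt.continuousAt.tendsto
    have hwω0 := hwω.analyticAt.continuousAt.tendsto
    rw [hω.map_zero] at hω0
    rw [hwω.map_zero] at hwω0
    filter_upwards [hω0.eventually hosc.eventually_eq, hwω0.eventually hsq] with z hz hz'
    rw [hz, hz']
  rw [taylorCoeff_congr heq]
  refine (hwω.norm_taylorCoeff_mul_sq_comp_le hh n).trans (hbound.trans ?_)
  gcongr ?_ * _ * Real.exp ?_
  · exact (le_div_iff₀ (pow_pos ha0 2)).2 hpow
  · exact natCast_mul_le_one_sub_mul hK0 hm.1 hm.2.le hα (hosc.norm_deriv_le_pow hm.1.le)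

lemma IsSchwarz.norm_taylorCoeff_comp_le (hv : IsSchwarz v) (hvb : IsBiholoOn v (ball 0 1))
    (hω : IsSchwarz ω) (n : ℕ) :
    ‖taylorCoeff (fun z => v (ω z)) (n + 1)‖ ≤ (n + 1) * ‖deriv v 0‖ := by
  obtain ⟨C, hC⟩ := hv.exists_norm_taylorCoeff_comp_le hvb hω n
  have hlim : Tendsto
      (fun a : ℝ => ‖deriv v 0‖ / a ^ 2 * (n + 1) * Real.exp ((1 - 2 * a / (1 + a ^ 2)) * C))
      (𝓝[<] 1) (𝓝 ((n + 1) * ‖deriv v 0‖)) := by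
    have hcont : ContinuousAt (fun a : ℝ =>
        ‖deriv v 0‖ / a ^ 2 * (n + 1) * Real.exp ((1 - 2 * a / (1 + a ^ 2)) * C)) 1 := by
      fun_prop (disch := norm_num)
    convert hcont.tendsto.mono_left nhdsWithin_le_nhds using 2
    norm_num
    ring
  exact ge_of_tendsto hlim (eventually_of_mem (Ioo_mem_nhdsLT one_half_lt_one) hC)

lemma taylorCoeff_comp_const_mul {f : ℂ → ℂ} (hf : AnalyticAt ℂ f 0) (c : ℂ) (k : ℕ) :
    taylorCoeff (fun z => f (c * z)) k = c ^ k * taylorCoeff f k := by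
  have hpow (i : ℕ) : taylorCoeff (fun z => 1 * (c * z) ^ i) k = if k = i then c ^ i else 0 := by
    simp only [mul_pow, one_mul]
    rw [taylorCoeff_const_mul _ (by fun_prop), ← coeff_taylorSeries,
      taylorSeries_pow analyticAt_fun_id, taylorSeries_id, PowerSeries.coeff_X_pow, mul_ite,
      mul_one, mul_zero]
  have hcomp := taylorCoeff_mul_comp (q := fun _ => 1) (p := fun z => c * z) analyticAt_const hf
    (by fun_prop) (mul_zero c) k.lt_succ_self
  simp only [one_mul] at hcomp hpow
  simp only [hcomp, hpow, mul_ite, mul_zero]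
  rw [Finset.sum_ite_eq, if_pos (Finset.self_mem_range_succ k), mul_comm]

lemma _root_.IsBiholoOn.mono {E₁ E₂ : Type*} [NormedAddCommGroup E₁] [NormedSpace ℂ E₁]
    [NormedAddCommGroup E₂] [NormedSpace ℂ E₂] {f : E₁ → E₂} {s t : Set E₁}
    (hf : IsBiholoOn f t) (hst : s ⊆ t) : IsBiholoOn f s := by
  obtain ⟨hd, -, g, hg, hgf⟩ := hf
  exact .of_leftInverse (hd.mono hst) (hg.mono (image_mono hst)) fun x hx => hgf x (hst hx)

lemma _root_.IsBiholoOn.comp {E₁ E₂ E₃ : Type*} [NormedAddCommGroup E₁] [NormedSpace ℂ E₁]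
    [NormedAddCommGroup E₂] [NormedSpace ℂ E₂] [NormedAddCommGroup E₃] [NormedSpace ℂ E₃]
    {f : E₂ → E₃} {g : E₁ → E₂} {s : Set E₁} (hf : IsBiholoOn f (g '' s)) (hg : IsBiholoOn g s) :
    IsBiholoOn (fun x => f (g x)) s := by
  obtain ⟨hfd, -, f', hf', hff'⟩ := hf
  obtain ⟨hgd, -, g', hg', hgg'⟩ := hg
  refine .of_leftInverse (g := fun y => g' (f' y)) (hfd.fun_comp hgd (mapsTo_image g s)) ?_ ?_
  · rw [image_image] at hf'
    refine hg'.fun_comp hf' ?_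
    rintro _ ⟨x, hx, rfl⟩
    rw [hff' _ (mem_image_of_mem g hx)]
    exact mem_image_of_mem g hx
  · intro x hx
    rw [hff' _ (mem_image_of_mem g hx), hgg' x hx]

lemma isBiholoOn_const_mul {c : ℂ} (hc : c ≠ 0) (s : Set ℂ) : IsBiholoOn (fun z => c * z) s :=
  .of_leftInverse (g := fun z => c⁻¹ * z) (by fun_prop) (by fun_prop)
    fun z _ => inv_mul_cancel_left₀ hc z

lemma mapsTo_const_mul_ball {ρ : ℝ} (hρ : ρ ∈ Ioo (0 : ℝ) 1) :
    MapsTo (fun z : ℂ => ρ * z) (ball 0 1) (ball 0 ρ) := by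
  intro z hz
  rw [mem_ball_zero_iff, norm_mul, Complex.norm_real, Real.norm_of_nonneg hρ.1.le]
  exact mul_lt_of_lt_one_right hρ.1 (mem_ball_zero_iff.1 hz)

lemma _root_.IsBiholoOn.exists_isSchwarz_dilation (hφ : IsBiholoOn φ (ball 0 1)) (h0 : φ 0 = 0)
    {ρ : ℝ} (hρ : ρ ∈ Ioo (0 : ℝ) 1) :
    ∃ c : ℂ, c ≠ 0 ∧ IsSchwarz (fun z => c * φ (ρ * z)) ∧
      IsBiholoOn (fun z => c * φ (ρ * z)) (ball 0 1) := by
  obtain ⟨M, hM⟩ := (isCompact_closedBall (0 : ℂ) ρ).exists_bound_of_continuousOn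
    (hφ.1.continuousOn.mono (closedBall_subset_ball hρ.2))
  have hM1 : 0 < M + 1 := by
    linarith [(norm_nonneg _).trans (hM 0 (mem_closedBall_self hρ.1.le))]
  have hc : ((M + 1 : ℝ) : ℂ)⁻¹ ≠ 0 := inv_ne_zero (Complex.ofReal_ne_zero.2 hM1.ne')
  have hbiholo : IsBiholoOn (fun z => ((M + 1 : ℝ) : ℂ)⁻¹ * φ (ρ * z)) (ball 0 1) :=
    (isBiholoOn_const_mul hc _).comp ((hφ.mono ((mapsTo_const_mul_ball hρ).mono_right
      (ball_subset_ball hρ.2.le)).image_subset).comp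
        (isBiholoOn_const_mul (Complex.ofReal_ne_zero.2 hρ.1.ne') _))
  refine ⟨_, hc, ⟨hbiholo.1, fun z hz => ?_, by rw [mul_zero, h0, mul_zero]⟩, hbiholo⟩
  rw [mem_ball_zero_iff, norm_mul, norm_inv, Complex.norm_real, Real.norm_of_nonneg hM1.le,
    inv_mul_lt_iff₀ hM1, mul_one]
  exact (hM _ (ball_subset_closedBall (mapsTo_const_mul_ball hρ hz))).trans_lt (lt_add_one M)

lemma IsSchwarz.dilation (hω : IsSchwarz ω) {ρ : ℝ} (hρ : ρ ∈ Ioo (0 : ℝ) 1) :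
    IsSchwarz fun z => (ρ : ℂ)⁻¹ * ω (ρ * z) := by
  have hmaps := (mapsTo_const_mul_ball hρ).mono_right (ball_subset_ball hρ.2.le)
  refine ⟨(hω.differentiableOn.fun_comp (by fun_prop) hmaps).const_mul _, fun z hz => ?_,
    by rw [mul_zero, hω.map_zero, mul_zero]⟩
  have hle := Complex.norm_le_norm_of_mapsTo_ball hω.differentiableOn
    (hω.mapsTo.mono_right ball_subset_closedBall) hω.map_zero (mem_ball_zero_iff.1 (hmaps hz))
  rw [mem_ball_zero_iff, norm_mul, norm_inv, Complex.norm_real, Real.norm_of_nonneg hρ.1.le,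
    inv_mul_lt_iff₀ hρ.1, mul_one]
  exact hle.trans_lt (mem_ball_zero_iff.1 (mapsTo_const_mul_ball hρ hz))

lemma _root_.IsBiholoOn.pow_mul_norm_taylorCoeff_comp_le (hφ : IsBiholoOn φ (ball 0 1))
    (h0 : φ 0 = 0) (hω : IsSchwarz ω) (n : ℕ) {ρ : ℝ} (hρ : ρ ∈ Ioo (0 : ℝ) 1) :
    ρ ^ (n + 1) * ‖taylorCoeff (fun z => φ (ω z)) (n + 1)‖ ≤ (n + 1) * (ρ * ‖deriv φ 0‖) := by
  obtain ⟨c, hc, hv, hvb⟩ := hφ.exists_isSchwarz_dilation h0 hρ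
  have hρ0 : (ρ : ℂ) ≠ 0 := Complex.ofReal_ne_zero.2 hρ.1.ne'
  have hφ0 := analyticAt_zero_of_differentiableOn_ball hφ.1
  have hφω : AnalyticAt ℂ (fun z => φ (ω z)) 0 := hφ0.fun_comp_of_eq hω.analyticAt hω.map_zero
  have hdil {f : ℂ → ℂ} (hf : AnalyticAt ℂ f 0) : AnalyticAt ℂ (fun z => f (ρ * z)) 0 :=
    hf.fun_comp_of_eq (by fun_prop) (mul_zero _)
  have hle := hv.norm_taylorCoeff_comp_le hvb (hω.dilation hρ) n
  simp only [mul_inv_cancel_left₀ hρ0] at hle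
  rw [← taylorCoeff_one, taylorCoeff_const_mul c (hdil hφω), taylorCoeff_const_mul c (hdil hφ0),
    taylorCoeff_comp_const_mul hφω, taylorCoeff_comp_const_mul hφ0, taylorCoeff_one, pow_one,
    norm_mul, norm_mul, norm_mul, norm_mul, norm_pow, Complex.norm_real,
    Real.norm_of_nonneg hρ.1.le, mul_left_comm _ ‖c‖] at hle
  exact le_of_mul_le_mul_left hle (norm_pos_iff.2 hc)

/- Dilating by `ρ < 1` makes `φ` bounded, so that a multiple of it is a Schwarz function. -/
theorem _root_.IsBiholoOn.norm_taylorCoeff_comp_le (hφ : IsBiholoOn φ (ball 0 1)) (h0 : φ 0 = 0)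
    (hω : IsSchwarz ω) (n : ℕ) :
    ‖taylorCoeff (fun z => φ (ω z)) (n + 1)‖ ≤ (n + 1) * ‖deriv φ 0‖ := by
  set t := ‖taylorCoeff (fun z => φ (ω z)) (n + 1)‖
  have hleft : Tendsto (fun ρ : ℝ => ρ ^ (n + 1) * t) (𝓝[<] 1) (𝓝 (1 ^ (n + 1) * t)) :=
    (Continuous.tendsto (by fun_prop) 1).mono_left nhdsWithin_le_nhds
  have hright : Tendsto (fun ρ : ℝ => (n + 1) * (ρ * ‖deriv φ 0‖)) (𝓝[<] 1)
      (𝓝 ((n + 1) * (1 * ‖deriv φ 0‖))) :=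
    (Continuous.tendsto (by fun_prop) 1).mono_left nhdsWithin_le_nhds
  simpa using le_of_tendsto_of_tendsto hleft hright (eventually_of_mem (Ioo_mem_nhdsLT one_pos)
    fun ρ hρ => hφ.pow_mul_norm_taylorCoeff_comp_le h0 hω n hρ)

end Rogosinski

section KoebeQuarter

variable {φ : ℂ → ℂ} {w : ℂ}

lemma isSchwarz_id : IsSchwarz fun z => z := ⟨differentiableOn_id, mapsTo_id _, rfl⟩

lemma one_sub_inv_mul_ne_zero {ζ : ℂ} (hw : w ≠ 0) (h : ζ ≠ w) : 1 - w⁻¹ * ζ ≠ 0 := fun h0 =>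
  h (by linear_combination (-w) * h0 - ζ * mul_inv_cancel₀ hw)

lemma isBiholoOn_div_one_sub_inv_mul {s : Set ℂ} (hw : w ≠ 0) (hs : w ∉ s) :
    IsBiholoOn (fun ζ => ζ / (1 - w⁻¹ * ζ)) s := by
  have hne {ζ : ℂ} (hζ : ζ ∈ s) : 1 - w⁻¹ * ζ ≠ 0 :=
    one_sub_inv_mul_ne_zero hw (ne_of_mem_of_not_mem hζ hs)
  have hinv {ζ : ℂ} (hζ : ζ ∈ s) : 1 + w⁻¹ * (ζ / (1 - w⁻¹ * ζ)) = (1 - w⁻¹ * ζ)⁻¹ := by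
    refine eq_inv_of_mul_eq_one_left ?_
    rw [add_mul, mul_assoc, div_mul_cancel₀ _ (hne hζ), one_mul, sub_add_cancel]
  refine .of_leftInverse (g := fun ζ => ζ / (1 + w⁻¹ * ζ))
    (.fun_div (by fun_prop) (by fun_prop) fun ζ => hne) (.fun_div (by fun_prop) (by fun_prop) ?_)
    fun ζ hζ => ?_
  · rintro _ ⟨ζ, hζ, rfl⟩
    exact hinv hζ ▸ inv_ne_zero (hne hζ)
  · rw [hinv hζ, div_inv_eq_mul, div_mul_cancel₀ _ (hne hζ)]

lemma taylorCoeff_two_sub_eq {ψ : ℂ → ℂ} (hψ : AnalyticAt ℂ ψ 0) (hφ : AnalyticAt ℂ φ 0)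
    (h0 : φ 0 = 0) (h : φ =ᶠ[𝓝 0] fun z => ψ z * (1 - w * φ z)) :
    deriv ψ 0 = deriv φ 0 ∧ taylorCoeff ψ 2 - taylorCoeff φ 2 = w * deriv φ 0 ^ 2 := by
  have hψ0 : ψ 0 = 0 := by simpa [h0] using h.self_of_nhds.symm
  have hd : AnalyticAt ℂ (fun z => 1 - w * φ z) 0 := by fun_prop
  have hderiv : deriv (fun z => 1 - w * φ z) 0 = -(w * deriv φ 0) := by
    rw [deriv_const_sub, deriv_const_mul_field]
  have h1 := (taylorCoeff_congr h 1).trans (taylorCoeff_mul hψ hd 1)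
  have h2 := (taylorCoeff_congr h 2).trans (taylorCoeff_mul hψ hd 2)
  simp only [Finset.sum_range_succ, Finset.sum_range_zero, taylorCoeff_zero, taylorCoeff_one, hψ0,
    h0, hderiv, Nat.sub_self, Nat.reduceSub, mul_zero, zero_mul, sub_zero, mul_one, zero_add]
    at h1 h2
  refine ⟨h1.symm, ?_⟩
  rw [h2, ← h1]
  ring

/- The second coefficients of `φ` and of `φ / (1 - φ / w)`, both at most `2 |φ'(0)|`, differ by
`φ'(0) ^ 2 / w`. -/
theorem _root_.IsBiholoOn.norm_deriv_le_four_mul_norm (hφ : IsBiholoOn φ (ball 0 1)) (h0 : φ 0 = 0)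
    (hw : w ∉ φ '' ball 0 1) : ‖deriv φ 0‖ ≤ 4 * ‖w‖ := by
  have h0mem : (0 : ℂ) ∈ ball 0 1 := mem_ball_self one_pos
  have hw0 : w ≠ 0 := by
    rintro rfl
    exact hw ⟨0, h0mem, h0⟩
  have hψ : IsBiholoOn (fun z => φ z / (1 - w⁻¹ * φ z)) (ball 0 1) :=
    (isBiholoOn_div_one_sub_inv_mul hw0 hw).comp hφ
  have hφψ : φ =ᶠ[𝓝 0] fun z => φ z / (1 - w⁻¹ * φ z) * (1 - w⁻¹ * φ z) := by
    filter_upwards [ball_mem_nhds 0 one_pos] with z hz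
    exact (div_mul_cancel₀ _ (one_sub_inv_mul_ne_zero hw0 fun h => hw ⟨z, hz, h⟩)).symm
  obtain ⟨hderiv, hcoeff⟩ := taylorCoeff_two_sub_eq
    (analyticAt_zero_of_differentiableOn_ball hψ.1)
    (analyticAt_zero_of_differentiableOn_ball hφ.1) h0 hφψ
  have hφ2 := hφ.norm_taylorCoeff_comp_le h0 isSchwarz_id 1
  have hψ2 := hψ.norm_taylorCoeff_comp_le (by simp only [h0, zero_div]) isSchwarz_id 1
  rw [hderiv] at hψ2
  norm_num at hφ2 hψ2
  have hpos := norm_pos_iff.2 (hφ.deriv_ne_zero isOpen_ball h0mem)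
  have hsq : ‖deriv φ 0‖ * ‖deriv φ 0‖ ≤ 4 * ‖w‖ * ‖deriv φ 0‖ := by
    calc ‖deriv φ 0‖ * ‖deriv φ 0‖
        = ‖w‖ * ‖taylorCoeff (fun z => φ z / (1 - w⁻¹ * φ z)) 2 - taylorCoeff φ 2‖ := by
          rw [hcoeff, ← norm_mul, ← norm_mul, mul_inv_cancel_left₀ hw0, sq]
      _ ≤ ‖w‖ * (2 * ‖deriv φ 0‖ + 2 * ‖deriv φ 0‖) := by
          gcongr
          exact (norm_sub_le _ _).trans (add_le_add hψ2 hφ2)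
      _ = _ := by ring
  exact le_of_mul_le_mul_right hsq hpos

end KoebeQuarter

section NormedSpaceHolomorphy

lemma add_mem_ball_of_add_norm_le {E : Type*} [SeminormedAddCommGroup E] {c y k : E} {r R : ℝ}
    (hy : y ∈ ball c r) (hk : r + ‖k‖ ≤ R) :
    y + k ∈ ball c R := by
  have htri := dist_triangle (y + k) y c
  rw [dist_self_add_left] at htri
  rw [mem_ball] at *
  linarith

variable {E Y : Type*} [NormedAddCommGroup E] [NormedSpace ℂ E] [NormedAddCommGroup Y]
  [NormedSpace ℂ Y] {H : E → Y} {s : Set E} {c x y k : E} {R M : ℝ}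

/-- `H` is holomorphic on `ball c R` and bounded there by `M`. The explicit radius and bound make
the Cauchy estimates for the directional derivatives of `H` uniform in the direction. -/
structure IsBoundedHolomorphic (H : E → Y) (c : E) (R M : ℝ) : Prop where
  differentiableOn : DifferentiableOn ℂ H (ball c R)
  norm_le : ∀ y ∈ ball c R, ‖H y‖ ≤ M
  radius_pos : 0 < R

namespace IsBoundedHolomorphic

lemma bound_nonneg (h : IsBoundedHolomorphic H c R M) : 0 ≤ M :=
  (norm_nonneg _).trans (h.norm_le c (mem_ball_self h.radius_pos))

lemma differentiableAt (h : IsBoundedHolomorphic H c R M) (hy : y ∈ ball c R) :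
    DifferentiableAt ℂ H y :=
  h.differentiableOn.differentiableAt (isOpen_ball.mem_nhds hy)

lemma norm_fderiv_le (h : IsBoundedHolomorphic H c R M) (hy : y ∈ ball c (R / 2)) :
    ‖fderiv ℂ H y‖ ≤ 4 * M / R := by
  have hR := h.radius_pos
  have hsub : ball y (R / 2) ⊆ ball c R := ball_subset_ball' (by linarith [mem_ball.1 hy])
  have hmaps : MapsTo H (ball y (R / 2)) (closedBall (H y) (2 * M)) := fun z hz => by
    rw [mem_closedBall, dist_eq_norm, two_mul]
    exact (norm_sub_le _ _).trans (add_le_add (h.norm_le z (hsub hz))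
      (h.norm_le y (hsub (mem_ball_self (half_pos hR)))))
  refine (Complex.norm_fderiv_le_div_of_mapsTo_ball (h.differentiableOn.mono hsub) hmaps
    (half_pos hR)).trans_eq ?_
  ring

lemma norm_sub_le (h : IsBoundedHolomorphic H c R M) (hx : x ∈ ball c (R / 2))
    (hy : y ∈ ball c (R / 2)) : ‖H y - H x‖ ≤ 4 * M / R * ‖y - x‖ :=
  (convex_ball c (R / 2)).norm_image_sub_le_of_norm_fderiv_le
    (fun _ hz => h.differentiableAt (ball_subset_ball (half_le_self h.radius_pos.le) hz))
    (fun _ hz => h.norm_fderiv_le hz) hx hy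

lemma sub_translate (h : IsBoundedHolomorphic H c R M) (hk : ‖k‖ < R / 4) :
    IsBoundedHolomorphic (fun z => H (z + k) - H z) c (R / 4) (4 * M / R * ‖k‖) := by
  have hR := h.radius_pos
  have hsub {r : ℝ} (hr : r ≤ R) := h.differentiableOn.mono (ball_subset_ball (x := c) hr)
  refine ⟨(h.differentiableOn.fun_comp (by fun_prop) fun z hz =>
    add_mem_ball_of_add_norm_le hz (by linarith)).fun_sub (hsub (by linarith)), fun z hz => ?_,
    by positivity⟩
  simpa only [add_sub_cancel_left] using h.norm_sub_le (ball_subset_ball (by linarith) hz)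
    (add_mem_ball_of_add_norm_le hz (by linarith))

lemma norm_fderiv_add_sub_le (h : IsBoundedHolomorphic H c R M) (hy : y ∈ ball c (R / 8))
    (hk : ‖k‖ < R / 4) :
    ‖fderiv ℂ H (y + k) - fderiv ℂ H y‖ ≤ 64 * M / R ^ 2 * ‖k‖ := by
  have hR := h.radius_pos
  have hle := (h.sub_translate hk).norm_fderiv_le (y := y) (by convert hy using 2; ring)
  have hyR : y ∈ ball c R := ball_subset_ball (by linarith) hy
  have hykR : DifferentiableAt ℂ (fun z => H (z + k)) y :=
    (h.differentiableAt (add_mem_ball_of_add_norm_le hy (by linarith))).fun_comp'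
      (f := fun z => z + k) y (by fun_prop)
  rw [fderiv_fun_sub hykR (h.differentiableAt hyR), fderiv_comp_add_right] at hle
  exact hle.trans_eq (by field)

lemma norm_add_sub_sub_fderiv_le (h : IsBoundedHolomorphic H c R M) (hy : y ∈ ball c (R / 8))
    (hk : ‖k‖ < R / 4) :
    ‖H (y + k) - H y - fderiv ℂ H y k‖ ≤ 64 * M / R ^ 2 * ‖k‖ ^ 2 := by
  have hM := h.bound_nonneg
  have hle := (convex_closedBall y ‖k‖).norm_image_sub_le_of_norm_fderiv_le' (f := H)
    (C := 64 * M / R ^ 2 * ‖k‖) (φ := fderiv ℂ H y) (y := y + k)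
    (fun z hz => h.differentiableAt ?_) (fun z hz => ?_)
    (mem_closedBall_self (norm_nonneg k)) (by simp)
  · rwa [add_sub_cancel_left, mul_assoc, ← sq] at hle
  · rw [mem_ball, mem_closedBall] at *
    linarith [dist_triangle z y c, h.radius_pos]
  · rw [mem_closedBall_iff_norm] at hz
    have hle := h.norm_fderiv_add_sub_le hy (hz.trans_lt hk)
    rw [add_sub_cancel] at hle
    exact hle.trans (by gcongr)

lemma differentiableOn_differenceQuotient (h : IsBoundedHolomorphic H c R M) (hk : ‖k‖ < R / 4)
    (t : ℂ) :
    DifferentiableOn ℂ (fun y => t⁻¹ • (H (y + k) - H y)) (ball c (R / 4)) :=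
  (h.sub_translate hk).differentiableOn.const_smul t⁻¹

lemma norm_differenceQuotient_sub_fderiv_le (h : IsBoundedHolomorphic H c R M)
    (hy : y ∈ ball c (R / 8)) {t : ℂ} (ht : t ≠ 0) (hk : ‖t • k‖ < R / 4) :
    ‖t⁻¹ • (H (y + t • k) - H y) - fderiv ℂ H y k‖ ≤ 64 * M / R ^ 2 * ‖k‖ ^ 2 * ‖t‖ := by
  calc ‖t⁻¹ • (H (y + t • k) - H y) - fderiv ℂ H y k‖
      = ‖t‖⁻¹ * ‖H (y + t • k) - H y - fderiv ℂ H y (t • k)‖ := by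
        rw [← norm_inv, ← norm_smul, smul_sub t⁻¹ (H (y + t • k) - H y), map_smul,
          inv_smul_smul₀ ht]
    _ ≤ ‖t‖⁻¹ * (64 * M / R ^ 2 * ‖t • k‖ ^ 2) := by
        gcongr
        exact h.norm_add_sub_sub_fderiv_le hy hk
    _ = _ := by
        rw [norm_smul]
        field [norm_ne_zero_iff.2 ht]

lemma eventually_norm_smul_lt (h : IsBoundedHolomorphic H c R M) (v : E) :
    ∀ᶠ t : ℂ in 𝓝[≠] 0, ‖t • v‖ < R / 4 := by
  have hlim : Tendsto (fun t : ℂ => ‖t • v‖) (𝓝 0) (𝓝 0) :=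
    Continuous.tendsto' (by fun_prop) 0 0 (by simp)
  exact (hlim.mono_left nhdsWithin_le_nhds).eventually_lt_const (div_pos h.radius_pos four_pos)

lemma tendstoUniformlyOn_differenceQuotient (h : IsBoundedHolomorphic H c R M) (v : E) :
    TendstoUniformlyOn (fun (t : ℂ) y => t⁻¹ • (H (y + t • v) - H y))
      (fun y => fderiv ℂ H y v) (𝓝[≠] 0) (ball c (R / 8)) := by
  have hlim : Tendsto (fun t : ℂ => 64 * M / R ^ 2 * ‖v‖ ^ 2 * ‖t‖) (𝓝[≠] 0) (𝓝 0) :=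
    (Continuous.tendsto' (by fun_prop) 0 0 (by simp)).mono_left nhdsWithin_le_nhds
  rw [Metric.tendstoUniformlyOn_iff]
  intro ε hε
  filter_upwards [h.eventually_norm_smul_lt v, hlim.eventually_lt_const hε, self_mem_nhdsWithin]
    with t hv htε ht y hy
  rw [dist_comm, dist_eq_norm]
  exact (h.norm_differenceQuotient_sub_fderiv_le hy ht hv).trans_lt htε

end IsBoundedHolomorphic

lemma uniformCauchySeqOn_fderiv {ι : Type*} {l : Filter ι} {f : ι → E → Y} (hR : 0 < R)
    (hd : ∀ᶠ i in l, DifferentiableOn ℂ (f i) (ball c R))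
    (hf : UniformCauchySeqOn f l (ball c R)) :
    UniformCauchySeqOn (fun i => fderiv ℂ (f i)) l (ball c (R / 2)) := by
  intro U hU
  obtain ⟨ε, hε, hεU⟩ := mem_uniformity_dist.1 hU
  filter_upwards [hf _ (dist_mem_uniformity (show 0 < ε * R / 8 by positivity)),
    hd.prod_mk hd] with ⟨i, j⟩ hij ⟨hi, hj⟩ y hy
  have hdiff {i : ι} (hi : DifferentiableOn ℂ (f i) (ball c R)) : DifferentiableAt ℂ (f i) y :=
    hi.differentiableAt (isOpen_ball.mem_nhds (ball_subset_ball (half_le_self hR.le) hy))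
  have hbdd : IsBoundedHolomorphic (fun y => f i y - f j y) c R (ε * R / 8) :=
    ⟨hi.fun_sub hj, fun z hz => (dist_eq_norm (f i z) (f j z) ▸ hij z hz).le, hR⟩
  refine hεU ?_
  rw [dist_eq_norm, ← fderiv_fun_sub (hdiff hi) (hdiff hj)]
  refine (hbdd.norm_fderiv_le hy).trans_lt ?_
  rw [div_lt_iff₀ hR]
  linarith [mul_pos hε hR]

variable [CompleteSpace Y]

lemma differentiableOn_of_tendstoUniformlyOn {ι : Type*} {l : Filter ι} [NeBot l]
    {f : ι → E → Y} (hs : IsOpen s) (hd : ∀ᶠ i in l, DifferentiableOn ℂ (f i) s)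
    (hf : TendstoUniformlyOn f H l s) : DifferentiableOn ℂ H s := by
  intro c hc
  obtain ⟨R, hR, hRs⟩ := Metric.isOpen_iff.1 hs c hc
  have hcauchy := uniformCauchySeqOn_fderiv hR (hd.mono fun _ hi => hi.mono hRs)
    (hf.mono hRs).uniformCauchySeqOn
  have hlim (y : E) (hy : y ∈ ball c (R / 2)) :
      ∃ L, Tendsto (fun i => fderiv ℂ (f i) y) l (𝓝 L) :=
    CompleteSpace.complete (hcauchy.cauchy_map hy)
  choose! f' hf' using hlim
  have hball := ball_mem_nhds c (half_pos hR)
  have hlimit : HasFDerivAt H (f' c) c := by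
    refine hasFDerivAt_of_tendstoUniformlyOnFilter (f := f)
      ((hcauchy.tendstoUniformlyOn_of_tendsto hf').tendstoUniformlyOnFilter.mono_right
        (le_principal_iff.2 hball)) ?_ ?_
    · filter_upwards [hd.prod_mk (hs.mem_nhds hc)] with ⟨i, y⟩ ⟨hi, hy⟩
      exact (hi.differentiableAt (hs.mem_nhds hy)).hasFDerivAt
    · filter_upwards [hs.mem_nhds hc] with y hy using hf.tendsto_at hy
  exact hlimit.differentiableAt.differentiableWithinAt

namespace IsBoundedHolomorphic

lemma fderiv_apply (h : IsBoundedHolomorphic H c R M) (v : E) :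
    IsBoundedHolomorphic (fun y => fderiv ℂ H y v) c (R / 8) (4 * M / R * ‖v‖) where
  differentiableOn := by
    refine differentiableOn_of_tendstoUniformlyOn isOpen_ball ?_
      (h.tendstoUniformlyOn_differenceQuotient v)
    filter_upwards [h.eventually_norm_smul_lt v] with t ht
    exact (h.differentiableOn_differenceQuotient ht t).mono
      (ball_subset_ball (by linarith [h.radius_pos]))
  norm_le y hy := (fderiv ℂ H y).le_of_opNorm_le
    (h.norm_fderiv_le (ball_subset_ball (by linarith [h.radius_pos]) hy)) v
  radius_pos := by linarith [h.radius_pos]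

lemma exists_clm_eq_fderiv_fderiv_apply (h : IsBoundedHolomorphic H c R M) :
    ∃ B : E →L[ℂ] E →L[ℂ] Y, ∀ v, B v = fderiv ℂ (fun y => fderiv ℂ H y v) c := by
  have hR8 : 0 < R / 8 := div_pos h.radius_pos (by norm_num)
  have hd (v : E) : DifferentiableAt ℂ (fun y => fderiv ℂ H y v) c :=
    (h.fderiv_apply v).differentiableAt (mem_ball_self hR8)
  let B : E →ₗ[ℂ] E →L[ℂ] Y :=
    { toFun := fun v => fderiv ℂ (fun y => fderiv ℂ H y v) c
      map_add' := fun v w => by simpa only [map_add] using fderiv_fun_add (hd v) (hd w)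
      map_smul' := fun t v => by
        simpa only [map_smul, RingHom.id_apply] using fderiv_fun_const_smul (hd v) t }
  refine ⟨B.mkContinuous (4 * (4 * M / R) / (R / 8)) fun v => ?_, fun v => rfl⟩
  refine ((h.fderiv_apply v).norm_fderiv_le (mem_ball_self (half_pos hR8))).trans_eq ?_
  ring

lemma differentiableAt_fderiv (h : IsBoundedHolomorphic H c R M) :
    DifferentiableAt ℂ (fderiv ℂ H) c := by
  have hR := h.radius_pos
  have hM := h.bound_nonneg
  obtain ⟨B, hB⟩ := h.exists_clm_eq_fderiv_fderiv_apply
  have hO : (fun k => fderiv ℂ H (c + k) - fderiv ℂ H c - B.flip k) =O[𝓝 0] fun k => ‖k‖ ^ 2 := by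
    refine .of_bound (64 * (4 * M / R) / (R / 8) ^ 2) ?_
    filter_upwards [ball_mem_nhds (0 : E) (show 0 < R / 8 / 4 by positivity)] with k hk
    rw [mem_ball_zero_iff] at hk
    refine ContinuousLinearMap.opNorm_le_bound _ (by positivity) fun v => ?_
    have hle := (h.fderiv_apply v).norm_add_sub_sub_fderiv_le (mem_ball_self (by positivity)) hk
    rw [sub_apply, sub_apply, ContinuousLinearMap.flip_apply, hB, norm_pow, norm_norm]
    exact hle.trans_eq (by ring)
  have hderiv : HasFDerivAt (fderiv ℂ H) B.flip c := by
    rw [hasFDerivAt_iff_isLittleO_nhds_zero]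
    exact hO.trans_isLittleO (((Asymptotics.isLittleO_pow_id one_lt_two).comp_tendsto
      tendsto_norm_zero).of_norm_right)
  exact hderiv.differentiableAt

end IsBoundedHolomorphic

lemma differentiableOn_fderiv (hs : IsOpen s) (hH : DifferentiableOn ℂ H s) :
    DifferentiableOn ℂ (fderiv ℂ H) s := by
  intro c hc
  have hbound := (hH.differentiableAt (hs.mem_nhds hc)).continuousAt.norm.eventually_le_const
    (lt_add_one ‖H c‖)
  obtain ⟨R, hR, hball⟩ := Metric.eventually_nhds_iff_ball.1 ((hs.eventually_mem hc).and hbound)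
  have h : IsBoundedHolomorphic H c R (‖H c‖ + 1) :=
    ⟨hH.mono fun y hy => (hball y hy).1, fun y hy => (hball y hy).2, hR⟩
  exact h.differentiableAt_fderiv.differentiableWithinAt

lemma differentiableOn_iteratedFDeriv (hs : IsOpen s) (hH : DifferentiableOn ℂ H s) (n : ℕ) :
    DifferentiableOn ℂ (iteratedFDeriv ℂ n H) s := by
  induction n with
  | zero =>
    rw [iteratedFDeriv_zero_eq_comp]
    exact (LinearIsometryEquiv.comp_differentiableOn_iff _).2 hH
  | succ n ih =>
    have hfderiv := differentiableOn_fderiv hs ih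
    rw [iteratedFDeriv_succ_eq_comp_left]
    exact (LinearIsometryEquiv.differentiable _).comp_differentiableOn hfderiv

theorem contDiffOn_of_differentiableOn_isOpen (hs : IsOpen s) (hH : DifferentiableOn ℂ H s)
    (n : ℕ∞) : ContDiffOn ℂ n H s :=
  contDiffOn_of_differentiableOn fun m _ =>
    (differentiableOn_iteratedFDeriv hs hH m).congr (iteratedFDerivWithin_of_isOpen m hs)

end NormedSpaceHolomorphy

section IteratedDerivativesAlongLines

lemma iteratedFDeriv_smul_apply_const {𝕜 E Y : Type*} [NontriviallyNormedField 𝕜]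
    [NormedAddCommGroup E] [NormedSpace 𝕜 E] [NormedAddCommGroup Y] [NormedSpace 𝕜 Y] {H : E → Y}
    {s : Set E} {n : ℕ} {t : 𝕜} {v : E} (hs : IsOpen s) (hH : ContDiffOn 𝕜 n H s)
    (ht : t • v ∈ s) :
    iteratedFDeriv 𝕜 n H (t • v) (fun _ => v) = iteratedDeriv n (fun τ : 𝕜 => H (τ • v)) t := by
  let L := ContinuousLinearMap.toSpanSingleton 𝕜 v
  have hL : IsOpen (L ⁻¹' s) := hs.preimage L.continuous
  have hcomp := L.iteratedFDerivWithin_comp_right (x := t) hH hs.uniqueDiffOn hL.uniqueDiffOn ht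
    le_rfl
  rw [iteratedFDerivWithin_of_isOpen n hL ht,
    iteratedFDerivWithin_of_isOpen n hs (show L t ∈ s from ht)] at hcomp
  have happly := congrArg (fun T => T fun _ => (1 : 𝕜)) hcomp
  simpa [L, iteratedDeriv_eq_iteratedFDeriv, Function.comp_def] using happly.symm

end IteratedDerivativesAlongLines

section BohrRogosinskiSums

lemma hasSum_add_mul_pow_add {𝕜 : Type*} [NontriviallyNormedField 𝕜] [CompleteSpace 𝕜] {r : 𝕜}
    (hr : ‖r‖ < 1) (N : ℕ) :
    HasSum (fun s : ℕ => ((N + s : ℕ) : 𝕜) * r ^ (N + s))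
      (r ^ N * (N * (1 - r) + r) / (1 - r) ^ 2) := by
  have h1 : 1 - r ≠ 0 := sub_ne_zero.2 fun h => by simp [← h] at hr
  have hsum := (((hasSum_geometric_of_norm_lt_one hr).mul_left (N : 𝕜)).add
    (hasSum_coe_mul_geometric_of_norm_lt_one hr)).mul_left (r ^ N)
  have hvalue : r ^ N * (N * (1 - r) + r) / (1 - r) ^ 2
      = r ^ N * (N * (1 - r)⁻¹ + r / (1 - r) ^ 2) := by field
  rw [hvalue]
  refine hsum.congr_fun fun s => ?_
  push_cast
  ring

variable {ψ : ℂ → ℂ} {A : ℝ} {z : ℂ}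

lemma norm_taylorCoeff_mul_pow_le (hψ : ∀ n, ‖taylorCoeff ψ n‖ ≤ n * A) (z : ℂ) (n : ℕ) :
    ‖taylorCoeff ψ n * z ^ n‖ ≤ A * (n * ‖z‖ ^ n) := by
  rw [norm_mul, norm_pow]
  exact (mul_le_mul_of_nonneg_right (hψ n) (by positivity)).trans_eq (by ring)

lemma summable_norm_taylorCoeff_mul_pow (hψ : ∀ n, ‖taylorCoeff ψ n‖ ≤ n * A) (hz : ‖z‖ < 1)
    (N : ℕ) : Summable fun s => ‖taylorCoeff ψ (N + s) * z ^ (N + s)‖ :=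
  .of_nonneg_of_le (fun _ => norm_nonneg _) (fun s => norm_taylorCoeff_mul_pow_le hψ z (N + s))
    ((hasSum_add_mul_pow_add (by rwa [norm_norm]) N).mul_left A).summable

lemma tsum_norm_taylorCoeff_mul_pow_le (hψ : ∀ n, ‖taylorCoeff ψ n‖ ≤ n * A) (hz : ‖z‖ < 1)
    (N : ℕ) :
    ∑' s, ‖taylorCoeff ψ (N + s) * z ^ (N + s)‖
      ≤ A * (‖z‖ ^ N * (N * (1 - ‖z‖) + ‖z‖) / (1 - ‖z‖) ^ 2) :=
  hasSum_le (fun s => norm_taylorCoeff_mul_pow_le hψ z (N + s))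
    (summable_norm_taylorCoeff_mul_pow hψ hz N).hasSum
    ((hasSum_add_mul_pow_add (by rwa [norm_norm]) N).mul_left A)

lemma norm_le_of_norm_taylorCoeff_le (hd : DifferentiableOn ℂ ψ (ball 0 1))
    (hψ : ∀ n, ‖taylorCoeff ψ n‖ ≤ n * A) (hz : ‖z‖ < 1) :
    ‖ψ z‖ ≤ A * (‖z‖ / (1 - ‖z‖) ^ 2) := by
  rw [← (hasSum_taylorCoeff hd hz).tsum_eq]
  exact tsum_of_norm_bounded
    ((hasSum_coe_mul_geometric_of_norm_lt_one (by rwa [norm_norm])).mul_left A)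
    (norm_taylorCoeff_mul_pow_le hψ z)

theorem norm_add_tsum_norm_taylorCoeff_le (hd : DifferentiableOn ℂ ψ (ball 0 1))
    (hψ : ∀ n, ‖taylorCoeff ψ n‖ ≤ n * A) (hA : 0 ≤ A) (hz : ‖z‖ < 1) {N : ℕ}
    (hN : 4 * ‖z‖ + 4 * ‖z‖ ^ N * (N * (1 - ‖z‖) + ‖z‖) ≤ (1 - ‖z‖) ^ 2) :
    ‖ψ z‖ + ∑' s, ‖taylorCoeff ψ (N + s) * z ^ (N + s)‖ ≤ A / 4 := by
  have hpos : 0 < (1 - ‖z‖) ^ 2 := pow_pos (sub_pos.2 hz) 2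
  calc ‖ψ z‖ + ∑' s, ‖taylorCoeff ψ (N + s) * z ^ (N + s)‖
      ≤ A * (‖z‖ / (1 - ‖z‖) ^ 2) + A * (‖z‖ ^ N * (N * (1 - ‖z‖) + ‖z‖) / (1 - ‖z‖) ^ 2) :=
        add_le_add (norm_le_of_norm_taylorCoeff_le hd hψ hz)
          (tsum_norm_taylorCoeff_mul_pow_le hψ hz N)
    _ = A * ((4 * ‖z‖ + 4 * ‖z‖ ^ N * (N * (1 - ‖z‖) + ‖z‖)) / (1 - ‖z‖) ^ 2) / 4 := by ring
    _ ≤ A * 1 / 4 := by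
        gcongr
        exact (div_le_one hpos).2 hN
    _ = A / 4 := by rw [mul_one]

end BohrRogosinskiSums

section DistanceToFrontier

lemma le_infDist_frontier_of_ball_subset {α : Type*} [PseudoMetricSpace α] {s : Set α} {x : α}
    {δ : ℝ} (hs : (frontier s).Nonempty) (hball : ball x δ ⊆ s) :
    δ ≤ infDist x (frontier s) := by
  refine (le_infDist hs).2 fun y hy => ?_
  by_contra! hlt
  exact hy.2 (interior_maximal hball isOpen_ball (mem_ball'.2 hlt))

lemma _root_.IsBiholoOn.image_ne_univ {E₁ E₂ : Type*} [NormedAddCommGroup E₁] [NormedSpace ℂ E₁]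
    [NormedAddCommGroup E₂] [NormedSpace ℂ E₂] {F : E₁ → E₂} {s : Set E₁} (hF : IsBiholoOn F s)
    (hs : Bornology.IsBounded s) (hnt : s.Nontrivial) : F '' s ≠ univ := by
  obtain ⟨-, -, Fi, hFid, hFi⟩ := hF
  obtain ⟨x, hx, y, hy, hxy⟩ := hnt
  intro himage
  have hrange : range Fi ⊆ s := by
    rw [← image_univ, ← himage, image_image]
    rintro _ ⟨w, hw, rfl⟩
    simpa only [hFi w hw] using hw
  rw [himage, differentiableOn_univ] at hFid
  apply hxy
  rw [← hFi x hx, ← hFi y hy]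
  exact hFid.apply_eq_apply_of_bounded (hs.subset hrange) _ _

end DistanceToFrontier

section Slices

variable {X : Type*} [NormedAddCommGroup X] [NormedSpace ℂ X] {a u x : X} {f g : X → ℂ}
  {F G : X → X} {n : ℕ} {z : ℂ}

lemma exists_norm_eq_one_smul_eq (hx : x ≠ 0) : ∃ u : X, ‖u‖ = 1 ∧ (‖x‖ : ℂ) • u = x :=
  ⟨_, norm_smul_inv_norm hx, smul_inv_smul₀ (by simpa using hx) x⟩

lemma exists_dual_norm_eq_one_apply_eq_one (hu : ‖u‖ = 1) :
    ∃ ℓ : X →L[ℂ] ℂ, ‖ℓ‖ = 1 ∧ ℓ u = 1 := by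
  simpa [hu] using exists_dual_vector ℂ u (by simp [hu])

lemma eq_apply_smul_of_smul_eq {ℓ : X →L[ℂ] ℂ} (hℓ : ℓ u = 1) {b c : ℂ} (hb : b ≠ 0)
    (h : b • x = c • u) : x = ℓ x • u := by
  have hx : x = (b⁻¹ * c) • u := by rw [mul_smul, ← h, inv_smul_smul₀ hb]
  rw [hx, map_smul, hℓ, smul_eq_mul, mul_one]

/-- The slice `z ↦ z f(zu)` of the map `x ↦ f(x) x` in the direction `u`: if `F x = a + f(x) x`,
then `F (z u) = a + slice f u z • u`, so `F` acts on the disk spanned by `u` as a function of one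
variable. -/
def slice (f : X → ℂ) (u : X) (z : ℂ) : ℂ := z * f (z • u)

lemma slice_zero : slice f u 0 = 0 := zero_mul _

lemma slice_smul : slice f u z • u = f (z • u) • z • u := by
  rw [slice, mul_comm, mul_smul]

lemma mapsTo_smul_ball (hu : ‖u‖ = 1) : MapsTo (fun z : ℂ => z • u) (ball 0 1) (ball 0 1) :=
  fun z hz => by simpa [norm_smul, hu] using hz

lemma eq_add_slice_smul (hF : ∀ x ∈ ball (0 : X) 1, F x = a + f x • x) (hu : ‖u‖ = 1)
    (hz : z ∈ ball (0 : ℂ) 1) : F (z • u) = a + slice f u z • u := by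
  rw [hF _ (mapsTo_smul_ball hu hz), slice_smul]

lemma differentiableOn_comp_smul {Y : Type*} [NormedAddCommGroup Y] [NormedSpace ℂ Y] {H : X → Y}
    (hH : DifferentiableOn ℂ H (ball 0 1)) (hu : ‖u‖ = 1) :
    DifferentiableOn ℂ (fun z : ℂ => H (z • u)) (ball 0 1) :=
  hH.fun_comp (by fun_prop) (mapsTo_smul_ball hu)

lemma differentiableOn_slice (hf : DifferentiableOn ℂ f (ball 0 1)) (hu : ‖u‖ = 1) :
    DifferentiableOn ℂ (slice f u) (ball 0 1) :=
  differentiableOn_id.fun_mul (differentiableOn_comp_smul hf hu)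

lemma deriv_slice_zero (hf : DifferentiableOn ℂ f (ball 0 1)) (hu : ‖u‖ = 1) :
    deriv (slice f u) 0 = f 0 := by
  have hd : DifferentiableAt ℂ (fun z : ℂ => f (z • u)) 0 :=
    (differentiableOn_comp_smul hf hu).differentiableAt (ball_mem_nhds 0 one_pos)
  have hderiv : HasDerivAt (slice f u) _ 0 := (hasDerivAt_id (0 : ℂ)).fun_mul hd.hasDerivAt
  simpa using hderiv.deriv

lemma isBiholoOn_slice (hf : DifferentiableOn ℂ f (ball 0 1))
    (hF : ∀ x ∈ ball (0 : X) 1, F x = a + f x • x) (hbi : IsBiholoOn F (ball 0 1))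
    (hu : ‖u‖ = 1) : IsBiholoOn (slice f u) (ball 0 1) := by
  obtain ⟨ℓ, -, hℓ⟩ := exists_dual_norm_eq_one_apply_eq_one hu
  obtain ⟨-, -, Fi, hFid, hFi⟩ := hbi
  refine .of_leftInverse (g := fun ζ => ℓ (Fi (a + ζ • u))) (differentiableOn_slice hf hu) ?_ ?_
  · refine ℓ.differentiable.comp_differentiableOn (hFid.fun_comp (by fun_prop) ?_)
    rintro _ ⟨z, hz, rfl⟩
    exact ⟨z • u, mapsTo_smul_ball hu hz, eq_add_slice_smul hF hu hz⟩
  · intro z hz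
    rw [← eq_add_slice_smul hF hu hz, hFi _ (mapsTo_smul_ball hu hz), map_smul, hℓ, smul_eq_mul,
      mul_one]

lemma apply_ne_zero_of_injOn (hF : ∀ x ∈ ball (0 : X) 1, F x = a + f x • x)
    (hinj : InjOn F (ball 0 1)) (hx : x ∈ ball (0 : X) 1) (hx0 : x ≠ 0) : f x ≠ 0 := fun hfx =>
  have h0 := mem_ball_self (x := (0 : X)) one_pos
  hx0 (hinj hx h0 (by rw [hF x hx, hF 0 h0, hfx, zero_smul, smul_zero]))

lemma exists_isSchwarz_slice_eq_comp (hF : ∀ x ∈ ball (0 : X) 1, F x = a + f x • x)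
    (hG : ∀ x ∈ ball (0 : X) 1, G x = a + g x • x) (hinj : InjOn F (ball 0 1))
    (hsub : Subordinate G F) (hu : ‖u‖ = 1) :
    ∃ ω, IsSchwarz ω ∧ ∀ z ∈ ball (0 : ℂ) 1, slice g u z = slice f u (ω z) := by
  obtain ⟨ℓ, hℓ1, hℓ⟩ := exists_dual_norm_eq_one_apply_eq_one hu
  obtain ⟨W, hWd, hWm, hW0, hGW⟩ := hsub
  have hω : IsSchwarz fun z => ℓ (W (z • u)) :=
    { differentiableOn := ℓ.differentiable.comp_differentiableOn (differentiableOn_comp_smul hWd hu)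
      mapsTo := fun z hz => by
        have hW := mem_ball_zero_iff.1 (hWm (mapsTo_smul_ball hu hz))
        exact mem_ball_zero_iff.2 ((ℓ.le_opNorm _).trans_lt (by rwa [hℓ1, one_mul]))
      map_zero := by rw [zero_smul, hW0, map_zero] }
  refine ⟨_, hω, fun z hz => ?_⟩
  have hWz := hWm (mapsTo_smul_ball hu hz)
  have heq : f (W (z • u)) • W (z • u) = slice g u z • u := by
    have h := hGW _ (mapsTo_smul_ball hu hz)
    rw [eq_add_slice_smul hG hu hz, hF _ hWz, add_right_inj] at h
    exact h.symm
  have hline : W (z • u) = ℓ (W (z • u)) • u := by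
    by_cases hW : W (z • u) = 0
    · rw [hW, map_zero, zero_smul]
    · exact eq_apply_smul_of_smul_eq hℓ (apply_ne_zero_of_injOn hF hinj hWz hW) heq
  have hu0 : u ≠ 0 := norm_ne_zero_iff.1 (hu ▸ one_ne_zero)
  apply smul_left_injective ℂ hu0
  simp only
  rw [slice_smul (f := f), ← hline, heq]

lemma norm_taylorCoeff_slice_le (hf : DifferentiableOn ℂ f (ball 0 1))
    (hF : ∀ x ∈ ball (0 : X) 1, F x = a + f x • x) (hG : ∀ x ∈ ball (0 : X) 1, G x = a + g x • x)
    (hbi : IsBiholoOn F (ball 0 1)) (hsub : Subordinate G F) (hu : ‖u‖ = 1) (n : ℕ) :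
    ‖taylorCoeff (slice g u) n‖ ≤ n * ‖f 0‖ := by
  obtain ⟨ω, hω, hgω⟩ := exists_isSchwarz_slice_eq_comp hF hG hbi.2.1 hsub hu
  cases n with
  | zero => simp [taylorCoeff_zero, slice_zero]
  | succ n =>
    rw [taylorCoeff_congr (eventually_of_mem (ball_mem_nhds 0 one_pos) hgω),
      ← deriv_slice_zero hf hu, Nat.cast_succ]
    exact (isBiholoOn_slice hf hF hbi hu).norm_taylorCoeff_comp_le slice_zero hω n

lemma add_smul_mem_image (hf : DifferentiableOn ℂ f (ball 0 1))
    (hF : ∀ x ∈ ball (0 : X) 1, F x = a + f x • x) (hbi : IsBiholoOn F (ball 0 1)) (hu : ‖u‖ = 1)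
    (hz : ‖z‖ < ‖f 0‖ / 4) : a + z • u ∈ F '' ball 0 1 := by
  by_contra hnot
  have homit : z ∉ slice f u '' ball 0 1 := by
    rintro ⟨ζ, hζ, rfl⟩
    exact hnot ⟨ζ • u, mapsTo_smul_ball hu hζ, eq_add_slice_smul hF hu hζ⟩
  have hle := (isBiholoOn_slice hf hF hbi hu).norm_deriv_le_four_mul_norm slice_zero homit
  rw [deriv_slice_zero hf hu] at hle
  linarith

lemma ball_subset_image (hf : DifferentiableOn ℂ f (ball 0 1))
    (hF : ∀ x ∈ ball (0 : X) 1, F x = a + f x • x) (hbi : IsBiholoOn F (ball 0 1)) :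
    ball (F 0) (‖f 0‖ / 4) ⊆ F '' ball 0 1 := by
  have hF0 : F 0 = a := by simp [hF 0]
  intro y hy
  rw [hF0, mem_ball_iff_norm] at hy
  rcases eq_or_ne y a with rfl | hya
  · exact ⟨0, mem_ball_self one_pos, hF0⟩
  · obtain ⟨u, hu, hyu⟩ := exists_norm_eq_one_smul_eq (sub_ne_zero.2 hya)
    have hmem := add_smul_mem_image hf hF hbi hu (z := ‖y - a‖) (by simpa using hy)
    rwa [hyu, add_sub_cancel] at hmem

theorem div_four_le_infDist_frontier_image [Nontrivial X] (hf : DifferentiableOn ℂ f (ball 0 1))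
    (hF : ∀ x ∈ ball (0 : X) 1, F x = a + f x • x) (hbi : IsBiholoOn F (ball 0 1)) :
    ‖f 0‖ / 4 ≤ infDist (F 0) (frontier (F '' ball 0 1)) := by
  have := Module.punctured_nhds_neBot ℂ X 0
  have hball : (ball (0 : X) 1).Nontrivial :=
    (infinite_of_mem_nhds 0 (ball_mem_nhds 0 one_pos)).nontrivial
  refine le_infDist_frontier_of_ball_subset ?_ (ball_subset_image hf hF hbi)
  exact nonempty_frontier_iff.2
    ⟨hball.nonempty.image F, hbi.image_ne_univ isBounded_ball hball⟩

lemma iteratedFDeriv_eq_iteratedDeriv_slice_smul (hg : DifferentiableOn ℂ g (ball 0 1))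
    (hG : ∀ x ∈ ball (0 : X) 1, G x = a + g x • x) (hu : ‖u‖ = 1) (hn : 0 < n) :
    iteratedFDeriv ℂ n G 0 (fun _ => u) = iteratedDeriv n (slice g u) 0 • u := by
  have hGc : ContDiffOn ℂ n G (ball 0 1) :=
    (contDiffOn_const.add ((contDiffOn_of_differentiableOn_isOpen isOpen_ball hg n).smul
      contDiffOn_id)).congr hG
  have hslice : ContDiffAt ℂ n (slice g u) 0 :=
    (analyticAt_zero_of_differentiableOn_ball (differentiableOn_slice hg hu)).contDiffAt
  have hline : (fun z : ℂ => G (z • u)) =ᶠ[𝓝 0] fun z => a + slice g u z • u :=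
    eventually_of_mem (ball_mem_nhds 0 one_pos) fun z hz => eq_add_slice_smul hG hu hz
  have hfd := iteratedFDeriv_smul_apply_const (t := (0 : ℂ)) (v := u) isOpen_ball hGc (by simp)
  rw [zero_smul] at hfd
  rw [hfd, hline.iteratedDeriv_eq, iteratedDeriv_const_add hn, iteratedDeriv_smul_const hslice]

lemma inv_factorial_smul_iteratedFDeriv_smul (hg : DifferentiableOn ℂ g (ball 0 1))
    (hG : ∀ x ∈ ball (0 : X) 1, G x = a + g x • x) (hu : ‖u‖ = 1) (hn : 0 < n) (z : ℂ) :
    (n.factorial : ℂ)⁻¹ • iteratedFDeriv ℂ n G 0 (fun _ => z • u)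
      = (taylorCoeff (slice g u) n * z ^ n) • u := by
  rw [(iteratedFDeriv ℂ n G 0).map_smul_univ (fun _ => z) (fun _ => u), Finset.prod_const,
    Finset.card_univ, Fintype.card_fin, iteratedFDeriv_eq_iteratedDeriv_slice_smul hg hG hu hn,
    smul_smul, smul_smul, taylorCoeff]
  congr 1
  ring

end Slices

end BohrRogosinski

open BohrRogosinski in
theorem stmt13_general {X : Type*} [NormedAddCommGroup X] [NormedSpace ℂ X]
    (a : X) (f g : X → ℂ)
    (hf : DifferentiableOn ℂ f (ball (0 : X) 1))
    (hg : DifferentiableOn ℂ g (ball (0 : X) 1))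
    (F G : X → X)
    (hF : ∀ x ∈ ball (0 : X) 1, F x = a + f x • x)
    (hG : ∀ x ∈ ball (0 : X) 1, G x = a + g x • x)
    (hbi : IsBiholoOn F (ball (0 : X) 1))
    (hsub : Subordinate G F)
    (N : ℕ) (hN : 1 ≤ N)
    (r : ℝ) (hr : r ∈ Set.Ioo (0 : ℝ) 1)
    (hineq : 4 * r + 4 * r ^ N * ((N : ℝ) * (1 - r) + r) ≤ (1 - r) ^ 2)
    (x : X) (hx : ‖x‖ = r) :
    Summable (fun s : ℕ =>
        ‖(((N + s).factorial : ℂ))⁻¹ • iteratedFDeriv ℂ (N + s) G 0 (fun _ => x)‖) ∧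
    ‖G x‖ +
        ∑' s : ℕ, ‖(((N + s).factorial : ℂ))⁻¹ • iteratedFDeriv ℂ (N + s) G 0 (fun _ => x)‖
      ≤ ‖F 0‖ + infDist (F 0) (frontier (F '' ball (0 : X) 1)) := by
  have hx0 : x ≠ 0 := norm_pos_iff.1 (hx ▸ hr.1)
  have : Nontrivial X := ⟨x, 0, hx0⟩
  obtain ⟨u, hu, hxu⟩ := exists_norm_eq_one_smul_eq hx0
  have hz : ‖(‖x‖ : ℂ)‖ = r := by rw [Complex.norm_real, norm_norm, hx]
  have hz1 : ‖(‖x‖ : ℂ)‖ < 1 := hz ▸ hr.2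
  have hcoeff := norm_taylorCoeff_slice_le hf hF hG hbi hsub hu
  have hterm (s : ℕ) : ‖((N + s).factorial : ℂ)⁻¹ • iteratedFDeriv ℂ (N + s) G 0 (fun _ => x)‖
      = ‖taylorCoeff (slice g u) (N + s) * (‖x‖ : ℂ) ^ (N + s)‖ := by
    have h := inv_factorial_smul_iteratedFDeriv_smul hg hG hu (Nat.add_pos_left hN s) (‖x‖ : ℂ)
    rw [hxu] at h
    rw [h, norm_smul, hu, mul_one]
  simp only [hterm]
  refine ⟨summable_norm_taylorCoeff_mul_pow hcoeff hz1 N, ?_⟩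
  have hGx : ‖G x‖ ≤ ‖F 0‖ + ‖slice g u ‖x‖‖ := by
    have hF0 : F 0 = a := by simp [hF 0]
    have h := eq_add_slice_smul hG hu (mem_ball_zero_iff.2 hz1)
    rw [hxu] at h
    rw [h, hF0]
    exact (norm_add_le _ _).trans_eq (by rw [norm_smul, hu, mul_one])
  have hsum := norm_add_tsum_norm_taylorCoeff_le (differentiableOn_slice hg hu) hcoeff
    (norm_nonneg _) hz1 (by rwa [hz])
  linarith [div_four_le_infDist_frontier_image hf hF hbi]

/-- **Bohr–Rogosinski inequality (case `V = id`).** Let `F(x) = a + f(x)·x` be biholomorphic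
on the unit ball `𝔹` of a complex Banach space and let `G(x) = a + g(x)·x` be subordinate
to `F`. Let `N ≥ 1` and `P_s(x) = (1/s!)·DˢG(0)(x,…,x)`. If `r ∈ (0,1)` satisfies
`4r + 4r^N(N(1−r)+r) ≤ (1−r)²`, then for every `x` with `‖x‖ = r`,
`‖G(x)‖ + Σ_{s≥N} ‖P_s(x)‖ ≤ ‖F(0)‖ + dist(F(0), ∂F(𝔹))`. -/
theorem stmt13 {X : Type*} [NormedAddCommGroup X] [NormedSpace ℂ X] [CompleteSpace X]
    (a : X) (f g : X → ℂ)
    (hf : DifferentiableOn ℂ f (ball (0 : X) 1))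
    (hg : DifferentiableOn ℂ g (ball (0 : X) 1))
    (F G : X → X)
    (hF : ∀ x ∈ ball (0 : X) 1, F x = a + f x • x)
    (hG : ∀ x ∈ ball (0 : X) 1, G x = a + g x • x)
    (hbi : IsBiholoOn F (ball (0 : X) 1))
    (hsub : Subordinate G F)
    (N : ℕ) (hN : 1 ≤ N)
    (r : ℝ) (hr : r ∈ Set.Ioo (0 : ℝ) 1)
    (hineq : 4 * r + 4 * r ^ N * ((N : ℝ) * (1 - r) + r) ≤ (1 - r) ^ 2)
    (x : X) (hx : ‖x‖ = r) :
    Summable (fun s : ℕ =>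
        ‖(((N + s).factorial : ℂ))⁻¹ • iteratedFDeriv ℂ (N + s) G 0 (fun _ => x)‖) ∧
    ‖G x‖ +
        ∑' s : ℕ, ‖(((N + s).factorial : ℂ))⁻¹ • iteratedFDeriv ℂ (N + s) G 0 (fun _ => x)‖
      ≤ ‖F 0‖ + infDist (F 0) (frontier (F '' ball (0 : X) 1)) :=
  stmt13_general a f g hf hg F G hF hG hbi hsub N hN r hr hineq x hx
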